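/- arXiv:2308.16728 — 3 statements merged into one kernel-verified Lean document; each statement's English description precedes it below -/
import Mathlib

section
/- There exist constants c > 0, C > 0 and an integer r₀ such that for all integers r ≥ r₀ one has c · r^{3/5} ≤ f(r, θ_{3,4}) ≤ C · r^{3/5}. -/
open SimpleGraph

/-- `G` is an `(r,k)`-graph: its vertex set can be partitioned into `r` parts,
each of size at most `k`, with at least one edge between any two distinct parts. -/
def IsRKGraph {V : Type} [Fintype V] (G : SimpleGraph V) (r k : ℕ) : Prop :=
  ∃ P : Fin r → Finset V,
    (∀ v : V, ∃! i, v ∈ P i) ∧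
    (∀ i, (P i).card ≤ k) ∧
    ∀ i j : Fin r, i ≠ j → ∃ u ∈ P i, ∃ w ∈ P j, G.Adj u w

/-- `G` contains a subgraph isomorphic to `H`. -/
def ContainsSub {W V : Type} (H : SimpleGraph W) (G : SimpleGraph V) : Prop :=
  ∃ f : H →g G, Function.Injective f

/-- `f(r,H)`: the minimum `k` for which there exists an `H`-free `(r,k)`-graph. -/
noncomputable def fGraph {W : Type} (H : SimpleGraph W) (r : ℕ) : ℕ :=
  sInf {k | ∃ (n : ℕ) (G : SimpleGraph (Fin n)), ¬ ContainsSub H G ∧ IsRKGraph G r k}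

/-- The theta graph `θ_{3,4}`: three internally disjoint paths of length 4 sharing
their two endpoints.  The endpoints are `Sum.inl 0` and `Sum.inl 1`; path `i` has internal
vertices `(i,0), (i,1), (i,2)`. -/
def theta34 : SimpleGraph ((Fin 2) ⊕ (Fin 3 × Fin 3)) :=
  SimpleGraph.fromRel (fun a b =>
    (∃ i : Fin 3, a = Sum.inl 0 ∧ b = Sum.inr (i, 0)) ∨
    (∃ i : Fin 3, a = Sum.inl 1 ∧ b = Sum.inr (i, 2)) ∨
    (∃ (i : Fin 3) (j : Fin 3) (hj : (j : ℕ) + 1 < 3),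
      a = Sum.inr (i, j) ∧ b = Sum.inr (i, ⟨(j : ℕ) + 1, hj⟩)))


namespace ThetaAux

/-! ### Upper bound: algebraic construction -/

section field
variable {F : Type} [Field F]

/-- solutions: paths of length four in terms of first coordinates -/
def Sol (x z D2 D3 D4 m y w : F) : Prop :=
  m ≠ x ∧ m ≠ z ∧ y ≠ w ∧ (x - m) * y + (m - z) * w = D2 ∧
  (x ^ 2 - m ^ 2) * y + (m ^ 2 - z ^ 2) * w = D3 ∧
  (x - m) * y ^ 2 + (m - z) * w ^ 2 = D4

theorem sol_key {x z D2 D3 D4 m y w : F} (h : Sol x z D2 D3 D4 m y w) :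
    (x - m) * (m - z) * (y - w) = D3 - D2 * (x + z) ∧
    (x - m) * (m - z) * (y - w) ^ 2 = (x - z) * D4 - D2 ^ 2 := by
  obtain ⟨-, -, -, rfl, rfl, rfl⟩ := h
  constructor <;> ring

theorem sol_diag (h2 : (2 : F) ≠ 0) {x D2 D3 D4 m y w m' y' w' : F}
    (h : Sol x x D2 D3 D4 m y w) (h' : Sol x x D2 D3 D4 m' y' w') :
    m = m' ∧ y = y' ∧ w = w' := by
  obtain ⟨h1, -, h3, e2, e3, e4⟩ := h
  obtain ⟨h1', -, h3', e2', e3', e4'⟩ := h'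
  have hD : D2 ≠ 0 := by
    rw [← e2, show (x - m) * y + (m - x) * w = (x - m) * (y - w) by ring]
    exact mul_ne_zero (sub_ne_zero.2 (Ne.symm h1)) (sub_ne_zero.2 h3)
  have a : D2 * (x + m) = D3 := by rw [← e2, ← e3]; ring
  have a' : D2 * (x + m') = D3 := by rw [← e2', ← e3']; ring
  have hm : m = m' := by
    have := mul_left_cancel₀ hD (a.trans a'.symm)
    exact add_left_cancel this
  subst hm
  have hx : x - m ≠ 0 := sub_ne_zero.2 (Ne.symm h1)
  have b : D2 * (y + w) = D4 := by rw [← e2, ← e4]; ring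
  have b' : D2 * (y' + w') = D4 := by rw [← e2', ← e4']; ring
  have hs : y + w = y' + w' := mul_left_cancel₀ hD (b.trans b'.symm)
  have hw : y - w = y' - w' := by
    apply mul_left_cancel₀ hx
    linear_combination e2 - e2'
  have hy : y = y' := by
    apply mul_left_cancel₀ h2
    linear_combination hs + hw
  exact ⟨rfl, hy, by rw [hy] at hs; exact add_left_cancel hs⟩

theorem sol_same (h2 : (2 : F) ≠ 0) {x z D2 D3 D4 m y w y' w' : F}
    (h : Sol x z D2 D3 D4 m y w) (h' : Sol x z D2 D3 D4 m y' w') :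
    y = y' ∧ w = w' := by
  by_cases hd : x = z
  · subst hd
    exact (sol_diag h2 h h').2
  have k := (sol_key h).1
  have k' := (sol_key h').1
  obtain ⟨h1, h1z, h3, e2, e3, e4⟩ := h
  obtain ⟨-, -, h3', e2', e3', e4'⟩ := h'
  have hx : x - m ≠ 0 := sub_ne_zero.2 (Ne.symm h1)
  have hz : m - z ≠ 0 := sub_ne_zero.2 h1z
  have hw : y - w = y' - w' := mul_left_cancel₀ (mul_ne_zero hx hz) (k.trans k'.symm)
  have hxz : x - z ≠ 0 := sub_ne_zero.2 hd
  have hy : y = y' := by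
    apply mul_left_cancel₀ hxz
    linear_combination e2 - e2' + (m - z) * hw
  exact ⟨hy, by rw [hy] at hw; exact sub_right_injective hw⟩

theorem sol_prod {x z D2 D3 D4 m y w m' y' w' : F} 
    (h : Sol x z D2 D3 D4 m y w) (h' : Sol x z D2 D3 D4 m' y' w') (hne : m ≠ m') :
    m + m' = x + z := by
  obtain ⟨k1, k2⟩ := sol_key h
  obtain ⟨k1', k2'⟩ := sol_key h'
  obtain ⟨h1, h1z, h3, -⟩ := h
  obtain ⟨h1', h1z', h3', -⟩ := h'
  have hx : x - m ≠ 0 := sub_ne_zero.2 (Ne.symm h1)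
  have hz : m - z ≠ 0 := sub_ne_zero.2 h1z
  have hw0 : y - w ≠ 0 := sub_ne_zero.2 h3
  have hP : (x - m) * (m - z) * (y - w) ≠ 0 := mul_ne_zero (mul_ne_zero hx hz) hw0
  have hw : y - w = y' - w' := by
    apply mul_left_cancel₀ hP
    linear_combination k2 - k2' - (y' - w') * (k1 - k1')
  have hst : (x - m) * (m - z) = (x - m') * (m' - z) := by
    apply mul_right_cancel₀ hw0
    rw [k1, ← k1', hw]
  have : (m - m') * (x + z - m - m') = 0 := by linear_combination hst
  rcases mul_eq_zero.1 this with h | h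
  · exact absurd (sub_eq_zero.1 h) hne
  · linear_combination -h

theorem sol_three (h2 : (2 : F) ≠ 0) {x z D2 D3 D4 : F} (m y w : Fin 3 → F)
    (h : ∀ i, Sol x z D2 D3 D4 (m i) (y i) (w i)) : ∃ i j, i ≠ j ∧ m i = m j := by
  by_contra hc
  push Not at hc
  by_cases hd : x = z
  · subst hd
    exact hc 0 1 (by decide) (sol_diag h2 (h 0) (h 1)).1
  have a := sol_prod (h 0) (h 1) (hc 0 1 (by decide))
  have b := sol_prod (h 0) (h 2) (hc 0 2 (by decide))
  exact hc 1 2 (by decide) (add_left_cancel (a.trans b.symm))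

/-- incidence relation -/
def Rel (a b : F × F × F × F) : Prop :=
  a.2.1 + b.2.1 = a.1 * b.1 ∧ a.2.2.1 + b.2.2.1 = a.1 ^ 2 * b.1 ∧
  a.2.2.2 + b.2.2.2 = a.1 * b.1 ^ 2

theorem rel_left {a a' b : F × F × F × F} (h : Rel a b) (h' : Rel a' b) (e : a.1 = a'.1) :
    a = a' := by
  obtain ⟨h1, h2, h3⟩ := h
  obtain ⟨h1', h2', h3'⟩ := h'
  rw [e] at h1 h2 h3
  exact Prod.ext e (Prod.ext (add_right_cancel (h1.trans h1'.symm))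
    (Prod.ext (add_right_cancel (h2.trans h2'.symm)) (add_right_cancel (h3.trans h3'.symm))))

theorem rel_right {a b b' : F × F × F × F} (h : Rel a b) (h' : Rel a b') (e : b.1 = b'.1) :
    b = b' := by
  obtain ⟨h1, h2, h3⟩ := h
  obtain ⟨h1', h2', h3'⟩ := h'
  rw [e] at h1 h2 h3
  exact Prod.ext e (Prod.ext (add_left_cancel (h1.trans h1'.symm))
    (Prod.ext (add_left_cancel (h2.trans h2'.symm)) (add_left_cancel (h3.trans h3'.symm))))

theorem rel_no_theta (h2 : (2 : F) ≠ 0) (a c : F × F × F × F) (b m d : Fin 3 → F × F × F × F)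
    (hm : Function.Injective m) (ha : ∀ i, m i ≠ a) (hc : ∀ i, m i ≠ c) (hbd : ∀ i, b i ≠ d i)
    (r1 : ∀ i, Rel a (b i)) (r2 : ∀ i, Rel (m i) (b i)) (r3 : ∀ i, Rel (m i) (d i))
    (r4 : ∀ i, Rel c (d i)) : False := by
  have hs : ∀ i, Sol a.1 c.1 (a.2.1 - c.2.1) (a.2.2.1 - c.2.2.1) (a.2.2.2 - c.2.2.2)
      (m i).1 (b i).1 (d i).1 := by
    intro i
    refine ⟨fun e => ha i (rel_left (r2 i) (r1 i) e), fun e => hc i (rel_left (r3 i) (r4 i) e),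
      fun e => hbd i (rel_right (r2 i) (r3 i) e), ?_, ?_, ?_⟩
    · linear_combination -(r1 i).1 + (r2 i).1 - (r3 i).1 + (r4 i).1
    · linear_combination -(r1 i).2.1 + (r2 i).2.1 - (r3 i).2.1 + (r4 i).2.1
    · linear_combination -(r1 i).2.2 + (r2 i).2.2 - (r3 i).2.2 + (r4 i).2.2
  obtain ⟨i, j, hij, e⟩ := sol_three h2 _ _ _ hs
  have hj := hs j
  rw [← e] at hj
  have hb := rel_right (r1 i) (r1 j) (sol_same h2 (hs i) hj).1
  have := r2 j
  rw [← hb] at this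
  exact hij (hm (rel_left (r2 i) this e))

/-- swap the last two coordinates -/
def sw (a : F × F × F × F) : F × F × F × F := (a.1, a.2.1, a.2.2.2, a.2.2.1)

theorem sw_inj : Function.Injective (sw : F × F × F × F → _) := by
  intro a b h
  simp only [sw, Prod.mk.injEq] at h
  exact Prod.ext h.1 (Prod.ext h.2.1 (Prod.ext h.2.2.2 h.2.2.1))

theorem rel_sw {a b : F × F × F × F} (h : Rel a b) : Rel (sw b) (sw a) := by
  obtain ⟨h1, h2, h3⟩ := h
  refine ⟨?_, ?_, ?_⟩ <;> simp only [sw]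
  · linear_combination h1
  · linear_combination h3
  · linear_combination h2

/-- The bipartite graph. -/
def BG (F : Type) [Field F] : SimpleGraph ((F × F × F × F) ⊕ (F × F × F × F)) where
  Adj u v := (∃ a b, u = Sum.inl a ∧ v = Sum.inr b ∧ Rel a b) ∨
    (∃ a b, v = Sum.inl a ∧ u = Sum.inr b ∧ Rel a b)
  symm := ⟨fun _ _ h => h.symm⟩
  loopless := ⟨by rintro u (⟨a, b, h, h', -⟩ | ⟨a, b, h, h', -⟩) <;> rw [h] at h' <;> cases h'⟩

theorem BG_inl {a : F × F × F × F} {v} (h : (BG F).Adj (Sum.inl a) v) :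
    ∃ b, v = Sum.inr b ∧ Rel a b := by
  rcases h with ⟨a', b, h, h', r⟩ | ⟨a', b, h, h', r⟩
  · cases h; exact ⟨b, h', r⟩
  · cases h'

theorem BG_inr {b : F × F × F × F} {v} (h : (BG F).Adj (Sum.inr b) v) :
    ∃ a, v = Sum.inl a ∧ Rel a b := by
  rcases h with ⟨a', b', h, h', r⟩ | ⟨a', b', h, h', r⟩
  · cases h
  · cases h'; exact ⟨a', h, r⟩

theorem theta_adj (i : Fin 3) : theta34.Adj (Sum.inl 0) (Sum.inr (i, 0)) ∧
    theta34.Adj (Sum.inr (i, 0)) (Sum.inr (i, 1)) ∧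
    theta34.Adj (Sum.inr (i, 1)) (Sum.inr (i, 2)) ∧
    theta34.Adj (Sum.inr (i, 2)) (Sum.inl 1) := by
  refine ⟨?_, ?_, ?_, ?_⟩
  · exact (SimpleGraph.fromRel_adj _ _ _).2 ⟨by simp, Or.inl (Or.inl ⟨i, rfl, rfl⟩)⟩
  · exact (SimpleGraph.fromRel_adj _ _ _).2
      ⟨by simp, Or.inl (Or.inr (Or.inr ⟨i, 0, by decide, rfl, rfl⟩))⟩
  · exact (SimpleGraph.fromRel_adj _ _ _).2
      ⟨by simp, Or.inl (Or.inr (Or.inr ⟨i, 1, by decide, rfl, rfl⟩))⟩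
  · exact (SimpleGraph.fromRel_adj _ _ _).2 ⟨by simp, Or.inr (Or.inr (Or.inl ⟨i, rfl, rfl⟩))⟩

theorem BG_free (h2 : (2 : F) ≠ 0) : ¬ ContainsSub theta34 (BG F) := by
  rintro ⟨f, hf⟩
  have e1 := fun i => f.map_adj (theta_adj i).1
  have e2 := fun i => f.map_adj (theta_adj i).2.1
  have e3 := fun i => f.map_adj (theta_adj i).2.2.1
  have e4 := fun i => f.map_adj (theta_adj i).2.2.2
  have n1 : ∀ i, f (Sum.inr (i, 1)) ≠ f (Sum.inl 0) := fun i h => by cases hf h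
  have n2 : ∀ i, f (Sum.inr (i, 1)) ≠ f (Sum.inl 1) := fun i h => by cases hf h
  have n3 : ∀ i, f (Sum.inr (i, 0)) ≠ f (Sum.inr (i, 2)) := fun i h => by
    have := hf h; simp at this
  have n4 : Function.Injective fun i => f (Sum.inr (i, 1)) := fun i j h => by
    have := hf h; simpa using this
  cases h0 : f (Sum.inl 0) with
  | inl a =>
    rw [h0] at e1
    choose b hb r1 using fun i => BG_inl (e1 i)
    have e2' := fun i => (hb i) ▸ (e2 i)
    choose m hm r2 using fun i => BG_inr (e2' i)
    have e3' := fun i => (hm i) ▸ (e3 i)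
    choose d hd r3 using fun i => BG_inl (e3' i)
    have e4' := fun i => (hd i) ▸ (e4 i)
    choose c hc r4 using fun i => BG_inr (e4' i)
    have hc' : ∀ i, c i = c 0 := fun i => by
      have := (hc i).symm.trans (hc 0); simpa using this
    refine rel_no_theta h2 a (c 0) b m d ?_ ?_ ?_ ?_ r1 r2 r3 (fun i => hc' i ▸ r4 i)
    · intro i j h; apply n4; simp only [hm, h]
    · intro i h; apply n1 i; rw [hm, h, h0]
    · intro i h; apply n2 i; rw [hm, h, hc 0]
    · intro i h; apply n3 i; rw [hb, hd, h]
  | inr a =>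
    rw [h0] at e1
    choose b hb r1 using fun i => BG_inr (e1 i)
    have e2' := fun i => (hb i) ▸ (e2 i)
    choose m hm r2 using fun i => BG_inl (e2' i)
    have e3' := fun i => (hm i) ▸ (e3 i)
    choose d hd r3 using fun i => BG_inr (e3' i)
    have e4' := fun i => (hd i) ▸ (e4 i)
    choose c hc r4 using fun i => BG_inl (e4' i)
    have hc' : ∀ i, c i = c 0 := fun i => by
      have := (hc i).symm.trans (hc 0); simpa using this
    refine rel_no_theta h2 (sw a) (sw (c 0)) (fun i => sw (b i)) (fun i => sw (m i))
      (fun i => sw (d i)) ?_ ?_ ?_ ?_ (fun i => rel_sw (r1 i)) (fun i => rel_sw (r2 i))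
      (fun i => rel_sw (r3 i)) (fun i => rel_sw (hc' i ▸ r4 i))
    · intro i j h; apply n4; simp only [hm, sw_inj h]
    · intro i h; apply n1 i; rw [hm, sw_inj h, h0]
    · intro i h; apply n2 i; rw [hm, sw_inj h, hc 0]
    · intro i h; apply n3 i; rw [hb, hd, sw_inj h]

end field

theorem transfer {V I : Type} [Fintype V] [Fintype I] (G : SimpleGraph V) (π : V → I) (r k : ℕ)
    (hr : r ≤ Fintype.card I) (hfree : ¬ ContainsSub theta34 G)
    (hk : ∀ i, Nat.card {v // π v = i} ≤ k)
    (hadj : ∀ i j, i ≠ j → ∃ u w, π u = i ∧ π w = j ∧ G.Adj u w) :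
    ∃ (n : ℕ) (G : SimpleGraph (Fin n)), ¬ ContainsSub theta34 G ∧ IsRKGraph G r k := by
  classical
  obtain ⟨e⟩ : Nonempty (Fin r ↪ I) :=
    Function.Embedding.nonempty_of_card_le (by simpa using hr)
  let V' := {v : V // π v ∈ Set.range e}
  let t := Fintype.equivFin V'
  let g : Fin (Fintype.card V') → V := fun a => (t.symm a).1
  have hg : Function.Injective g := Subtype.val_injective.comp t.symm.injective
  refine ⟨Fintype.card V', G.comap g, ?_, ?_⟩
  · rintro ⟨f, hf⟩
    exact hfree ⟨⟨fun x => g (f x), fun h => f.map_adj h⟩, hg.comp hf⟩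
  · refine ⟨fun i => Finset.univ.filter fun a => π (g a) = e i, ?_, ?_, ?_⟩
    · intro v
      obtain ⟨i, hi⟩ := (t.symm v).2
      refine ⟨i, by simpa [g] using hi.symm, ?_⟩
      intro j hj
      simp only [Finset.mem_filter, Finset.mem_univ, true_and] at hj
      exact e.injective (hj.symm.trans hi.symm)
    · intro i
      refine le_trans ?_ (hk (e i))
      have hcard : Nat.card {v // π v = e i} = (Finset.univ.filter fun v => π v = e i).card := by
        rw [Nat.card_eq_fintype_card, Fintype.card_subtype]
      refine le_trans ?_ hcard.ge
      apply Finset.card_le_card_of_injOn g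
      · intro a ha
        simpa using ha
      · exact hg.injOn
    · intro i j hij
      obtain ⟨u, w, hu, hw, h⟩ := hadj (e i) (e j) (fun h => hij (e.injective h))
      refine ⟨t ⟨u, i, hu.symm⟩, ?_, t ⟨w, j, hw.symm⟩, ?_, ?_⟩
      · simp [g, hu]
      · simp [g, hw]
      · simpa [g] using h

theorem upper_p (p : ℕ) (hp : p.Prime) (hp2 : p ≠ 2) (r : ℕ) (hr : r ≤ p ^ 5) :
    ∃ (n : ℕ) (G : SimpleGraph (Fin n)), ¬ ContainsSub theta34 G ∧ IsRKGraph G r (2 * p ^ 3) := by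
  classical
  have : Fact p.Prime := ⟨hp⟩
  let F := GaloisField p 2
  have : Fintype F := Fintype.ofFinite F
  let Z := ZMod p
  have hcF : Fintype.card F = p ^ 2 := by
    rw [← Nat.card_eq_fintype_card]; exact GaloisField.card p 2 (by norm_num)
  have h2 : (2 : F) ≠ 0 := by
    intro h
    have : ((2 : ℕ) : F) = 0 := by exact_mod_cast h
    rw [CharP.cast_eq_zero_iff F p] at this
    exact hp2 ((Nat.prime_dvd_prime_iff_eq hp Nat.prime_two).1 this)
  have hfr : Module.finrank Z F = Module.finrank Z (Z × Z) := by
    rw [GaloisField.finrank p (by norm_num)]; simp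
  let φ : F ≃ₗ[Z] (Z × Z) := LinearEquiv.ofFinrankEq _ _ hfr

  let π : (F × F × F × F) ⊕ (F × F × F × F) → F × Z × Z × Z := fun v => match v with
    | Sum.inl a => (a.1, (φ a.2.1).1, (φ a.2.2.1).1, (φ a.2.2.2).1)
    | Sum.inr a => (a.1, (φ a.2.1).2, (φ a.2.2.1).2, (φ a.2.2.2).2)
  let ρ : (F × F × F × F) ⊕ (F × F × F × F) → Bool × Z × Z × Z := fun v => match v with
    | Sum.inl a => (true, (φ a.2.1).2, (φ a.2.2.1).2, (φ a.2.2.2).2)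
    | Sum.inr a => (false, (φ a.2.1).1, (φ a.2.2.1).1, (φ a.2.2.2).1)
  have hinj : ∀ u v, π u = π v → ρ u = ρ v → u = v := by
    rintro (⟨a, b, c, d⟩ | ⟨a, b, c, d⟩) (⟨a', b', c', d'⟩ | ⟨a', b', c', d'⟩) h h' <;>
      simp only [π, ρ, Prod.mk.injEq, reduceCtorEq, false_and] at h h' ⊢
    · obtain ⟨h0, h1, h2, h3⟩ := h
      obtain ⟨-, h1', h2', h3'⟩ := h'
      rw [h0, φ.injective (Prod.ext h1 h1'), φ.injective (Prod.ext h2 h2'),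
        φ.injective (Prod.ext h3 h3')]
    · obtain ⟨h0, h1, h2, h3⟩ := h
      obtain ⟨-, h1', h2', h3'⟩ := h'
      rw [h0, φ.injective (Prod.ext h1' h1), φ.injective (Prod.ext h2' h2),
        φ.injective (Prod.ext h3' h3)]
  refine transfer (BG F) π r _ ?_ (BG_free h2) ?_ ?_
  · simp only [Fintype.card_prod, hcF, Z, ZMod.card]
    calc r ≤ p ^ 5 := hr
      _ = _ := by ring
  · intro i
    have : Nat.card {v // π v = i} ≤ Nat.card (Bool × Z × Z × Z) := by
      apply Nat.card_le_card_of_injective (fun v : {v // π v = i} => ρ v.1)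
      intro u v h
      exact Subtype.ext (hinj _ _ (u.2.trans v.2.symm) h)
    refine this.trans (le_of_eq ?_)
    simp only [Nat.card_eq_fintype_card, Fintype.card_prod, Fintype.card_bool, Z, ZMod.card]
    ring
  · rintro ⟨x, α1, α2, α3⟩ ⟨y, β1, β2, β3⟩ -
    have key : ∀ (α β : Z) (c : F), ∃ s t : F, (φ s).1 = α ∧ (φ t).2 = β ∧ s + t = c := by
      intro α β c
      refine ⟨φ.symm (α, (φ c).2 - β), c - φ.symm (α, (φ c).2 - β), ?_, ?_, ?_⟩
      · simp
      · simp
      · ring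
    obtain ⟨s1, t1, a1, b1, c1⟩ := key α1 β1 (x * y)
    obtain ⟨s2, t2, a2, b2, c2⟩ := key α2 β2 (x ^ 2 * y)
    obtain ⟨s3, t3, a3, b3, c3⟩ := key α3 β3 (x * y ^ 2)
    refine ⟨Sum.inl (x, s1, s2, s3), Sum.inr (y, t1, t2, t3), ?_, ?_, ?_⟩
    · simp only [π, a1, a2, a3]
    · simp only [π, b1, b2, b3]
    · exact Or.inl ⟨_, _, rfl, rfl, c1, c2, c3⟩

theorem upper (r : ℕ) (hr : 1 ≤ r) :
    (fGraph theta34 r : ℝ) ≤ 1024 * (r : ℝ) ^ ((3 : ℝ) / 5) := by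
  have hr1 : (1 : ℝ) ≤ r := by exact_mod_cast hr
  set t : ℝ := (r : ℝ) ^ ((1 : ℝ) / 5) with ht
  have ht1 : 1 ≤ t := Real.one_le_rpow hr1 (by norm_num)
  have ht5 : t ^ 5 = r := by
    rw [ht, ← Real.rpow_natCast, ← Real.rpow_mul (by positivity)]; norm_num
  have ht3 : t ^ 3 = (r : ℝ) ^ ((3 : ℝ) / 5) := by
    rw [ht, ← Real.rpow_natCast, ← Real.rpow_mul (by positivity)]; norm_num
  set m := ⌈t⌉₊ + 1 with hm
  have hm2 : t ≤ m := by rw [hm]; push_cast; linarith [Nat.le_ceil t]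
  have hm3 : (m : ℝ) ≤ 3 * t := by
    rw [hm]; push_cast; linarith [Nat.ceil_lt_add_one (show 0 ≤ t by linarith)]
  have hm1 : 2 ≤ m := by
    have : 0 < ⌈t⌉₊ := Nat.ceil_pos.2 (by linarith)
    omega
  obtain ⟨p, hp, hp1, hp2⟩ := Nat.exists_prime_lt_and_le_two_mul m (by omega)
  have hle : r ≤ p ^ 5 := by
    have : (r : ℝ) ≤ (p : ℝ) ^ 5 := by
      rw [← ht5]
      apply pow_le_pow_left₀ (by linarith)
      have : (m : ℝ) ≤ p := by exact_mod_cast hp1.le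
      linarith
    exact_mod_cast this
  have h' : (fGraph theta34 r : ℝ) ≤ 2 * (p : ℝ) ^ 3 := by
    have : fGraph theta34 r ≤ 2 * p ^ 3 := by
      apply Nat.sInf_le
      exact upper_p p hp (by omega) r hle
    exact_mod_cast this
  have hp3 : (p : ℝ) ≤ 6 * t := by
    have : (p : ℝ) ≤ 2 * m := by exact_mod_cast hp2
    linarith
  have : (p : ℝ) ^ 3 ≤ (6 * t) ^ 3 := pow_le_pow_left₀ (by positivity) hp3 3
  rw [← ht3]
  have : 0 ≤ t ^ 3 := by positivity
  nlinarith

/-! ### Lower bound -/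

theorem mk_theta {V : Type} (G : SimpleGraph V) (u w : V) (f0 f1 f2 : Fin 3 → V)
    (i0 : Function.Injective f0) (i1 : Function.Injective f1) (i2 : Function.Injective f2)
    (d01 : ∀ i j, f0 i ≠ f1 j) (d02 : ∀ i j, f0 i ≠ f2 j) (d12 : ∀ i j, f1 i ≠ f2 j)
    (huw : u ≠ w) (u0 : ∀ i, u ≠ f0 i) (u1 : ∀ i, u ≠ f1 i) (u2 : ∀ i, u ≠ f2 i)
    (w0 : ∀ i, w ≠ f0 i) (w1 : ∀ i, w ≠ f1 i) (w2 : ∀ i, w ≠ f2 i)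
    (a1 : ∀ i, G.Adj u (f0 i)) (a2 : ∀ i, G.Adj (f0 i) (f1 i)) (a3 : ∀ i, G.Adj (f1 i) (f2 i))
    (a4 : ∀ i, G.Adj (f2 i) w) : ContainsSub theta34 G := by
  let F : (Fin 2) ⊕ (Fin 3 × Fin 3) → V :=
    Sum.elim ![u, w] (fun x => ![f0 x.1, f1 x.1, f2 x.1] x.2)
  have hF : ∀ a b, ((∃ i : Fin 3, a = Sum.inl 0 ∧ b = Sum.inr (i, 0)) ∨
    (∃ i : Fin 3, a = Sum.inl 1 ∧ b = Sum.inr (i, 2)) ∨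
    (∃ (i : Fin 3) (j : Fin 3) (hj : (j : ℕ) + 1 < 3),
      a = Sum.inr (i, j) ∧ b = Sum.inr (i, ⟨(j : ℕ) + 1, hj⟩))) → G.Adj (F a) (F b) := by
    rintro a b (⟨i, rfl, rfl⟩ | ⟨i, rfl, rfl⟩ | ⟨i, j, hj, rfl, rfl⟩)
    · exact a1 i
    · exact (a4 i).symm
    · fin_cases j
      · exact a2 i
      · exact a3 i
      · simp at hj
  refine ⟨⟨F, ?_⟩, ?_⟩
  · intro a b h
    rcases ((SimpleGraph.fromRel_adj _ _ _).1 h).2 with h | h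
    · exact hF _ _ h
    · exact (hF _ _ h).symm
  · change Function.Injective F
    rintro (a | ⟨i, j⟩) (b | ⟨i', j'⟩) h
    · fin_cases a <;> fin_cases b <;> simp [F] at h ⊢
      · exact huw h
      · exact huw h.symm
    · fin_cases a <;> fin_cases j' <;> simp [F] at h
      · exact (u0 _ h).elim
      · exact (u1 _ h).elim
      · exact (u2 _ h).elim
      · exact (w0 _ h).elim
      · exact (w1 _ h).elim
      · exact (w2 _ h).elim
    · fin_cases b <;> fin_cases j <;> simp [F] at h
      · exact (u0 _ h.symm).elim
      · exact (u1 _ h.symm).elim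
      · exact (u2 _ h.symm).elim
      · exact (w0 _ h.symm).elim
      · exact (w1 _ h.symm).elim
      · exact (w2 _ h.symm).elim
    · fin_cases j <;> fin_cases j' <;> simp [F] at h ⊢
      · exact i0 h
      · exact (d01 _ _ h).elim
      · exact (d02 _ _ h).elim
      · exact (d01 _ _ h.symm).elim
      · exact i1 h
      · exact (d12 _ _ h).elim
      · exact (d02 _ _ h.symm).elim
      · exact (d12 _ _ h.symm).elim
      · exact i2 h

section
variable {V : Type} [DecidableEq V]

theorem pick (S : Fin 3 → Finset V) (Av : Finset V) (h : ∀ i, Av.card + 2 < (S i).card) :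
    ∃ s : Fin 3 → V, Function.Injective s ∧ ∀ i, s i ∈ S i ∧ s i ∉ Av := by
  obtain ⟨a, ha, ha'⟩ := Finset.exists_mem_notMem_of_card_lt_card
    (show Av.card < (S 0).card by have := h 0; omega)
  obtain ⟨b, hb, hb'⟩ := Finset.exists_mem_notMem_of_card_lt_card
    (show (insert a Av).card < (S 1).card by
      have := h 1; have := Finset.card_insert_le a Av; omega)
  obtain ⟨c, hc, hc'⟩ := Finset.exists_mem_notMem_of_card_lt_card
    (show (insert b (insert a Av)).card < (S 2).card by
      have := h 2; have := Finset.card_insert_le a Av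
      have := Finset.card_insert_le b (insert a Av); omega)
  simp only [Finset.mem_insert, not_or] at hb' hc'
  refine ⟨![a, b, c], ?_, ?_⟩
  · intro i j hij
    fin_cases i <;> fin_cases j <;> simp at hij ⊢ <;> simp_all
  · intro i
    fin_cases i
    · exact ⟨ha, ha'⟩
    · exact ⟨hb, hb'.2⟩
    · obtain ⟨-, -, hcA⟩ := hc'
      exact And.intro hc hcA

/-- right neighbours -/
def nR (E : Finset (V × V)) (x : V) : Finset V := (E.filter fun e => e.1 = x).image Prod.snd
/-- left neighbours -/
def nL (E : Finset (V × V)) (y : V) : Finset V := (E.filter fun e => e.2 = y).image Prod.fst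

theorem mem_nR {E : Finset (V × V)} {x y : V} : y ∈ nR E x ↔ (x, y) ∈ E := by
  simp [nR]

theorem mem_nL {E : Finset (V × V)} {x y : V} : x ∈ nL E y ↔ (x, y) ∈ E := by
  simp [nL]

theorem card_nR (E : Finset (V × V)) (x : V) :
    (nR E x).card = (E.filter fun e => e.1 = x).card := by
  apply Finset.card_image_of_injOn
  intro a ha b hb h
  simp only [Finset.coe_filter, Set.mem_ofPred_eq] at ha hb
  exact Prod.ext (ha.2.trans hb.2.symm) h

theorem card_nL (E : Finset (V × V)) (y : V) :
    (nL E y).card = (E.filter fun e => e.2 = y).card := by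
  apply Finset.card_image_of_injOn
  intro a ha b hb h
  simp only [Finset.coe_filter, Set.mem_ofPred_eq] at ha hb
  exact Prod.ext h (ha.2.trans hb.2.symm)

/-- number of vertices met by a set of edges -/
def vc (E : Finset (V × V)) : ℕ := (E.image Prod.fst).card + (E.image Prod.snd).card

theorem vc_fst (E : Finset (V × V)) {x y : V} (h : (x, y) ∈ E) :
    vc (E.filter fun e => ¬ e.1 = x) + 1 ≤ vc E := by
  have h1 : ((E.filter fun e => ¬ e.1 = x).image Prod.fst).card < (E.image Prod.fst).card := by
    apply Finset.card_lt_card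
    refine ⟨Finset.image_subset_image (Finset.filter_subset _ _), fun hs => ?_⟩
    have := hs (Finset.mem_image_of_mem Prod.fst h)
    simp at this
  have h2 : ((E.filter fun e => ¬ e.1 = x).image Prod.snd).card ≤ (E.image Prod.snd).card :=
    Finset.card_le_card (Finset.image_subset_image (Finset.filter_subset _ _))
  unfold vc; omega

theorem vc_snd (E : Finset (V × V)) {x y : V} (h : (x, y) ∈ E) :
    vc (E.filter fun e => ¬ e.2 = y) + 1 ≤ vc E := by
  have h1 : ((E.filter fun e => ¬ e.2 = y).image Prod.snd).card < (E.image Prod.snd).card := by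
    apply Finset.card_lt_card
    refine ⟨Finset.image_subset_image (Finset.filter_subset _ _), fun hs => ?_⟩
    have := hs (Finset.mem_image_of_mem Prod.snd h)
    simp at this
  have h2 : ((E.filter fun e => ¬ e.2 = y).image Prod.fst).card ≤ (E.image Prod.fst).card :=
    Finset.card_le_card (Finset.image_subset_image (Finset.filter_subset _ _))
  unfold vc; omega

theorem min_deg (D : ℕ) (E : Finset (V × V)) (h : D * vc E < E.card) :
    ∃ E' ⊆ E, E'.Nonempty ∧ ∀ x y, (x, y) ∈ E' → D < (nR E' x).card ∧ D < (nL E' y).card := by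
  induction hn : E.card using Nat.strong_induction_on generalizing E with
  | _ n ih =>
    subst hn
    by_cases hE : ∀ x y, (x, y) ∈ E → D < (nR E x).card ∧ D < (nL E y).card
    · exact ⟨E, subset_rfl, Finset.card_pos.1 (by omega), hE⟩
    push Not at hE
    obtain ⟨x, y, hxy, hE⟩ := hE
    by_cases hx : D < (nR E x).card
    · have hy := hE hx
      have hc := Finset.card_filter_add_card_filter_not (s := E) (fun e => e.2 = y)
      rw [← card_nL] at hc
      have hpos : 0 < (nL E y).card := Finset.card_pos.2 ⟨x, mem_nL.2 hxy⟩
      have hv := vc_snd E hxy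
      have hm := Nat.mul_le_mul_left D hv
      rw [mul_add] at hm
      obtain ⟨E', h1, h2⟩ := ih _ (by omega) (E.filter fun e => ¬ e.2 = y) (by omega) rfl
      exact ⟨E', h1.trans (Finset.filter_subset _ _), h2⟩
    · have hc := Finset.card_filter_add_card_filter_not (s := E) (fun e => e.1 = x)
      rw [← card_nR] at hc
      have hpos : 0 < (nR E x).card := Finset.card_pos.2 ⟨y, mem_nR.2 hxy⟩
      have hv := vc_fst E hxy
      have hm := Nat.mul_le_mul_left D hv
      rw [mul_add] at hm
      obtain ⟨E', h1, h2⟩ := ih _ (by omega) (E.filter fun e => ¬ e.1 = x) (by omega) rfl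
      exact ⟨E', h1.trans (Finset.filter_subset _ _), h2⟩

/-- popular edges -/
def Pop (K : ℕ) (E : Finset (V × V)) (c : V → V) (e : V × V) : Prop :=
  2 * K ≤ ((nL E e.2).filter fun x => c x = c e.1).card

instance (K : ℕ) (E : Finset (V × V)) (c : V → V) : DecidablePred (Pop K E c) :=
  fun _ => inferInstanceAs (Decidable (_ ≤ _))

theorem branch (K : ℕ) (E : Finset (V × V)) (c : V → V)
    (h : ∀ b, ∀ E' ⊆ E, (∀ e ∈ E', c e.1 = b) → E'.card ≤ K * vc E') :
    (E.filter (Pop K E c)).card ≤ 2 * K * (E.image Prod.fst).card := by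
  set Q := E.filter (Pop K E c) with hQ
  have hb : ∀ b, (Q.filter fun e => c e.1 = b).card ≤
      2 * K * ((E.image Prod.fst).filter fun x => c x = b).card := by
    intro b
    set B := Q.filter fun e => c e.1 = b with hB
    have hBQ : B ⊆ Q := Finset.filter_subset _ _
    have hQE : Q ⊆ E := Finset.filter_subset _ _
    have h1 := h b B (hBQ.trans hQE) (fun e he => (Finset.mem_filter.1 he).2)
    have h2 : (B.image Prod.snd).card * (2 * K) ≤ B.card := by
      rw [Finset.card_eq_sum_card_image Prod.snd B, ← smul_eq_mul]
      apply Finset.card_nsmul_le_sum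
      intro y hy
      obtain ⟨⟨x, y'⟩, he, rfl⟩ := Finset.mem_image.1 hy
      have heB := he
      rw [hB, Finset.mem_filter, hQ, Finset.mem_filter] at he
      obtain ⟨⟨heE, hpop⟩, hcx⟩ := he
      refine le_trans hpop ?_
      apply Finset.card_le_card_of_injOn (fun x => (x, y'))
      · intro z hz
        simp only [Finset.coe_filter, Set.mem_ofPred_eq, mem_nL] at hz
        simp only [hB, hQ, Finset.coe_filter, Set.mem_ofPred_eq, Finset.mem_filter, and_true]
        refine ⟨⟨hz.1, ?_⟩, hz.2.trans hcx⟩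
        unfold Pop at hpop ⊢
        simp only at hpop ⊢
        rw [hz.2]; exact hpop
      · intro z _ z' _ hzz
        exact (Prod.mk.inj hzz).1
    have h3 : (B.image Prod.fst).card ≤ ((E.image Prod.fst).filter fun x => c x = b).card := by
      apply Finset.card_le_card
      intro x hx
      obtain ⟨e, he, rfl⟩ := Finset.mem_image.1 hx
      exact Finset.mem_filter.2 ⟨Finset.mem_image_of_mem _ (hQE (hBQ he)),
        (Finset.mem_filter.1 he).2⟩
    unfold vc at h1
    have h4 := Nat.mul_le_mul_left (2 * K) h3
    nlinarith
  have hsub : (Q.image fun e => c e.1) ⊆ (E.image Prod.fst).image c := by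
    intro b hb
    obtain ⟨e, he, rfl⟩ := Finset.mem_image.1 hb
    exact Finset.mem_image_of_mem _ (Finset.mem_image_of_mem _ (Finset.mem_filter.1 he).1)
  calc Q.card = ∑ b ∈ (E.image Prod.fst).image c, (Q.filter fun e => c e.1 = b).card := by
        apply Finset.card_eq_sum_card_fiberwise
        intro e he
        exact hsub (Finset.mem_image_of_mem _ he)
    _ ≤ ∑ b ∈ (E.image Prod.fst).image c,
          2 * K * ((E.image Prod.fst).filter fun x => c x = b).card :=
        Finset.sum_le_sum fun b _ => hb b
    _ = 2 * K * (E.image Prod.fst).card := by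
        rw [← Finset.mul_sum, ← Finset.card_eq_sum_card_image]

theorem rare_image {K : ℕ} {E : Finset (V × V)} {c : V → V} {y : V} {S : Finset V}
    (hS : ∀ x ∈ S, (x, y) ∈ E ∧ ¬ Pop K E c (x, y)) :
    S.card ≤ (2 * K - 1) * (S.image c).card := by
  apply Finset.card_le_mul_card_image
  intro b hb
  obtain ⟨x, hx, rfl⟩ := Finset.mem_image.1 hb
  have h1 := (hS x hx).2
  unfold Pop at h1
  have : (S.filter fun z => c z = c x).card ≤ ((nL E y).filter fun z => c z = c x).card := by
    apply Finset.card_le_card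
    apply Finset.filter_subset_filter
    intro z hz
    exact mem_nL.2 (hS z hz).1
  simp only at h1
  omega

variable {G : SimpleGraph V}

theorem ne_lev {ℓ : V → ℕ} {a b : V} (h : ℓ a ≠ ℓ b) : a ≠ b := fun e => h (e ▸ rfl)

theorem T1 (hG : ¬ ContainsSub theta34 G) (ℓ : V → ℕ) (a : V) (E : Finset (V × V))
    (h : ∀ x y, (x, y) ∈ E → G.Adj a x ∧ G.Adj x y ∧ ℓ x = ℓ a + 1 ∧ ℓ y = ℓ a + 2) :
    E.card ≤ 5 * vc E := by
  by_contra hc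
  obtain ⟨E', hs, ⟨⟨w0, w⟩, hw⟩, hd⟩ := min_deg 5 E (by omega)
  obtain ⟨z, zi, hz⟩ := pick (fun _ => nL E' w) ∅ (fun i => by
    have := (hd _ _ hw).2; simp only [Finset.card_empty]; omega)
  have hz' : ∀ i, (z i, w) ∈ E' := fun i => mem_nL.1 (hz i).1
  obtain ⟨y, yi, hy⟩ := pick (fun i => nR E' (z i)) {w} (fun i => by
    have := (hd _ _ (hz' i)).1; simp only [Finset.card_singleton]; omega)
  have hy' : ∀ i, (z i, y i) ∈ E' := fun i => mem_nR.1 (hy i).1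
  obtain ⟨x, xi, hx⟩ := pick (fun i => nL E' (y i)) (Finset.univ.image z) (fun i => by
    have := (hd _ _ (hy' i)).2
    have h3 : (Finset.univ.image z).card ≤ 3 := Finset.card_image_le
    omega)
  have hx' : ∀ i, (x i, y i) ∈ E' := fun i => mem_nL.1 (hx i).1
  have kz := fun i => h _ _ (hs (hz' i))
  have ky := fun i => h _ _ (hs (hy' i))
  have kx := fun i => h _ _ (hs (hx' i))
  apply hG
  refine mk_theta G a w x y z xi yi zi ?_ ?_ ?_ ?_ ?_ ?_ ?_ ?_ ?_ ?_
    (fun i => (kx i).1) (fun i => (kx i).2.1) (fun i => (ky i).2.1.symm) (fun i => (kz i).2.1)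
  · intro i j; apply ne_lev (ℓ := ℓ); have := kx i; have := ky j; omega
  · intro i j e
    exact (hx i).2 (Finset.mem_image.2 ⟨j, Finset.mem_univ _, e.symm⟩)
  · intro i j; apply ne_lev (ℓ := ℓ); have := kz j; have := ky i; omega
  · apply ne_lev (ℓ := ℓ); have := kz 0; omega
  · intro i; apply ne_lev (ℓ := ℓ); have := kx i; omega
  · intro i; apply ne_lev (ℓ := ℓ); have := ky i; omega
  · intro i; apply ne_lev (ℓ := ℓ); have := kz i; omega
  · intro i; apply ne_lev (ℓ := ℓ); have := kx i; have := kz 0; omega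
  · intro i e; exact (hy i).2 (by simp [e])
  · intro i; apply ne_lev (ℓ := ℓ); have := kz i; omega

theorem T2 (hG : ¬ ContainsSub theta34 G) (ℓ : V → ℕ) (a : V) (p : V → V) (E : Finset (V × V))
    (h : ∀ x y, (x, y) ∈ E → G.Adj a (p x) ∧ G.Adj (p x) x ∧ G.Adj x y ∧
      ℓ (p x) = ℓ a + 1 ∧ ℓ x = ℓ a + 2 ∧ ℓ y = ℓ a + 3) :
    E.card ≤ 30 * vc E := by
  have hpop := branch 5 E p (by
    intro b E' hE' hb
    apply T1 hG ℓ b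
    intro x y hxy
    have h1 := h x y (hE' hxy)
    have h2 := hb _ hxy
    simp only at h2
    subst h2
    refine ⟨h1.2.1, h1.2.2.1, ?_, ?_⟩ <;> omega)
  have hc := Finset.card_filter_add_card_filter_not (s := E) (Pop 5 E p)
  set R := E.filter fun e => ¬ Pop 5 E p e with hR
  have hRE : R ⊆ E := Finset.filter_subset _ _
  have hvc : vc R ≤ vc E := Nat.add_le_add
    (Finset.card_le_card (Finset.image_subset_image hRE))
    (Finset.card_le_card (Finset.image_subset_image hRE))
  have hvc' : (E.image Prod.fst).card ≤ vc E := Nat.le_add_right _ _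
  by_contra hcon
  obtain ⟨E', hs, ⟨⟨w, w0⟩, hw⟩, hd⟩ := min_deg 19 R (by omega)
  obtain ⟨y, yi, hy⟩ := pick (fun _ => nR E' w) ∅ (fun i => by
    have := (hd _ _ hw).1; simp only [Finset.card_empty]; omega)
  have hy' : ∀ i, (w, y i) ∈ E' := fun i => mem_nR.1 (hy i).1
  obtain ⟨b, bi, hb⟩ := pick (fun i => ((nL E' (y i)).erase w).image p) ∅ (fun i => by
    have h1 := (hd _ _ (hy' i)).2
    have h2 := Finset.pred_card_le_card_erase (s := nL E' (y i)) (a := w)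
    have h3 := rare_image (K := 5) (E := E) (c := p) (y := y i) (S := (nL E' (y i)).erase w) (by
      intro x hx
      have := hs (mem_nL.1 (Finset.mem_of_mem_erase hx))
      exact Finset.mem_filter.1 this)
    simp only [Finset.card_empty]; omega)
  choose x hx hpx using fun i => Finset.mem_image.1 (hb i).1
  have hx' : ∀ i, (x i, y i) ∈ E' := fun i => mem_nL.1 (Finset.mem_of_mem_erase (hx i))
  have ky := fun i => h _ _ (hRE (hs (hy' i)))
  have kx := fun i => h _ _ (hRE (hs (hx' i)))
  apply hG
  refine mk_theta G a w (fun i => p (x i)) x y ?_ ?_ yi ?_ ?_ ?_ ?_ ?_ ?_ ?_ ?_ ?_ ?_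
    (fun i => (kx i).1) (fun i => (kx i).2.1) (fun i => (kx i).2.2.1)
    (fun i => (ky i).2.2.1.symm)
  · intro i j e; simp only [hpx] at e; exact bi e
  · intro i j e; apply bi; rw [← hpx, ← hpx, e]
  · intro i j; apply ne_lev (ℓ := ℓ); have := kx i; have := kx j; omega
  · intro i j; apply ne_lev (ℓ := ℓ); have := kx i; have := ky j; omega
  · intro i j; apply ne_lev (ℓ := ℓ); have := kx i; have := ky j; omega
  · apply ne_lev (ℓ := ℓ); have := ky 0; omega
  · intro i; apply ne_lev (ℓ := ℓ); have := kx i; omega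
  · intro i; apply ne_lev (ℓ := ℓ); have := kx i; omega
  · intro i; apply ne_lev (ℓ := ℓ); have := ky i; omega
  · intro i; apply ne_lev (ℓ := ℓ); have := kx i; have := ky 0; omega
  · intro i e; exact Finset.ne_of_mem_erase (hx i) e.symm
  · intro i; apply ne_lev (ℓ := ℓ); have := ky i; omega

theorem T3 (hG : ¬ ContainsSub theta34 G) (ℓ : V → ℕ) (a : V) (p q : V → V)
    (E : Finset (V × V))
    (h : ∀ x y, (x, y) ∈ E → G.Adj a (q (p x)) ∧ G.Adj (q (p x)) (p x) ∧ G.Adj (p x) x ∧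
      G.Adj x y ∧ ℓ (q (p x)) = ℓ a + 1 ∧ ℓ (p x) = ℓ a + 2 ∧ ℓ x = ℓ a + 3 ∧ ℓ y = ℓ a + 4) :
    E.card ≤ 120 * vc E := by
  have hpop := branch 30 E (fun x => q (p x)) (by
    intro b E' hE' hb
    apply T2 hG ℓ b p
    intro x y hxy
    have h1 := h x y (hE' hxy)
    have h2 := hb _ hxy
    simp only at h2
    subst h2
    refine ⟨h1.2.1, h1.2.2.1, h1.2.2.2.1, ?_, ?_, ?_⟩ <;> omega)
  have hc := Finset.card_filter_add_card_filter_not (s := E) (Pop 30 E fun x => q (p x))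
  set R := E.filter fun e => ¬ Pop 30 E (fun x => q (p x)) e with hR
  have hRE : R ⊆ E := Finset.filter_subset _ _
  have hRc : R.card ≤ 118 * (R.image Prod.snd).card := by
    apply Finset.card_le_mul_card_image
    intro y hy
    rw [← card_nL]
    have h3 := rare_image (K := 30) (E := E) (c := fun x => q (p x)) (y := y) (S := nL R y) (by
      intro x hx
      exact Finset.mem_filter.1 (mem_nL.1 hx))
    by_contra hcon
    obtain ⟨b, bi, hb⟩ := pick (fun _ => (nL R y).image fun x => q (p x)) ∅ (fun i => by
      simp only [Finset.card_empty]; omega)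
    choose x hx hpx using fun i => Finset.mem_image.1 (hb i).1
    have kx := fun i => h _ _ (hRE (mem_nL.1 (hx i)))
    apply hG
    refine mk_theta G a y (fun i => q (p (x i))) (fun i => p (x i)) x
      ?_ ?_ ?_ ?_ ?_ ?_ ?_ ?_ ?_ ?_ ?_ ?_ ?_
      (fun i => (kx i).1) (fun i => (kx i).2.1) (fun i => (kx i).2.2.1)
      (fun i => (kx i).2.2.2.1)
    · intro i j e; simp only [hpx] at e; exact bi e
    · intro i j e; apply bi; rw [← hpx, ← hpx]; exact congrArg q e
    · intro i j e; apply bi; rw [← hpx, ← hpx, e]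
    · intro i j; apply ne_lev (ℓ := ℓ); have := kx i; have := kx j; omega
    · intro i j; apply ne_lev (ℓ := ℓ); have := kx i; have := kx j; omega
    · intro i j; apply ne_lev (ℓ := ℓ); have := kx i; have := kx j; omega
    · apply ne_lev (ℓ := ℓ); have := kx 0; omega
    · intro i; apply ne_lev (ℓ := ℓ); have := kx i; omega
    · intro i; apply ne_lev (ℓ := ℓ); have := kx i; omega
    · intro i; apply ne_lev (ℓ := ℓ); have := kx i; omega
    · intro i; apply ne_lev (ℓ := ℓ); have := kx i; omega
    · intro i; apply ne_lev (ℓ := ℓ); have := kx i; omega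
    · intro i; apply ne_lev (ℓ := ℓ); have := kx i; omega
  have hsub : (R.image Prod.snd).card ≤ (E.image Prod.snd).card :=
    Finset.card_le_card (Finset.image_subset_image hRE)
  unfold vc
  omega

/-- edges between two sets -/
def EB (N : V → Finset V) (A B : Finset V) : Finset (V × V) :=
  (A ×ˢ B).filter fun e => e.2 ∈ N e.1

theorem mem_EB {N : V → Finset V} {A B : Finset V} {x y : V} :
    (x, y) ∈ EB N A B ↔ (x ∈ A ∧ y ∈ B) ∧ y ∈ N x := by
  simp [EB]

theorem vc_EB (N : V → Finset V) (A B : Finset V) : vc (EB N A B) ≤ A.card + B.card := by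
  apply Nat.add_le_add
  · apply Finset.card_le_card
    intro x hx
    obtain ⟨⟨a, b⟩, he, rfl⟩ := Finset.mem_image.1 hx
    exact (mem_EB.1 he).1.1
  · apply Finset.card_le_card
    intro x hx
    obtain ⟨⟨a, b⟩, he, rfl⟩ := Finset.mem_image.1 hx
    exact (mem_EB.1 he).1.2

theorem count (N : V → Finset V) (hsym : ∀ w z, z ∈ N w → w ∈ N z) (A B C : Finset V) (δ : ℕ)
    (hN : ∀ x ∈ B, N x ⊆ A ∪ C) (hδ : ∀ x ∈ B, δ ≤ (N x).card) :
    δ * B.card ≤ (EB N A B).card + (EB N B C).card := by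
  have h1 : (EB N B C).card = ∑ x ∈ B, (C.filter fun y => y ∈ N x).card := by
    unfold EB
    rw [Finset.card_filter, Finset.sum_product]
    simp only [Finset.card_filter]
  have h2 : (EB N A B).card = ∑ x ∈ B, (A.filter fun y => y ∈ N x).card := by
    unfold EB
    rw [Finset.card_filter, Finset.sum_product_right]
    simp only [Finset.card_filter]
    refine Finset.sum_congr rfl fun x _ => Finset.sum_congr rfl fun y _ => ?_
    have : x ∈ N y ↔ y ∈ N x := ⟨hsym _ _, hsym _ _⟩
    simp only [this]
  rw [h1, h2, ← Finset.sum_add_distrib, mul_comm, ← smul_eq_mul]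
  apply Finset.card_nsmul_le_sum
  intro x hx
  refine (hδ x hx).trans ?_
  refine le_trans (Finset.card_le_card ?_) (Finset.card_union_le _ _)
  intro y hy
  have := hN x hx hy
  simp only [Finset.mem_union, Finset.mem_filter] at this ⊢
  tauto

theorem core [Fintype V] (hG : ¬ ContainsSub theta34 G) (N : V → Finset V)
    (hsym : ∀ w z, z ∈ N w → w ∈ N z) (hadj : ∀ w z, z ∈ N w → G.Adj w z) (col : V → Bool)
    (hcol : ∀ w z, z ∈ N w → col z = !(col w)) (v : V) (hv : (N v).Nonempty) (δ : ℕ)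
    (hδ : ∀ w, (N w).Nonempty → δ ≤ (N w).card) (hbig : 960 ≤ δ) :
    δ ^ 4 ≤ 240 ^ 3 * Fintype.card V := by
  set L1 := N v with hL1
  set L2 := (L1.biUnion N).erase v with hL2
  set L3 := (L2.biUnion N) \ L1 with hL3
  set L4 := (L3.biUnion N) \ L2 with hL4
  have m2 : ∀ x ∈ L2, x ≠ v ∧ ∃ a ∈ L1, x ∈ N a := by
    intro x hx; rw [hL2, Finset.mem_erase, Finset.mem_biUnion] at hx; exact hx
  have m3 : ∀ x ∈ L3, (∃ a ∈ L2, x ∈ N a) ∧ x ∉ L1 := by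
    intro x hx; rw [hL3, Finset.mem_sdiff, Finset.mem_biUnion] at hx; exact hx
  have m4 : ∀ x ∈ L4, (∃ a ∈ L3, x ∈ N a) ∧ x ∉ L2 := by
    intro x hx; rw [hL4, Finset.mem_sdiff, Finset.mem_biUnion] at hx; exact hx
  have c1 : ∀ x ∈ L1, col x = !(col v) := fun x hx => hcol v x hx
  have c2 : ∀ x ∈ L2, col x = col v := by
    intro x hx; obtain ⟨-, a, ha, hxa⟩ := m2 x hx
    rw [hcol _ _ hxa, c1 a ha, Bool.not_not]
  have c3 : ∀ x ∈ L3, col x = !(col v) := by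
    intro x hx; obtain ⟨⟨a, ha, hxa⟩, -⟩ := m3 x hx
    rw [hcol _ _ hxa, c2 a ha]
  have c4 : ∀ x ∈ L4, col x = col v := by
    intro x hx; obtain ⟨⟨a, ha, hxa⟩, -⟩ := m4 x hx
    rw [hcol _ _ hxa, c3 a ha, Bool.not_not]
  have hb : ∀ b : Bool, b ≠ !b := by decide
  let ℓ : V → ℕ := fun w => if w = v then 0 else if w ∈ L1 then 1 else if w ∈ L2 then 2
    else if w ∈ L3 then 3 else 4
  have l0 : ℓ v = 0 := by simp [ℓ]
  have n1 : ∀ x ∈ L1, x ≠ v := by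
    rintro x hx rfl; exact hb _ (c1 _ hx)
  have l1 : ∀ x ∈ L1, ℓ x = 1 := by
    intro x hx; simp [ℓ, n1 x hx, hx]
  have l2 : ∀ x ∈ L2, ℓ x = 2 := by
    intro x hx
    have : x ∉ L1 := fun h => hb _ ((c2 x hx).symm.trans (c1 x h))
    simp [ℓ, (m2 x hx).1, this, hx]
  have l3 : ∀ x ∈ L3, ℓ x = 3 := by
    intro x hx
    have h1 : x ≠ v := by rintro rfl; exact hb _ (c3 _ hx)
    have h2 : x ∉ L2 := fun h => hb _ ((c2 x h).symm.trans (c3 x hx))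
    simp [ℓ, h1, (m3 x hx).2, h2, hx]
  have l4 : ∀ x ∈ L4, ℓ x = 4 := by
    intro x hx
    have h1 : x ≠ v := by
      rintro rfl
      obtain ⟨⟨a, ha, hxa⟩, -⟩ := m4 x hx
      exact (m3 a ha).2 (hsym _ _ hxa)
    have h2 : x ∉ L1 := fun h => hb _ ((c4 x hx).symm.trans (c1 x h))
    have h3 : x ∉ L3 := fun h => hb _ ((c4 x hx).symm.trans (c3 x h))
    simp [ℓ, h1, h2, h3, (m4 x hx).2]
  have e2 : ∀ x, ∃ a, x ∈ L2 → a ∈ L1 ∧ x ∈ N a := by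
    intro x
    by_cases hx : x ∈ L2
    · obtain ⟨-, a, ha, hxa⟩ := m2 x hx
      exact ⟨a, fun _ => ⟨ha, hxa⟩⟩
    · exact ⟨x, fun h => absurd h hx⟩
  have e3 : ∀ x, ∃ a, x ∈ L3 → a ∈ L2 ∧ x ∈ N a := by
    intro x
    by_cases hx : x ∈ L3
    · obtain ⟨⟨a, ha, hxa⟩, -⟩ := m3 x hx
      exact ⟨a, fun _ => ⟨ha, hxa⟩⟩
    · exact ⟨x, fun h => absurd h hx⟩
  choose p2 hp2 using e2
  choose p3 hp3 using e3
  have t1 := T1 hG ℓ v (EB N L1 L2) (by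
    intro x y h
    obtain ⟨⟨hx, hy⟩, hxy⟩ := mem_EB.1 h
    refine ⟨hadj _ _ hx, hadj _ _ hxy, ?_, ?_⟩
    · rw [l1 x hx, l0]
    · rw [l2 y hy, l0])
  have t2 := T2 hG ℓ v p2 (EB N L2 L3) (by
    intro x y h
    obtain ⟨⟨hx, hy⟩, hxy⟩ := mem_EB.1 h
    obtain ⟨ha, hxa⟩ := hp2 x hx
    refine ⟨hadj _ _ ha, hadj _ _ hxa, hadj _ _ hxy, ?_, ?_, ?_⟩
    · rw [l1 _ ha, l0]
    · rw [l2 x hx, l0]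
    · rw [l3 y hy, l0])
  have t3 := T3 hG ℓ v p3 p2 (EB N L3 L4) (by
    intro x y h
    obtain ⟨⟨hx, hy⟩, hxy⟩ := mem_EB.1 h
    obtain ⟨ha, hxa⟩ := hp3 x hx
    obtain ⟨hb, hab⟩ := hp2 _ ha
    refine ⟨hadj _ _ hb, hadj _ _ hab, hadj _ _ hxa, hadj _ _ hxy, ?_, ?_, ?_, ?_⟩
    · rw [l1 _ hb, l0]
    · rw [l2 _ ha, l0]
    · rw [l3 x hx, l0]
    · rw [l4 y hy, l0])
  have v1 := vc_EB N L1 L2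
  have v2 := vc_EB N L2 L3
  have v3 := vc_EB N L3 L4
  have hd0 : δ ≤ L1.card := hδ v hv
  have q1 := count N hsym {v} L1 L2 δ (by
    intro x hx y hy
    simp only [Finset.mem_union, Finset.mem_singleton, hL2, Finset.mem_erase, Finset.mem_biUnion]
    by_cases h : y = v
    · exact Or.inl h
    · exact Or.inr ⟨h, x, hx, hy⟩) (fun x hx => hδ x ⟨v, hsym _ _ hx⟩)
  have q2 := count N hsym L1 L2 L3 δ (by
    intro x hx y hy
    simp only [Finset.mem_union, hL3, Finset.mem_sdiff, Finset.mem_biUnion]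
    by_cases h : y ∈ L1
    · exact Or.inl h
    · exact Or.inr ⟨⟨x, hx, hy⟩, h⟩) (fun x hx => hδ x ⟨p2 x, hsym _ _ (hp2 x hx).2⟩)
  have q3 := count N hsym L2 L3 L4 δ (by
    intro x hx y hy
    simp only [Finset.mem_union, hL4, Finset.mem_sdiff, Finset.mem_biUnion]
    by_cases h : y ∈ L2
    · exact Or.inl h
    · exact Or.inr ⟨⟨x, hx, hy⟩, h⟩) (fun x hx => hδ x ⟨p3 x, hsym _ _ (hp3 x hx).2⟩)
  have q0 : (EB N {v} L1).card ≤ L1.card := by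
    refine (Finset.card_filter_le _ _).trans ?_
    simp
  have hL : L4.card ≤ Fintype.card V := Finset.card_le_univ _
  generalize L1.card = a1 at *
  generalize L2.card = a2 at *
  generalize L3.card = a3 at *
  generalize L4.card = a4 at *
  have r1 : δ * a1 ≤ 240 * a2 := by nlinarith
  have s1 : a1 ≤ a2 := by nlinarith
  have r2 : δ * a2 ≤ 240 * a3 := by nlinarith
  have s2 : a2 ≤ a3 := by nlinarith
  have r3 : δ * a3 ≤ 240 * a4 := by nlinarith
  calc δ ^ 4 = δ ^ 3 * δ := by ring
    _ ≤ δ ^ 3 * a1 := Nat.mul_le_mul_left _ hd0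
    _ = δ ^ 2 * (δ * a1) := by ring
    _ ≤ δ ^ 2 * (240 * a2) := Nat.mul_le_mul_left _ r1
    _ = 240 * δ * (δ * a2) := by ring
    _ ≤ 240 * δ * (240 * a3) := Nat.mul_le_mul_left _ r2
    _ = 240 ^ 2 * (δ * a3) := by ring
    _ ≤ 240 ^ 2 * (240 * a4) := Nat.mul_le_mul_left _ r3
    _ = 240 ^ 3 * a4 := by ring
    _ ≤ 240 ^ 3 * Fintype.card V := Nat.mul_le_mul_left _ hL

end

theorem lower_nat (n : ℕ) (G : SimpleGraph (Fin n)) (hG : ¬ ContainsSub theta34 G) (r k : ℕ)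
    (hr : 2 ≤ r) (h : IsRKGraph G r k) : r ^ 3 ≤ 19200 ^ 3 * k ^ 5 := by
  let _ : DecidableRel G.Adj := Classical.decRel _
  obtain ⟨P, hP, hk, he⟩ := h
  choose idx hidx huniq using hP
  have hk1 : 1 ≤ k := by
    obtain ⟨u, hu, -⟩ := he ⟨0, by omega⟩ ⟨1, by omega⟩ (by simp)
    exact (Finset.card_pos.2 ⟨u, hu⟩).trans_le (hk _)
  have hn : n ≤ r * k := by
    have h1 : (Finset.univ : Finset (Fin n)) ⊆ Finset.univ.biUnion P := by
      intro v _
      exact Finset.mem_biUnion.2 ⟨idx v, Finset.mem_univ _, hidx v⟩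
    have h2 := (Finset.card_le_card h1).trans (Finset.card_biUnion_le_card_mul _ P k
      (fun i _ => hk i))
    simpa using h2
  set s := r / 2 with hs
  have hs3 : r ≤ 3 * s := by omega
  set E : Finset (Fin n × Fin n) := Finset.univ.filter fun e =>
    G.Adj e.1 e.2 ∧ (idx e.1 : ℕ) < s ∧ s ≤ (idx e.2 : ℕ) with hE
  have hcard : s * s ≤ E.card := by
    have h1 : Finset.range s ×ˢ Finset.Ico s r ⊆
        E.image fun e => ((idx e.1 : ℕ), (idx e.2 : ℕ)) := by
      rintro ⟨i, j⟩ hij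
      simp only [Finset.mem_product, Finset.mem_range, Finset.mem_Ico] at hij
      obtain ⟨u, hu, w, hw, huw⟩ := he ⟨i, by omega⟩ ⟨j, hij.2.2⟩ (by
        intro e; have := congrArg Fin.val e; simp only at this; omega)
      have hu' := huniq u _ hu
      have hw' := huniq w _ hw
      refine Finset.mem_image.2 ⟨(u, w), ?_, ?_⟩
      · simp only [hE, Finset.mem_filter, Finset.mem_univ, true_and]
        refine ⟨huw, ?_, ?_⟩
        · rw [← hu']; exact hij.1
        · rw [← hw']; exact hij.2.1
      · simp only [← hu', ← hw']
    have h2 := (Finset.card_le_card h1).trans Finset.card_image_le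
    rw [Finset.card_product, Finset.card_range, Nat.card_Ico] at h2
    refine le_trans (Nat.mul_le_mul_left s ?_) h2
    omega
  have hvc : vc E ≤ 2 * n := by
    have h1 : (E.image Prod.fst).card ≤ n := by
      simpa using Finset.card_le_univ (E.image Prod.fst)
    have h2 : (E.image Prod.snd).card ≤ n := by
      simpa using Finset.card_le_univ (E.image Prod.snd)
    unfold vc; omega
  set D := r / (20 * k) with hD
  have hD1 : D * (20 * k) ≤ r := Nat.div_mul_le_self _ _
  have hD2 : r < (D + 1) * (20 * k) := by
    have := Nat.lt_div_mul_add (a := r) (b := 20 * k) (by omega)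
    rw [← hD] at this
    linarith
  have hlt : D * vc E < E.card := by
    have h1 : D * vc E ≤ D * (2 * (r * k)) := Nat.mul_le_mul_left _ (by omega)
    have h2 : 10 * (D * (2 * (r * k))) ≤ r * r := by nlinarith
    have h3 : r * r ≤ 9 * (s * s) := by nlinarith
    have h4 : 0 < s * s := by
      have : 0 < s := by omega
      positivity
    omega
  obtain ⟨E', hs', ⟨⟨v, v'⟩, hv⟩, hd⟩ := min_deg D E hlt
  have hE' : ∀ x y, (x, y) ∈ E' → G.Adj x y ∧ (idx x : ℕ) < s ∧ s ≤ (idx y : ℕ) := by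
    intro x y hxy
    exact (Finset.mem_filter.1 (hs' hxy)).2
  by_cases hbig : 960 ≤ D + 1
  · have hc := core hG (fun w => Finset.univ.filter fun z => (w, z) ∈ E' ∨ (z, w) ∈ E')
      (by
        intro w z h
        simp only [Finset.mem_filter, Finset.mem_univ, true_and] at h ⊢
        exact h.symm)
      (by
        intro w z h
        simp only [Finset.mem_filter, Finset.mem_univ, true_and] at h
        rcases h with h | h
        · exact (hE' _ _ h).1
        · exact (hE' _ _ h).1.symm)
      (fun w => decide ((idx w : ℕ) < s))
      (by
        intro w z h
        simp only [Finset.mem_filter, Finset.mem_univ, true_and] at h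
        rcases h with h | h
        · have := hE' _ _ h
          have h1 : ¬ (idx z : ℕ) < s := by omega
          simp only [h1, this.2.1, decide_true, decide_false, Bool.not_true]
        · have := hE' _ _ h
          have h1 : ¬ (idx w : ℕ) < s := by omega
          simp only [h1, this.2.1, decide_true, decide_false, Bool.not_false])
      v ⟨v', by simp [hv]⟩ (D + 1)
      (by
        rintro w ⟨z, h⟩
        simp only [Finset.mem_filter, Finset.mem_univ, true_and] at h
        rcases h with h | h
        · refine le_trans (hd _ _ h).1 (Finset.card_le_card ?_)
          intro y hy
          simp [mem_nR.1 hy]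
        · refine le_trans (hd _ _ h).2 (Finset.card_le_card ?_)
          intro y hy
          simp [mem_nL.1 hy]) hbig
    rw [Fintype.card_fin] at hc
    have h1 : r ^ 4 ≤ ((D + 1) * (20 * k)) ^ 4 := Nat.pow_le_pow_left hD2.le 4
    have h2 : r * r ^ 3 ≤ r * (19200 ^ 3 * k ^ 5) := by
      calc r * r ^ 3 = r ^ 4 := by ring
        _ ≤ ((D + 1) * (20 * k)) ^ 4 := h1
        _ = (D + 1) ^ 4 * (20 * k) ^ 4 := by ring
        _ ≤ (240 ^ 3 * (r * k)) * (20 * k) ^ 4 :=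
          Nat.mul_le_mul_right _ (hc.trans (Nat.mul_le_mul_left _ hn))
        _ = (240 ^ 3 * 20 ^ 4) * (r * k ^ 5) := by ring
        _ ≤ 19200 ^ 3 * (r * k ^ 5) := Nat.mul_le_mul_right _ (by norm_num)
        _ = r * (19200 ^ 3 * k ^ 5) := by ring
    exact Nat.le_of_mul_le_mul_left h2 (by omega)
  · have h1 : r ≤ 19200 * k := by
      have : (D + 1) * (20 * k) ≤ 960 * (20 * k) := Nat.mul_le_mul_right _ (by omega)
      linarith
    calc r ^ 3 ≤ (19200 * k) ^ 3 := Nat.pow_le_pow_left h1 3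
      _ = 19200 ^ 3 * k ^ 3 := by ring
      _ ≤ 19200 ^ 3 * k ^ 5 := Nat.mul_le_mul_left _ (Nat.pow_le_pow_right hk1 (by norm_num))

theorem lower (r : ℕ) (hr : 2 ≤ r) :
    1 / 19200 * (r : ℝ) ^ ((3 : ℝ) / 5) ≤ (fGraph theta34 r : ℝ) := by
  have hne : {k | ∃ (n : ℕ) (G : SimpleGraph (Fin n)),
      ¬ ContainsSub theta34 G ∧ IsRKGraph G r k}.Nonempty := by
    obtain ⟨p, hp1, hp⟩ := Nat.exists_infinite_primes (r + 3)
    exact ⟨_, upper_p p hp (by omega) r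
      (le_trans (by omega) (Nat.le_self_pow (by norm_num) p))⟩
  obtain ⟨n, G, hG, h⟩ := Nat.sInf_mem hne
  have hl := lower_nat n G hG r _ hr h
  change r ^ 3 ≤ 19200 ^ 3 * (fGraph theta34 r) ^ 5 at hl
  set k := fGraph theta34 r
  have hl' : (r : ℝ) ^ 3 ≤ 19200 ^ 3 * (k : ℝ) ^ 5 := by exact_mod_cast hl
  have ht : ((r : ℝ) ^ ((3 : ℝ) / 5)) ^ 5 = (r : ℝ) ^ 3 := by
    rw [← Real.rpow_natCast, ← Real.rpow_mul (by positivity), ← Real.rpow_natCast]; norm_num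
  have h5 : ((r : ℝ) ^ ((3 : ℝ) / 5)) ^ 5 ≤ (19200 * (k : ℝ)) ^ 5 := by
    rw [ht, mul_pow]
    refine hl'.trans (mul_le_mul_of_nonneg_right (by norm_num) (by positivity))
  have := (pow_le_pow_iff_left₀ (by positivity) (by positivity) (by norm_num)).1 h5
  linarith

end ThetaAux

/-- There exist `c, C > 0` such that for all sufficiently large `r`,
`c·r^{3/5} ≤ f(r, θ_{3,4}) ≤ C·r^{3/5}`. -/
theorem stmt5 :
    ∃ (c C : ℝ) (r₀ : ℕ), 0 < c ∧ 0 < C ∧ ∀ r : ℕ, r₀ ≤ r →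
      c * (r : ℝ) ^ ((3 : ℝ) / 5) ≤ (fGraph theta34 r : ℝ) ∧
      (fGraph theta34 r : ℝ) ≤ C * (r : ℝ) ^ ((3 : ℝ) / 5) := by
  exact ⟨1 / 19200, 1024, 2, by norm_num, by norm_num, fun r hr =>
    ⟨ThetaAux.lower r hr, ThetaAux.upper r (by omega)⟩⟩
end

section
/- Let m ≥ 2 and t ≥ m be integers, and let 𝓗 be a family of connected m-uniform hypergraphs each having more than t vertices. For every real ε > 0 there exists r₀ such that for all integers r ≥ r₀ one has f_m(r, 𝓗) ≤ (1 + ε) · binom(r−1, m−1)/binom(t−1, m−1). -/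
/-- An `m`-uniform edge set: every edge has exactly `m` vertices. -/
def IsUniform (m : ℕ) {n : ℕ} (E : Finset (Finset (Fin n))) : Prop :=
  ∀ e ∈ E, e.card = m

/-- The hypergraph with edge set `GE` contains a subhypergraph isomorphic to the
hypergraph with edge set `HE`: there is an injection of vertices sending every edge
of `HE` to an edge of `GE`. -/
def HypContains {n N : ℕ} (HE : Finset (Finset (Fin n))) (GE : Finset (Finset (Fin N))) : Prop :=
  ∃ f : Fin n → Fin N, Function.Injective f ∧ ∀ e ∈ HE, e.image f ∈ GE

/-- The hypergraph with edge set `GE` is an `(r,k)`-hypergraph (`m`-uniform setting):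
its vertex set can be partitioned into `r` parts of size at most `k` so that for every
`m`-element set of parts there is an edge meeting each of those parts in exactly one vertex. -/
def IsRKHyper {N : ℕ} (GE : Finset (Finset (Fin N))) (m r k : ℕ) : Prop :=
  ∃ P : Fin r → Finset (Fin N),
    (∀ v : Fin N, ∃! i, v ∈ P i) ∧
    (∀ i, (P i).card ≤ k) ∧
    ∀ S : Finset (Fin r), S.card = m → ∃ e ∈ GE, ∀ i ∈ S, (e ∩ P i).card = 1

/-- A hypergraph: a number of vertices together with an edge set. -/
abbrev Hyp := (n : ℕ) × Finset (Finset (Fin n))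

/-- `f_m(r, ℋ)`: the minimum `k` for which there is an `ℋ`-free `m`-uniform
`(r,k)`-hypergraph. -/
noncomputable def fHyper (m r : ℕ) (ℋ : Set Hyp) : ℕ :=
  sInf {k | ∃ (N : ℕ) (GE : Finset (Finset (Fin N))),
    IsUniform m GE ∧ (∀ H ∈ ℋ, ¬ HypContains H.2 GE) ∧ IsRKHyper GE m r k}

/-- A hypergraph is connected: any two vertices are joined by a sequence of steps within
common edges. -/
def HypConnected (H : Hyp) : Prop :=
  ∀ u v : Fin H.1, Relation.ReflTransGen (fun x y => ∃ e ∈ H.2, x ∈ e ∧ y ∈ e) u v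


open Finset Polynomial in
lemma rk_interp {ι R : Type*} [DecidableEq ι] [CommRing R] (θ : ι → R)
    (hθ : ∀ i j, i ≠ j → IsUnit (θ i - θ j)) (y : ι → R) (M : Finset ι) :
    ∃ p : R[X], p.degree < (M.card : WithBot ℕ) ∧ ∀ i ∈ M, p.eval (θ i) = y i := by
  nontriviality R
  induction M using Finset.induction_on with
  | empty => exact ⟨0, by simp, by simp⟩
  | insert i M hi ih =>
    obtain ⟨p, hp, hpe⟩ := ih
    have hu : IsUnit (∏ j ∈ M, (θ i - θ j)) := by
      rw [IsUnit.prod_iff]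
      intro j hj
      exact hθ i j (by rintro rfl; exact hi hj)
    obtain ⟨w, hw⟩ := hu
    refine ⟨p + C ((y i - p.eval (θ i)) * (↑w⁻¹ : R)) * ∏ j ∈ M, (X - C (θ j)), ?_, ?_⟩
    · rw [card_insert_of_notMem hi]
      refine lt_of_le_of_lt (degree_add_le _ _) (max_lt ?_ ?_)
      · exact hp.trans (by exact_mod_cast Nat.lt_succ_self _)
      · refine lt_of_le_of_lt ((degree_mul_le _ _).trans
          (add_le_add degree_C_le le_rfl)) ?_
        rw [zero_add]
        rw [degree_prod_of_monic _ _ (fun j _ => monic_X_sub_C _)]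
        simp only [degree_X_sub_C, sum_const, nsmul_eq_mul, mul_one]
        exact_mod_cast Nat.lt_succ_self _
    · intro j hj
      rw [mem_insert] at hj
      rcases hj with rfl | hj
      · simp only [eval_add, eval_mul, eval_C, eval_prod, eval_sub, eval_X]
        rw [← hw, mul_assoc, Units.inv_mul]; ring
      · simp only [eval_add, eval_mul, eval_C, eval_prod, eval_sub, eval_X]
        rw [prod_eq_zero hj (sub_self _), hpe j hj]; ring

open Finset Polynomial in
lemma rk_vanish {ι R : Type*} [DecidableEq ι] [CommRing R] (θ : ι → R)
    (hθ : ∀ i j, i ≠ j → IsUnit (θ i - θ j)) (M : Finset ι) (p : R[X])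
    (hp : p.natDegree ≤ M.card) (h0 : ∀ i ∈ M, p.eval (θ i) = 0) :
    ∃ α : R, p = C α * ∏ j ∈ M, (X - C (θ j)) := by
  nontriviality R
  have hmon : (∏ j ∈ M, (X - C (θ j))).Monic := monic_prod_of_monic _ _ (fun j _ => monic_X_sub_C _)
  have hd : (∏ j ∈ M, (X - C (θ j))) ∣ p := by
    apply Finset.prod_dvd_of_coprime
    · intro i _ j _ hij
      exact isCoprime_X_sub_C_of_isUnit_sub (hθ i j hij)
    · intro i hi
      exact dvd_iff_isRoot.2 (h0 i hi)
  obtain ⟨q, rfl⟩ := hd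
  by_cases hq : q = 0
  · exact ⟨0, by simp [hq]⟩
  have hdeg : (∏ j ∈ M, (X - C (θ j))).natDegree = M.card := by
    rw [natDegree_prod_of_monic _ _ (fun j _ => monic_X_sub_C _)]; simp
  rw [hmon.natDegree_mul' hq, hdeg] at hp
  have : q.natDegree = 0 := by omega
  refine ⟨q.coeff 0, ?_⟩
  rw [← eq_C_of_natDegree_eq_zero this, mul_comm]

open Finset Polynomial in
lemma rk_G_coeff {ι R : Type*} [DecidableEq ι] [CommRing R] (θ : ι → R) (M : Finset ι) :
    (∏ j ∈ M, (X - C (θ j))).coeff M.card = 1 := by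
  nontriviality R
  have hmon : (∏ j ∈ M, (X - C (θ j))).Monic := monic_prod_of_monic _ _ (fun j _ => monic_X_sub_C _)
  have hdeg : (∏ j ∈ M, (X - C (θ j))).natDegree = M.card := by
    rw [natDegree_prod_of_monic _ _ (fun j _ => monic_X_sub_C _)]; simp
  have := hmon.coeff_natDegree
  rwa [hdeg] at this

/-- The affine code attached to a `t`-set `T`. -/
structure RkCode {ι R : Type*} [DecidableEq ι] [CommRing R] (θ u : ι → R) (m : ℕ)
    (c : Finset ι → R) (T : Finset ι) (a : R) (p : Finset ι → Polynomial R) : Prop where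
  deg : ∀ S, (p S).natDegree ≤ m
  out : ∀ S, S ∉ T.powersetCard m → (p S).coeff m = 0
  tot : ∑ S ∈ T.powersetCard m, (p S).coeff m = 0
  lab : ∀ S ∈ T.powersetCard m, ∑ i ∈ S, u i * (p S).eval (θ i) = a + c S

open Finset Polynomial in
lemma rk_exists {ι R : Type*} [DecidableEq ι] [CommRing R] (θ u : ι → R) (m : ℕ)
    (hθ : ∀ i j, i ≠ j → IsUnit (θ i - θ j))
    (hδ : ∀ M S : Finset ι, M.card = m → S.card = m → M ≠ S →
      IsUnit (∑ i ∈ S, u i * ∏ j ∈ M, (θ i - θ j)))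
    (c : Finset ι → R) (T M : Finset ι) (hM : M ∈ T.powersetCard m)
    (y : ι → Finset ι → R) :
    ∃ p, RkCode θ u m c T (∑ i ∈ M, u i * y i M - c M) p ∧
      ∀ i ∈ M, ∀ S, (p S).eval (θ i) = y i S := by
  have hMc := (mem_powersetCard.1 hM).2
  choose q hq hqe using fun S => rk_interp θ hθ (fun i => y i S) M
  set G : R[X] := ∏ j ∈ M, (X - C (θ j)) with hG
  have hGc : G.coeff m = 1 := by rw [← hMc]; exact rk_G_coeff θ M
  have hGd : G.natDegree ≤ m := by
    rw [← hMc]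
    refine (natDegree_prod_le _ _).trans ?_
    refine (sum_le_card_nsmul _ _ 1 fun j _ => natDegree_X_sub_C_le _).trans (by simp)
  have hGe : ∀ i, G.eval (θ i) = ∏ j ∈ M, (θ i - θ j) := by
    intro i; simp [hG, eval_prod]
  have hG0 : ∀ i ∈ M, G.eval (θ i) = 0 := by
    intro i hi; rw [hGe]; exact prod_eq_zero hi (sub_self _)
  set a := ∑ i ∈ M, u i * y i M - c M with ha
  have hβ : ∀ S : Finset ι, ∃ β : R, S.card = m → M ≠ S →
      ∑ i ∈ S, u i * (q S + C β * G).eval (θ i) = a + c S := by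
    intro S
    by_cases h : S.card = m ∧ M ≠ S
    · obtain ⟨w, hw⟩ := hδ M S hMc h.1 h.2
      refine ⟨(a + c S - ∑ i ∈ S, u i * (q S).eval (θ i)) * (↑w⁻¹ : R), fun _ _ => ?_⟩
      set β := (a + c S - ∑ i ∈ S, u i * (q S).eval (θ i)) * (↑w⁻¹ : R) with hb
      have : ∑ i ∈ S, u i * (q S + C β * G).eval (θ i)
          = ∑ i ∈ S, u i * (q S).eval (θ i) + β * ∑ i ∈ S, u i * ∏ j ∈ M, (θ i - θ j) := by
        rw [mul_sum, ← sum_add_distrib]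
        refine sum_congr rfl fun i _ => ?_
        rw [eval_add, eval_mul, eval_C, hGe]; ring
      rw [this, ← hw, hb, mul_assoc, Units.inv_mul]; ring
    · exact ⟨0, fun h1 h2 => absurd ⟨h1, h2⟩ h⟩
  choose β hβ using hβ
  let α : Finset ι → R := fun S =>
    if S = M then - ∑ S ∈ (T.powersetCard m).erase M, β S
    else if S ∈ T.powersetCard m then β S else 0
  have hco : ∀ S, (q S + C (α S) * G).coeff m = α S := by
    intro S
    rw [coeff_add, coeff_C_mul, hGc, coeff_eq_zero_of_degree_lt (by rw [← hMc]; exact hq S)]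
    ring
  refine ⟨fun S => q S + C (α S) * G, ⟨?_, ?_, ?_, ?_⟩, ?_⟩
  · intro S
    refine (natDegree_add_le _ _).trans (max_le ?_ ((natDegree_C_mul_le _ _).trans hGd))
    rw [← hMc]
    exact natDegree_le_of_degree_le (hq S).le
  · intro S hS
    rw [hco]
    have : S ≠ M := by rintro rfl; exact hS hM
    simp only [α, if_neg this, if_neg hS]
  · simp only [hco]
    rw [← add_sum_erase _ _ hM]
    have : ∑ S ∈ (T.powersetCard m).erase M, α S = ∑ S ∈ (T.powersetCard m).erase M, β S := by
      refine sum_congr rfl fun S hS => ?_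
      rw [mem_erase] at hS
      simp only [α, if_neg hS.1, if_pos hS.2]
    rw [this]; simp [α]
  · intro S hS
    by_cases h : S = M
    · subst h
      rw [ha]
      have : ∑ i ∈ S, u i * (q S + C (α S) * G).eval (θ i) = ∑ i ∈ S, u i * y i S := by
        refine sum_congr rfl fun i hi => ?_
        rw [eval_add, eval_mul, hG0 i hi, hqe S i hi]; ring
      rw [this]; ring
    · have := hβ S (mem_powersetCard.1 hS).2 (Ne.symm h)
      simp only [α, if_neg h, if_pos hS]
      exact this
  · intro i hi S
    simp only []
    rw [eval_add, eval_mul, hG0 i hi, hqe S i hi]; ring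

open Finset Polynomial in
lemma rk_unique {ι R : Type*} [DecidableEq ι] [CommRing R] (θ u : ι → R) (m : ℕ)
    (hθ : ∀ i j, i ≠ j → IsUnit (θ i - θ j))
    (hδ : ∀ M S : Finset ι, M.card = m → S.card = m → M ≠ S →
      IsUnit (∑ i ∈ S, u i * ∏ j ∈ M, (θ i - θ j)))
    (c : Finset ι → R) (T M : Finset ι) (hM : M ∈ T.powersetCard m)
    (a : R) (p p' : Finset ι → R[X])
    (hp : RkCode θ u m c T a p) (hp' : RkCode θ u m c T a p')
    (h : ∀ i ∈ M, ∀ S, (p S).eval (θ i) = (p' S).eval (θ i)) : p = p' := by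
  have hMc := (mem_powersetCard.1 hM).2
  have key : ∀ S, ∃ α : R, p S - p' S = C α * ∏ j ∈ M, (X - C (θ j)) := by
    intro S
    apply rk_vanish θ hθ
    · rw [hMc]
      exact (natDegree_sub_le _ _).trans (max_le (hp.deg S) (hp'.deg S))
    · intro i hi; rw [eval_sub, h i hi S, sub_self]
  choose α hα using key
  have hco : ∀ S, (p S).coeff m - (p' S).coeff m = α S := by
    intro S
    rw [← coeff_sub, hα, coeff_C_mul, ← hMc, rk_G_coeff, mul_one]
  have h0 : ∀ S, S ≠ M → α S = 0 := by
    intro S hS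
    by_cases hST : S ∈ T.powersetCard m
    · have e1 := hp.lab S hST
      have e2 := hp'.lab S hST
      have : α S * ∑ i ∈ S, u i * ∏ j ∈ M, (θ i - θ j) = 0 := by
        have e3 : ∑ i ∈ S, u i * (p S - p' S).eval (θ i) = 0 := by
          simp only [eval_sub, mul_sub, sum_sub_distrib, e1, e2, sub_self]
        rw [← e3, mul_sum]
        refine sum_congr rfl fun i _ => ?_
        rw [hα, eval_mul, eval_C, eval_prod]
        simp only [eval_sub, eval_X, eval_C]; ring
      exact (hδ M S hMc (mem_powersetCard.1 hST).2 hS.symm).mul_left_eq_zero.1 this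
    · rw [← hco, hp.out S hST, hp'.out S hST, sub_self]
  have hM0 : α M = 0 := by
    have : ∑ S ∈ T.powersetCard m, α S = 0 := by
      simp only [← hco, sum_sub_distrib, hp.tot, hp'.tot, sub_self]
    rw [← add_sum_erase _ _ hM, sum_eq_zero (fun S hS => h0 S (mem_erase.1 hS).1), add_zero] at this
    exact this
  funext S
  have : α S = 0 := by
    by_cases hS : S = M
    · rw [hS, hM0]
    · exact h0 S hS
  have := hα S
  rw [‹α S = 0›, C_0, zero_mul, sub_eq_zero] at this
  exact this

open Finset in
lemma rk_fHyper_le (m t : ℕ) (ht : m ≤ t) (ℋ : Set Hyp)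
    (hconn : ∀ H ∈ ℋ, HypConnected H) (hcard : ∀ H ∈ ℋ, t < H.1)
    {V : Type} [Fintype V] [DecidableEq V] (𝓑 : Finset (Finset V))
    (hB : ∀ b ∈ 𝓑, b.card ≤ t) (hcov : ∀ e : Finset V, e.card = m → ∃ b ∈ 𝓑, e ⊆ b)
    (k : ℕ) (hdeg : ∀ v, (𝓑.filter (v ∈ ·)).card ≤ k) (r : ℕ) (hr : r ≤ Fintype.card V) :
    fHyper m r ℋ ≤ k := by
  classical
  obtain ⟨g⟩ : Nonempty (Fin r ↪ V) :=
    Function.Embedding.nonempty_of_card_le (by simpa using hr)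
  let U := {p : Finset V × Fin r // p.1 ∈ 𝓑 ∧ g p.2 ∈ p.1}
  let e : U ≃ Fin (Fintype.card U) := Fintype.equivFin U
  apply Nat.sInf_le
  refine ⟨Fintype.card U, univ.filter (fun E => E.card = m ∧ ∃ b ∈ 𝓑, ∀ x ∈ E, (e.symm x).1.1 = b),
    ?_, ?_, ?_⟩
  · intro E hE
    exact (mem_filter.1 hE).2.1
  · rintro H hH ⟨f, hf, hfe⟩
    have hc := hconn H hH
    have hn := hcard H hH
    have hstep : ∀ x y : Fin H.1, Relation.ReflTransGen (fun x y => ∃ e ∈ H.2, x ∈ e ∧ y ∈ e) x y →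
        (e.symm (f x)).1.1 = (e.symm (f y)).1.1 := by
      intro x y hxy
      induction hxy with
      | refl => rfl
      | tail _ h ih =>
        obtain ⟨E, hE, hx, hy⟩ := h
        obtain ⟨-, b, -, hb⟩ := (mem_filter.1 (hfe E hE)).2
        rw [ih, hb _ (mem_image_of_mem f hx), hb _ (mem_image_of_mem f hy)]
    let z : Fin H.1 := ⟨0, by omega⟩
    have h1 : (univ : Finset (Fin H.1)).card ≤ ((e.symm (f z)).1.1).card := by
      apply card_le_card_of_injOn (fun x => g (e.symm (f x)).1.2)
      · intro x _
        have := (e.symm (f x)).2.2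
        rw [hstep z x (hc z x)]
        exact this
      · intro x _ y _ hxy
        have h2 : (e.symm (f x)).1.2 = (e.symm (f y)).1.2 := g.injective hxy
        have h3 := hstep x y (hc x y)
        exact hf (e.symm.injective (Subtype.ext (Prod.ext h3 h2)))
    have h2 := hB _ (e.symm (f z)).2.1
    rw [card_univ, Fintype.card_fin] at h1
    omega
  · refine ⟨fun i => univ.filter (fun x => (e.symm x).1.2 = i), ?_, ?_, ?_⟩
    · intro v
      exact ⟨(e.symm v).1.2, by simp, by intro j hj; exact (mem_filter.1 hj).2.symm⟩
    · intro i
      refine le_trans ?_ (hdeg (g i))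
      apply card_le_card_of_injOn (fun x => (e.symm x).1.1)
      · intro x hx
        have hx : (e.symm x).1.2 = i := by simpa using hx
        have := (e.symm x).2
        rw [hx] at this
        simpa using this
      · intro x hx y hy hxy
        have hx : (e.symm x).1.2 = i := by simpa using hx
        have hy : (e.symm y).1.2 = i := by simpa using hy
        exact e.symm.injective (Subtype.ext (Prod.ext hxy (hx.trans hy.symm)))
    · intro S hS
      obtain ⟨b, hb, hSb⟩ := hcov (S.map g) (by rw [card_map, hS])
      have hmem : ∀ i ∈ S, g i ∈ b := fun i hi => hSb (mem_map_of_mem g hi)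
      let φ : {i // i ∈ S} → Fin (Fintype.card U) := fun i => e ⟨(b, i.1), hb, hmem i.1 i.2⟩
      have hφ : Function.Injective φ := by
        intro i j hij
        have : i.1 = j.1 := congrArg (fun z : U => z.1.2) (e.injective hij)
        exact Subtype.ext this
      refine ⟨S.attach.image φ, ?_, ?_⟩
      · simp only [mem_filter, mem_univ, true_and]
        refine ⟨by rw [card_image_of_injective _ hφ, card_attach, hS], b, hb, ?_⟩
        intro x hx
        obtain ⟨i, -, rfl⟩ := mem_image.1 hx
        simp [φ]
      · intro i hi
        rw [card_eq_one]
        refine ⟨φ ⟨i, hi⟩, ?_⟩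
        ext x
        simp only [mem_inter, mem_image, mem_attach, true_and, mem_filter, mem_univ, mem_singleton]
        constructor
        · rintro ⟨⟨j, rfl⟩, hj⟩
          have : j.1 = i := by simpa [φ] using hj
          congr 1
          exact Subtype.ext this
        · rintro rfl
          exact ⟨⟨_, rfl⟩, by simp [φ]⟩

open Finset Polynomial in
lemma rk_consts (N m : ℕ) : ∃ (Δ : ℕ) (u : Fin N → ℤ), 0 < Δ ∧ ∀ j : ℕ,
    (∀ i, IsUnit ((u i : ℤ) : ZMod (1 + Δ * j))) ∧
    (∀ i i' : Fin N, i ≠ i' → IsUnit (((i : ℕ) : ZMod (1 + Δ * j)) - ((i' : ℕ) : ZMod (1 + Δ * j)))) ∧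
    (∀ M S : Finset (Fin N), M.card = m → S.card = m → M ≠ S →
      IsUnit (∑ i ∈ S, ((u i : ℤ) : ZMod (1 + Δ * j)) *
        ∏ l ∈ M, (((i : ℕ) : ZMod (1 + Δ * j)) - ((l : ℕ) : ZMod (1 + Δ * j))))) := by
  classical
  let Q : Finset (Fin N) → Finset (Fin N) → ℤ[X] := fun M S =>
    ∑ i ∈ S, X ^ (i : ℕ) * C (∏ l ∈ M, (((i : ℕ) : ℤ) - ((l : ℕ) : ℤ)))
  have hQ : ∀ M S : Finset (Fin N), M.card = m → S.card = m → M ≠ S → Q M S ≠ 0 := by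
    intro M S hM hS hne h0
    have : ∃ i ∈ S, i ∉ M := by
      by_contra! hcon
      exact hne (eq_of_subset_of_card_le hcon (by omega)).symm
    obtain ⟨i, hiS, hiM⟩ := this
    have hc := congrArg (fun q => q.coeff (i : ℕ)) h0
    simp only [Q, finsetSum_coeff, coeff_mul_C, coeff_X_pow, coeff_zero] at hc
    rw [sum_eq_single i] at hc
    · simp only [if_true, one_mul] at hc
      rw [prod_eq_zero_iff] at hc
      obtain ⟨l, hl, hl0⟩ := hc
      have : i = l := by apply Fin.ext; omega
      exact hiM (this ▸ hl)
    · intro b _ hb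
      rw [if_neg (by intro h; exact hb (Fin.ext h.symm)), zero_mul]
    · intro h; exact absurd hiS h
  let Z := (univ : Finset (Finset (Fin N) × Finset (Fin N))).filter
    (fun z => z.1.card = m ∧ z.2.card = m ∧ z.1 ≠ z.2)
  have hP : (X * ∏ z ∈ Z, Q z.1 z.2 : ℤ[X]) ≠ 0 := by
    apply mul_ne_zero X_ne_zero
    rw [prod_ne_zero_iff]
    intro z hz
    have := (mem_filter.1 hz).2
    exact hQ _ _ this.1 this.2.1 this.2.2
  obtain ⟨B, hB⟩ : ∃ B : ℤ, (X * ∏ z ∈ Z, Q z.1 z.2 : ℤ[X]).eval B ≠ 0 := by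
    by_contra! hcon
    exact hP (Polynomial.funext (by simpa using hcon))
  rw [eval_mul, eval_X, eval_prod] at hB
  let Y := (univ : Finset (Fin N × Fin N)).filter (fun z => z.1 ≠ z.2)
  let E : ℤ := (B * ∏ z ∈ Z, (Q z.1 z.2).eval B) * ∏ z ∈ Y, (((z.1 : ℕ) : ℤ) - ((z.2 : ℕ) : ℤ))
  have hE : E ≠ 0 := by
    apply mul_ne_zero hB
    rw [prod_ne_zero_iff]
    intro z hz h0
    exact (mem_filter.1 hz).2 (Fin.ext (by omega))
  have hunit : ∀ (x : ℤ) (j : ℕ), x ∣ E → IsUnit ((x : ℤ) : ZMod (1 + E.natAbs * j)) := by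
    intro x j hx
    rw [ZMod.coe_int_isUnit_iff_isCoprime]
    have h1 : x ∣ (E.natAbs : ℤ) * j := (Int.dvd_natAbs.2 hx).mul_right _
    obtain ⟨w, hw⟩ := h1
    refine ⟨1, -w, ?_⟩
    push_cast at hw ⊢
    linarith
  refine ⟨E.natAbs, fun i => B ^ (i : ℕ), Int.natAbs_pos.2 hE, fun j => ⟨?_, ?_, ?_⟩⟩
  · intro i
    rw [Int.cast_pow]
    apply IsUnit.pow
    apply hunit
    exact ((dvd_mul_right _ _).mul_right _)
  · intro i i' hne
    have := hunit (((i : ℕ) : ℤ) - ((i' : ℕ) : ℤ)) j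
      ((dvd_prod_of_mem (fun z : Fin N × Fin N => (((z.1 : ℕ) : ℤ) - ((z.2 : ℕ) : ℤ)))
        (show (i, i') ∈ Y by simp [Y, hne])).mul_left _)
    push_cast at this
    exact this
  · intro M S hM hS hne
    have := hunit ((Q M S).eval B) j
      (((dvd_prod_of_mem (fun z : Finset (Fin N) × Finset (Fin N) => (Q z.1 z.2).eval B)
        (show (M, S) ∈ Z by simp [Z, hM, hS, hne])).mul_left _).mul_right _)
    convert this using 1
    simp only [Q, eval_finsetSum, eval_mul, eval_pow, eval_X, eval_C]
    push_cast
    rfl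

open Finset in
/-- Labels: the translates of an interval of length `L` cover `ZMod k`. -/
lemma rk_labels (N m t k L : ℕ) [NeZero k] (hmt : m ≤ t)
    (hL : k ≤ L * (N - m).choose (t - m)) :
    ∃ (A : Finset (ZMod k)) (c : Finset (Fin N) → Finset (Fin N) → ZMod k), A.card ≤ L ∧
      ∀ M : Finset (Fin N), M.card = m → ∀ x : ZMod k, ∃ T, M ⊆ T ∧ T.card = t ∧ x - c T M ∈ A := by
  classical
  let F : Finset (Fin N) → List (Finset (Fin N)) := fun M =>
    ((univ : Finset (Finset (Fin N))).filter (fun T => M ⊆ T ∧ T.card = t)).toList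
  have hF : ∀ M : Finset (Fin N), M.card = m → (F M).length = (N - m).choose (t - m) := by
    intro M hM
    simp only [F, length_toList]
    rw [← hM]
    have h1 : (Mᶜ).card = N - M.card := by rw [card_compl, Fintype.card_fin]
    rw [← h1, ← card_powersetCard]
    symm
    apply card_bij (fun S _ => M ∪ S)
    · intro S hS
      obtain ⟨hS1, hS2⟩ := mem_powersetCard.1 hS
      have hd : Disjoint M S := by
        rw [disjoint_left]; intro x hx hx'
        exact (mem_compl.1 (hS1 hx')) hx
      simp only [mem_filter, mem_univ, true_and]
      refine ⟨subset_union_left, ?_⟩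
      rw [card_union_of_disjoint hd]; omega
    · intro S hS S' hS' h
      have h2 : ∀ S ∈ powersetCard (t - M.card) Mᶜ, (M ∪ S) \ M = S := by
        intro S hS
        obtain ⟨hS1, hS2⟩ := mem_powersetCard.1 hS
        ext x
        simp only [mem_sdiff, mem_union]
        constructor
        · tauto
        · intro hx; exact ⟨Or.inr hx, mem_compl.1 (hS1 hx)⟩
      rw [← h2 S hS, ← h2 S' hS', h]
    · intro T hT
      obtain ⟨hMT, hTc⟩ := (mem_filter.1 hT).2
      refine ⟨T \ M, ?_, by rw [union_sdiff_of_subset hMT]⟩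
      rw [mem_powersetCard]
      refine ⟨?_, by rw [card_sdiff_of_subset hMT, hTc]⟩
      intro x hx
      simpa using (mem_sdiff.1 hx).2
  refine ⟨(range L).image (fun n : ℕ => (n : ZMod k)),
    fun T M => ((L * (F M).idxOf T : ℕ) : ZMod k), card_image_le.trans (by simp), ?_⟩
  intro M hM x
  have hx : x.val < L * (F M).length := by rw [hF M hM]; exact (ZMod.val_lt x).trans_le hL
  have hL0 : 0 < L := by
    rcases Nat.eq_zero_or_pos L with h | h
    · simp [h] at hx
    · exact h
  have hi : x.val / L < (F M).length := Nat.div_lt_of_lt_mul hx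
  have hT := List.getElem_mem hi
  refine ⟨(F M)[x.val / L], ?_, ?_, ?_⟩
  · simp only [F, mem_toList, mem_filter] at hT; exact hT.2.1
  · simp only [F, mem_toList, mem_filter] at hT; exact hT.2.2
  · have hn : (F M).Nodup := nodup_toList _
    beta_reduce
    rw [hn.idxOf_getElem]
    rw [mem_image]
    refine ⟨x.val % L, mem_range.2 (Nat.mod_lt _ hL0), ?_⟩
    rw [eq_sub_iff_add_eq, ← Nat.cast_add, add_comm, Nat.div_add_mod]
    simp

open Finset in
lemma rk_deg2 {ι W : Type*} [Fintype ι] [DecidableEq ι] [Fintype W] [DecidableEq W]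
    (m : ℕ) (hm : 2 ≤ m) (v : ι × W) (𝓑 : Finset (Finset (ι × W)))
    (hB : ∀ b ∈ 𝓑, v ∈ b ∧ b.card = m ∧ ∃ x ∈ b, ∃ y ∈ b, x ≠ y ∧ x.1 = y.1) :
    𝓑.card ≤ (Fintype.card ι * Fintype.card W) ^ (m - 2) * ((m - 1) * Fintype.card W) := by
  classical
  let Φ : Finset (ι × W) → Finset (Finset (ι × W)) := fun f =>
    (((insert v f).image Prod.fst) ×ˢ (univ : Finset W)).image (fun u => insert u (insert v f))
  have hsub : 𝓑 ⊆ (powersetCard (m - 2) (univ : Finset (ι × W))).biUnion Φ := by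
    intro b hb
    obtain ⟨hv, hc, x, hx, y, hy, hxy, hfst⟩ := hB b hb
    have key : ∃ u ∈ b, u ≠ v ∧ ∃ z ∈ b, z ≠ u ∧ z.1 = u.1 := by
      by_cases h : x = v
      · exact ⟨y, hy, fun h' => hxy (h.trans h'.symm), x, hx, hxy, hfst⟩
      · exact ⟨x, hx, h, y, hy, hxy.symm, hfst.symm⟩
    obtain ⟨u, hu, huv, z, hz, hzu, hzf⟩ := key
    have hvu : v ∈ b.erase u := mem_erase.2 ⟨huv.symm, hv⟩
    rw [mem_biUnion]
    refine ⟨(b.erase u).erase v, ?_, ?_⟩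
    · rw [mem_powersetCard]
      refine ⟨subset_univ _, ?_⟩
      rw [card_erase_of_mem hvu, card_erase_of_mem hu, hc]; omega
    · simp only [Φ]
      rw [insert_erase hvu, mem_image]
      refine ⟨u, ?_, insert_erase hu⟩
      rw [mem_product]
      exact ⟨mem_image.2 ⟨z, mem_erase.2 ⟨hzu, hz⟩, hzf⟩, mem_univ _⟩
  refine (card_le_card hsub).trans ?_
  refine (card_biUnion_le_card_mul _ _ ((m - 1) * Fintype.card W) ?_).trans ?_
  · intro f hf
    refine card_image_le.trans ?_
    rw [card_product, card_univ]
    refine Nat.mul_le_mul_right _ (card_image_le.trans ((card_insert_le _ _).trans ?_))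
    rw [(mem_powersetCard.1 hf).2]; omega
  · refine Nat.mul_le_mul_right _ ?_
    rw [card_powersetCard, card_univ, Fintype.card_prod]
    exact Nat.choose_le_pow _ _

open Finset in
/-- The block of a codeword. -/
def rkBlock {ι R : Type*} [DecidableEq ι] [DecidableEq R] [Fintype ι] [CommRing R] (θ : ι → R)
    (T : Finset ι) (p : Finset ι → Polynomial R) : Finset (ι × (Finset ι → R)) :=
  T.image (fun i => (i, fun S => (p S).eval (θ i)))

open Finset in
lemma rk_deg1 {ι R : Type*} [Fintype ι] [DecidableEq ι] [Fintype R] [DecidableEq R] [CommRing R]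
    (θ u : ι → R) (m t : ℕ) (hm : 2 ≤ m) (ht : m ≤ t)
    (hu : ∀ i, IsUnit (u i))
    (hθ : ∀ i j, i ≠ j → IsUnit (θ i - θ j))
    (hδ : ∀ M S : Finset ι, M.card = m → S.card = m → M ≠ S →
      IsUnit (∑ i ∈ S, u i * ∏ j ∈ M, (θ i - θ j)))
    (c : Finset ι → R) (T : Finset ι) (hT : T.card = t) (A : Finset R)
    (v : ι × (Finset ι → R)) (𝓑 : Finset (Finset (ι × (Finset ι → R))))
    (hB : ∀ b ∈ 𝓑, v ∈ b ∧ ∃ a ∈ A, ∃ p, RkCode θ u m c T a p ∧ b = rkBlock θ T p) :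
    𝓑.card ≤ A.card * Fintype.card R ^ ((m - 1) * 2 ^ Fintype.card ι - 1) := by
  classical
  rcases 𝓑.eq_empty_or_nonempty with rfl | ⟨b₀, hb₀⟩
  · simp
  have hvT : v.1 ∈ T := by
    obtain ⟨hv, a, -, p, -, rfl⟩ := hB b₀ hb₀
    obtain ⟨i, hi, rfl⟩ := mem_image.1 hv
    exact hi
  obtain ⟨M, hvM, hMT, hMc⟩ : ∃ M, {v.1} ⊆ M ∧ M ⊆ T ∧ M.card = m :=
    exists_subsuperset_card_eq (singleton_subset_iff.2 hvT) (by simp; omega) (by omega)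
  rw [singleton_subset_iff] at hvM
  have hM : M ∈ T.powersetCard m := mem_powersetCard.2 ⟨hMT, hMc⟩
  obtain ⟨i', hi'⟩ : (M.erase v.1).Nonempty := by
    rw [← card_pos, card_erase_of_mem hvM]; omega
  let Z : Finset (ι × Finset ι) := ((M.erase v.1) ×ˢ univ).erase (i', M)
  have hZ : Z.card = (m - 1) * 2 ^ Fintype.card ι - 1 := by
    rw [card_erase_of_mem (by simp only [mem_product, mem_univ, and_true]; exact hi'), card_product,
      card_erase_of_mem hvM, hMc, card_univ, Fintype.card_finset]
  choose! hv a ha p hp hbp using hB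
  have hcard : Fintype.card ({a // a ∈ A} × ({z // z ∈ Z} → R))
      = A.card * Fintype.card R ^ ((m - 1) * 2 ^ Fintype.card ι - 1) := by
    rw [Fintype.card_prod, Fintype.card_fun, Fintype.card_coe, Fintype.card_coe, hZ]
  rw [← hcard, ← Fintype.card_coe]
  apply Fintype.card_le_of_injective
    (fun b : {b // b ∈ 𝓑} => ((⟨a b.1, ha b.1 b.2⟩ : {a // a ∈ A}),
      fun z : {z // z ∈ Z} => (p b.1 z.1.2).eval (θ z.1.1)))
  have hv' : ∀ b ∈ 𝓑, ∀ S, (p b S).eval (θ v.1) = v.2 S := by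
    intro b hb S
    have h1 := hv b hb
    rw [hbp b hb] at h1
    obtain ⟨i, hi, h2⟩ := mem_image.1 h1
    rw [← h2]
  rintro ⟨b, hb⟩ ⟨b', hb'⟩ h
  simp only [Prod.mk.injEq, Subtype.mk.injEq] at h
  obtain ⟨haa, hf⟩ := h
  have hz : ∀ i S, (i, S) ∈ Z → (p b S).eval (θ i) = (p b' S).eval (θ i) := by
    intro i S hiS
    exact congrFun hf ⟨(i, S), hiS⟩
  have h1 : ∀ i ∈ M, ∀ S, (i, S) ≠ (i', M) → (p b S).eval (θ i) = (p b' S).eval (θ i) := by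
    intro i hi S hne
    by_cases hiv : i = v.1
    · rw [hiv, hv' b hb, hv' b' hb']
    · apply hz
      rw [mem_erase, mem_product]
      exact ⟨hne, mem_erase.2 ⟨hiv, hi⟩, mem_univ _⟩
  have hi'M : i' ∈ M := (mem_erase.1 hi').2
  have h2 : (p b M).eval (θ i') = (p b' M).eval (θ i') := by
    have e1 := (hp b hb).lab M hM
    have e2 := (hp b' hb').lab M hM
    rw [haa, ← e2, ← add_sum_erase _ _ hi'M, ← add_sum_erase _ _ hi'M,
      sum_congr rfl (fun i hi => by
        rw [h1 i (mem_erase.1 hi).2 M (fun h => (mem_erase.1 hi).1 (congrArg Prod.fst h))])] at e1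
    exact (hu i').mul_left_cancel (add_right_cancel e1)
  have hpp : p b = p b' := by
    have hpb := hp b hb
    rw [haa] at hpb
    apply rk_unique θ u m hθ hδ c T M hM (a b') _ _ hpb (hp b' hb')
    intro i hi S
    by_cases hne : (i, S) = (i', M)
    · rw [Prod.mk.injEq] at hne
      rw [hne.1, hne.2]; exact h2
    · exact h1 i hi S hne
  apply Subtype.ext
  change b = b'
  rw [hbp b hb, hbp b' hb', hpp]

open Finset in
lemma rk_family (N m t k L : ℕ) [NeZero k] (hm : 2 ≤ m) (ht : m ≤ t)
    (u : Fin N → ZMod k) (hu : ∀ i, IsUnit (u i))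
    (hθ : ∀ i i' : Fin N, i ≠ i' → IsUnit (((i : ℕ) : ZMod k) - ((i' : ℕ) : ZMod k)))
    (hδ : ∀ M S : Finset (Fin N), M.card = m → S.card = m → M ≠ S →
      IsUnit (∑ i ∈ S, u i * ∏ l ∈ M, (((i : ℕ) : ZMod k) - ((l : ℕ) : ZMod k))))
    (hL : k ≤ L * (N - m).choose (t - m)) :
    ∃ 𝓑 : Finset (Finset (Fin N × (Finset (Fin N) → ZMod k))),
      (∀ b ∈ 𝓑, b.card ≤ t) ∧ (∀ e, e.card = m → ∃ b ∈ 𝓑, e ⊆ b) ∧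
      ∀ v, (𝓑.filter (v ∈ ·)).card ≤
        (N - 1).choose (t - 1) * (L * k ^ ((m - 1) * 2 ^ N - 1)) +
        (N * k ^ (2 ^ N)) ^ (m - 2) * ((m - 1) * k ^ (2 ^ N)) := by
  classical
  obtain ⟨A, c, hA, hc⟩ := rk_labels N m t k L ht hL
  let θ : Fin N → ZMod k := fun i => ((i : ℕ) : ZMod k)
  let P : Finset (Fin N) → Finset (Fin N × (Finset (Fin N) → ZMod k)) → Prop := fun T b =>
    ∃ a ∈ A, ∃ p, RkCode θ u m (c T) T a p ∧ b = rkBlock θ T p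
  let Q : Finset (Fin N × (Finset (Fin N) → ZMod k)) → Prop := fun b =>
    b.card = m ∧ ∃ x ∈ b, ∃ y ∈ b, x ≠ y ∧ x.1 = y.1
  refine ⟨univ.filter (fun b => (∃ T, T.card = t ∧ P T b) ∨ Q b), ?_, ?_, ?_⟩
  · intro b hb
    rcases (mem_filter.1 hb).2 with ⟨T, hT, a, _, p, _, rfl⟩ | h
    · exact card_image_le.trans hT.le
    · rw [h.1]; exact ht
  · intro e he
    by_cases hQ : Q e
    · exact ⟨e, by simp [hQ], subset_rfl⟩
    · have hinj : ∀ x ∈ e, ∀ y ∈ e, x.1 = y.1 → x = y := by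
        intro x hx y hy hxy
        by_contra hne
        exact hQ ⟨he, x, hx, y, hy, hne, hxy⟩
      let M := e.image Prod.fst
      have hMc : M.card = m := by
        rw [← he]; exact card_image_of_injOn (fun x hx y hy h => hinj x hx y hy h)
      have hy : ∀ i : Fin N, ∃ w : Finset (Fin N) → ZMod k, i ∈ M → (i, w) ∈ e := by
        intro i
        by_cases hi : i ∈ M
        · obtain ⟨x, hx, rfl⟩ := mem_image.1 hi
          exact ⟨x.2, fun _ => hx⟩
        · exact ⟨0, fun h => absurd h hi⟩
      choose y hy using hy
      obtain ⟨T, hMT, hTc, hTA⟩ := hc M hMc (∑ i ∈ M, u i * y i M)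
      obtain ⟨p, hp, hpe⟩ := rk_exists θ u m hθ hδ (c T) T M (mem_powersetCard.2 ⟨hMT, hMc⟩) y
      refine ⟨rkBlock θ T p, ?_, ?_⟩
      · rw [mem_filter]
        exact ⟨mem_univ _, Or.inl ⟨T, hTc, _, hTA, p, hp, rfl⟩⟩
      · intro x hx
        have hxM : x.1 ∈ M := mem_image_of_mem _ hx
        have h1 : x = (x.1, y x.1) := hinj x hx _ (hy _ hxM) rfl
        rw [rkBlock, mem_image]
        refine ⟨x.1, hMT hxM, ?_⟩
        rw [h1]
        refine Prod.ext rfl ?_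
        funext S
        exact hpe _ hxM S
  · intro v
    have hsub : (univ.filter (fun b => (∃ T, T.card = t ∧ P T b) ∨ Q b)).filter (v ∈ ·) ⊆
        ((powersetCard (t - 1) (univ.erase v.1)).biUnion
          (fun T' => univ.filter (fun b => v ∈ b ∧ P (insert v.1 T') b))) ∪
        univ.filter (fun b => v ∈ b ∧ Q b) := by
      intro b hb
      obtain ⟨hb, hvb⟩ := mem_filter.1 hb
      rw [mem_union]
      rcases (mem_filter.1 hb).2 with ⟨T, hT, hP⟩ | h
      · left
        have hvT : v.1 ∈ T := by
          obtain ⟨a, -, p, -, rfl⟩ := hP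
          obtain ⟨i, hi, rfl⟩ := mem_image.1 hvb
          exact hi
        rw [mem_biUnion]
        refine ⟨T.erase v.1, ?_, ?_⟩
        · rw [mem_powersetCard, card_erase_of_mem hvT, hT]
          exact ⟨erase_subset_erase _ (subset_univ _), rfl⟩
        · rw [insert_erase hvT, mem_filter]
          exact ⟨mem_univ _, hvb, hP⟩
      · right
        rw [mem_filter]
        exact ⟨mem_univ _, hvb, h⟩
    refine (card_le_card hsub).trans ((card_union_le _ _).trans (add_le_add ?_ ?_))
    · refine (card_biUnion_le_card_mul _ _ (L * k ^ ((m - 1) * 2 ^ N - 1)) ?_).trans ?_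
      · intro T' hT'
        obtain ⟨hT1, hT2⟩ := mem_powersetCard.1 hT'
        have hv : v.1 ∉ T' := fun h => (mem_erase.1 (hT1 h)).1 rfl
        have hTc : (insert v.1 T').card = t := by
          rw [card_insert_of_notMem hv, hT2]; omega
        refine (rk_deg1 θ u m t hm ht hu hθ hδ (c (insert v.1 T')) (insert v.1 T') hTc A v _
          (fun b hb => (mem_filter.1 hb).2)).trans ?_
        rw [ZMod.card, Fintype.card_fin]
        exact Nat.mul_le_mul_right _ hA
      · rw [card_powersetCard, card_erase_of_mem (mem_univ _), card_univ, Fintype.card_fin]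
    · refine (rk_deg2 m hm v _ (fun b hb => (mem_filter.1 hb).2)).trans ?_
      rw [Fintype.card_fun, ZMod.card, Fintype.card_fin, Fintype.card_finset, Fintype.card_fin]

lemma rk_bound (m t : ℕ) (hm : 2 ≤ m) (ht : m ≤ t) (ℋ : Set Hyp)
    (hconn : ∀ H ∈ ℋ, HypConnected H) (hcard : ∀ H ∈ ℋ, t < H.1) (N : ℕ) (hN : t ≤ N) :
    ∃ Δ : ℕ, 0 < Δ ∧ ∀ j r : ℕ, r ≤ N * (1 + Δ * j) ^ (2 ^ N) →
      fHyper m r ℋ ≤ (N - 1).choose (t - 1) *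
        (((1 + Δ * j) / (N - m).choose (t - m) + 1) * (1 + Δ * j) ^ ((m - 1) * 2 ^ N - 1)) +
        (N * (1 + Δ * j) ^ (2 ^ N)) ^ (m - 2) * ((m - 1) * (1 + Δ * j) ^ (2 ^ N)) := by
  obtain ⟨Δ, u, hΔ, h⟩ := rk_consts N m
  refine ⟨Δ, hΔ, fun j r hr => ?_⟩
  obtain ⟨h1, h2, h3⟩ := h j
  have : NeZero (1 + Δ * j) := ⟨by omega⟩
  have hC : 0 < (N - m).choose (t - m) := Nat.choose_pos (by omega)
  obtain ⟨𝓑, hb, hcov, hdeg⟩ := rk_family N m t (1 + Δ * j)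
    ((1 + Δ * j) / (N - m).choose (t - m) + 1) hm ht (fun i => (u i : ZMod (1 + Δ * j))) h1 h2 h3
    ((Nat.lt_mul_div_succ _ hC).le.trans (Nat.mul_comm _ _).le)
  refine rk_fHyper_le m t ht ℋ hconn hcard 𝓑 hb hcov _ hdeg r ?_
  rw [Fintype.card_prod, Fintype.card_fun, ZMod.card, Fintype.card_fin, Fintype.card_finset,
    Fintype.card_fin]
  exact hr

lemma rk_bound_real (m t N k F : ℕ) (hm : 2 ≤ m) (ht : m ≤ t) (hN : t ≤ N) (hk : 0 < k)
    (hF : F ≤ (N - 1).choose (t - 1) *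
        ((k / (N - m).choose (t - m) + 1) * k ^ ((m - 1) * 2 ^ N - 1)) +
        (N * k ^ (2 ^ N)) ^ (m - 2) * ((m - 1) * k ^ (2 ^ N))) :
    (F : ℝ) ≤ ((N : ℝ) * k ^ (2 ^ N)) ^ (m - 1) /
        (((m - 1).factorial : ℝ) * ((t - 1).choose (m - 1) : ℝ)) *
      (1 + ((N - m).choose (t - m) : ℝ) / k +
        ((m - 1 : ℕ) : ℝ) * ((m - 1).factorial : ℝ) * ((t - 1).choose (m - 1) : ℝ) / N) := by
  obtain ⟨s, rfl⟩ : ∃ s, m = s + 2 := ⟨m - 2, by omega⟩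
  simp only [Nat.add_sub_cancel, show s + 2 - 1 = s + 1 by omega] at *
  set d := 2 ^ N with hd
  have hdpos : 0 < d := by positivity
  set c := (t - 1).choose (s + 1) with hc
  set C := (N - (s + 2)).choose (t - (s + 2)) with hC
  set B := (N - 1).choose (t - 1) with hB
  have hCpos : 0 < C := Nat.choose_pos (by omega)
  have hcpos : 0 < c := Nat.choose_pos (by omega)
  have hmul : B * c = (N - 1).choose (s + 1) * C := by
    have := Nat.choose_mul (n := N - 1) (k := t - 1) (s := s + 1) (by omega)
    rw [show N - 1 - (s + 1) = N - (s + 2) by omega, show t - 1 - (s + 1) = t - (s + 2) by omega] at this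
    exact this
  have hch : ((N - 1).choose (s + 1) : ℝ) ≤ (N : ℝ) ^ (s + 1) / (s + 1).factorial := by
    refine (Nat.choose_le_pow_div (s + 1) (N - 1)).trans ?_
    gcongr
    omega
  have hmulR : (B : ℝ) * c = ((N - 1).choose (s + 1) : ℝ) * C := by exact_mod_cast hmul
  have hkR : (0 : ℝ) < k := by exact_mod_cast hk
  have hCR : (0 : ℝ) < C := by exact_mod_cast hCpos
  have hcR : (0 : ℝ) < c := by exact_mod_cast hcpos
  have hNR : (0 : ℝ) < N := by exact_mod_cast (by omega : 0 < N)
  have hfR : (0 : ℝ) < ((s + 1).factorial : ℝ) := by exact_mod_cast Nat.factorial_pos _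
  have hdiv : ((k / C : ℕ) : ℝ) ≤ (k : ℝ) / C := Nat.cast_div_le
  have hpow : (k : ℝ) ^ ((s + 1) * d - 1) * k = ((k : ℝ) ^ d) ^ (s + 1) := by
    rw [← pow_succ, ← pow_mul, mul_comm d, Nat.sub_add_cancel]
    exact Nat.mul_pos (by omega) hdpos
  have hF' : (F : ℝ) ≤ B * (((k / C : ℕ) + 1) * k ^ ((s + 1) * d - 1)) +
      (N * k ^ d) ^ s * ((s + 1 : ℕ) * k ^ d) := by exact_mod_cast hF
  have hBe : (B : ℝ) = ((N - 1).choose (s + 1) : ℝ) * C / c := by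
    rw [← hmulR]; field_simp
  have hPe : (k : ℝ) ^ ((s + 1) * d - 1) = ((k : ℝ) ^ d) ^ (s + 1) / k := by
    rw [← hpow]; field_simp
  calc (F : ℝ) ≤ B * (((k / C : ℕ) + 1) * k ^ ((s + 1) * d - 1)) +
      (N * k ^ d) ^ s * ((s + 1 : ℕ) * k ^ d) := hF'
    _ ≤ B * (((k : ℝ) / C + 1) * k ^ ((s + 1) * d - 1)) +
      (N * k ^ d) ^ s * ((s + 1 : ℕ) * k ^ d) := by gcongr
    _ = ((N - 1).choose (s + 1) : ℝ) * (((k : ℝ) ^ d) ^ (s + 1) / c * (1 + C / k)) +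
      (N * k ^ d) ^ s * ((s + 1 : ℕ) * k ^ d) := by
        rw [hBe, hPe]; field_simp
    _ ≤ (N : ℝ) ^ (s + 1) / (s + 1).factorial * (((k : ℝ) ^ d) ^ (s + 1) / c * (1 + C / k)) +
      (N * k ^ d) ^ s * ((s + 1 : ℕ) * k ^ d) := by gcongr
    _ = _ := by
        rw [pow_succ ((N : ℝ) * (k : ℝ) ^ d) s, mul_pow, pow_succ (N : ℝ), pow_succ ((k : ℝ) ^ d)]
        field_simp

lemma rk_eta (s : ℕ) (ε : ℝ) (hε : 0 < ε) :
    ∃ η : ℝ, 0 < η ∧ (1 + η) ^ s * (1 + 2 * η) ≤ 1 + ε := by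
  have hc : Continuous (fun η : ℝ => (1 + η) ^ s * (1 + 2 * η)) := by fun_prop
  have h0 : (fun η : ℝ => (1 + η) ^ s * (1 + 2 * η)) 0 < 1 + ε := by simp; exact hε
  have := (hc.tendsto 0).eventually (gt_mem_nhds h0)
  obtain ⟨δ, hδ, h⟩ := Metric.eventually_nhds_iff.1 this
  refine ⟨δ / 2, by positivity, (h ?_).le⟩
  rw [Real.dist_eq, sub_zero, abs_of_pos (by positivity)]
  linarith

lemma rk_scale (N Δ d J : ℕ) (hN : 0 < N) (hΔ : 0 < Δ) (hd : 0 < d) (η : ℝ) (hη : 0 < η) :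
    ∃ r₀ : ℕ, ∀ r : ℕ, r₀ ≤ r → ∃ j, J ≤ j ∧ r ≤ N * (1 + Δ * j) ^ d ∧
      (N : ℝ) * ((1 + Δ * j : ℕ) : ℝ) ^ d ≤ (1 + η) * r := by
  obtain ⟨ρ, hρ, hρd⟩ := rk_eta d η hη
  have hρd' : (1 + ρ) ^ d ≤ 1 + η := by
    refine le_trans ?_ hρd
    have : 0 < (1 + ρ) ^ d := by positivity
    nlinarith
  obtain ⟨J', hJ'⟩ := exists_nat_ge ((Δ : ℝ) / ρ)
  refine ⟨N * (1 + Δ * (J + J')) ^ d + 1, fun r hr => ?_⟩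
  have hex : ∃ j, r ≤ N * (1 + Δ * j) ^ d := by
    refine ⟨r, ?_⟩
    calc r ≤ 1 + Δ * r := by nlinarith
      _ ≤ (1 + Δ * r) ^ d := Nat.le_self_pow hd.ne' _
      _ ≤ _ := Nat.le_mul_of_pos_left _ hN
  classical
  have hj := Nat.find_spec hex
  have hmin := fun {i} => Nat.find_min hex (m := i)
  set j := Nat.find hex
  have hlt : J + J' < j := by
    by_contra hcon
    push Not at hcon
    have : N * (1 + Δ * j) ^ d ≤ N * (1 + Δ * (J + J')) ^ d := by gcongr
    omega
  refine ⟨j, by omega, hj, ?_⟩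
  obtain ⟨i, hi⟩ : ∃ i, j = i + 1 := ⟨j - 1, by omega⟩
  have h1 := hmin (i := i) (by omega)
  push Not at h1
  have h1' : (N : ℝ) * (1 + Δ * i) ^ d ≤ r := by exact_mod_cast h1.le
  have hk : (1 + Δ * j : ℕ) ≤ (1 + ρ) * (1 + Δ * i : ℝ) := by
    rw [hi]; push_cast
    have hiJ : (J' : ℝ) ≤ i := by exact_mod_cast (by omega : J' ≤ i)
    have h2 : (Δ : ℝ) ≤ ρ * i := by
      rw [div_le_iff₀ hρ] at hJ'
      nlinarith
    have h3 : (1 : ℝ) ≤ Δ := by exact_mod_cast hΔ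
    have h4 : (i : ℝ) ≤ Δ * i := by
      have : (0 : ℝ) ≤ i := by positivity
      nlinarith
    nlinarith
  calc (N : ℝ) * ((1 + Δ * j : ℕ) : ℝ) ^ d ≤ N * ((1 + ρ) * (1 + Δ * i : ℝ)) ^ d := by gcongr
    _ = (1 + ρ) ^ d * (N * (1 + Δ * i : ℝ) ^ d) := by rw [mul_pow]; ring
    _ ≤ (1 + η) * r := by gcongr

/-- Let `m ≥ 2`, `t ≥ m`, and let `ℋ` be a family of connected `m`-uniform hypergraphs
each having more than `t` vertices.  For every `ε > 0` and all sufficiently large `r`,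
`f_m(r, ℋ) ≤ (1+ε)·binom(r−1,m−1)/binom(t−1,m−1)`. -/
theorem stmt7 (m t : ℕ) (hm : 2 ≤ m) (ht : m ≤ t) (ℋ : Set Hyp)
    (hconn : ∀ H ∈ ℋ, HypConnected H)
    (huni : ∀ H ∈ ℋ, IsUniform m H.2)
    (hcard : ∀ H ∈ ℋ, t < H.1)
    (ε : ℝ) (hε : 0 < ε) :
    ∃ r₀ : ℕ, ∀ r : ℕ, r₀ ≤ r →
      (fHyper m r ℋ : ℝ)
        ≤ (1 + ε) * ((Nat.choose (r - 1) (m - 1) : ℝ) / (Nat.choose (t - 1) (m - 1) : ℝ)) := by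
  obtain ⟨η, hη, hηε⟩ := rk_eta (2 * (m - 1)) ε hε
  set K : ℝ := ((m - 1 : ℕ) : ℝ) * ((m - 1).factorial : ℝ) * ((t - 1).choose (m - 1) : ℝ) with hK
  obtain ⟨N₀, hN₀⟩ := exists_nat_ge (K / η)
  set N := N₀ + t with hNdef
  have hNt : t ≤ N := by omega
  have hNpos : (0 : ℝ) < N := by exact_mod_cast (by omega : 0 < N)
  have hKN : K / N ≤ η := by
    rw [div_le_iff₀ hη] at hN₀
    rw [div_le_iff₀ hNpos, hNdef]
    push_cast
    nlinarith [(Nat.cast_nonneg t : (0 : ℝ) ≤ t)]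
  obtain ⟨Δ, hΔ, hbound⟩ := rk_bound m t hm ht ℋ hconn hcard N hNt
  set C := (N - m).choose (t - m) with hC
  obtain ⟨J, hJ⟩ := exists_nat_ge ((C : ℝ) / η)
  obtain ⟨r₁, hr₁⟩ := rk_scale N Δ (2 ^ N) J (by omega) hΔ (by positivity) η hη
  obtain ⟨r₂, hr₂⟩ := exists_nat_ge (((1 + η) * (m : ℝ)) / η)
  refine ⟨max r₁ (max r₂ (m + 1)), fun r hr => ?_⟩
  have hra : r₁ ≤ r := (le_max_left _ _).trans hr
  have hrb : r₂ ≤ r := (le_max_left _ _).trans ((le_max_right _ _).trans hr)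
  have hrc : m + 1 ≤ r := (le_max_right _ _).trans ((le_max_right _ _).trans hr)
  obtain ⟨j, hj, hjr, hjn⟩ := hr₁ r hra
  have hF := rk_bound_real m t N (1 + Δ * j) _ hm ht hNt (by omega) (hbound j r hjr)
  refine hF.trans ?_
  rw [← hC, ← hK]
  set k := 1 + Δ * j with hk
  have hkpos : (0 : ℝ) < k := by exact_mod_cast (by omega : 0 < k)
  have hCk : (C : ℝ) / k ≤ η := by
    rw [div_le_iff₀ hη] at hJ
    rw [div_le_iff₀ hkpos]
    have : (J : ℝ) ≤ k := by exact_mod_cast (by nlinarith : J ≤ k)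
    nlinarith
  have hcpos : (0 : ℝ) < ((t - 1).choose (m - 1) : ℝ) := by
    exact_mod_cast Nat.choose_pos (by omega)
  have hfpos : (0 : ℝ) < ((m - 1).factorial : ℝ) := by exact_mod_cast Nat.factorial_pos _
  set x : ℝ := ((r - 1 + 1 - (m - 1) : ℕ) : ℝ) with hx
  have hxr : x = (r : ℝ) - m + 1 := by
    rw [hx, show r - 1 + 1 - (m - 1) = r + 1 - m by omega, Nat.cast_sub (by omega)]
    push_cast; ring
  have hx0 : 0 < x := by
    have : (m : ℝ) + 1 ≤ r := by exact_mod_cast hrc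
    rw [hxr]; linarith
  have hch : x ^ (m - 1) ≤ ((m - 1).factorial : ℝ) * ((r - 1).choose (m - 1) : ℝ) := by
    rw [← Nat.cast_mul, ← Nat.descFactorial_eq_factorial_mul_choose, hx, ← Nat.cast_pow]
    exact_mod_cast Nat.pow_sub_le_descFactorial (r - 1) (m - 1)
  have hrx : (r : ℝ) ≤ (1 + η) * x := by
    rw [div_le_iff₀ hη] at hr₂
    have : (r₂ : ℝ) ≤ r := by exact_mod_cast hrb
    rw [hxr]
    nlinarith
  have hn : ((N : ℝ) * (k : ℝ) ^ (2 ^ N)) ^ (m - 1) ≤ (1 + η) ^ (2 * (m - 1)) * x ^ (m - 1) := by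
    rw [pow_mul, ← mul_pow]
    refine pow_le_pow_left₀ (by positivity) ?_ _
    calc (N : ℝ) * (k : ℝ) ^ (2 ^ N) ≤ (1 + η) * r := hjn
      _ ≤ (1 + η) * ((1 + η) * x) := by gcongr
      _ = (1 + η) ^ 2 * x := by ring
  calc ((N : ℝ) * (k : ℝ) ^ (2 ^ N)) ^ (m - 1) /
        (((m - 1).factorial : ℝ) * ((t - 1).choose (m - 1) : ℝ)) * (1 + (C : ℝ) / k + K / N)
      ≤ ((1 + η) ^ (2 * (m - 1)) *
          (((m - 1).factorial : ℝ) * ((r - 1).choose (m - 1) : ℝ))) /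
        (((m - 1).factorial : ℝ) * ((t - 1).choose (m - 1) : ℝ)) * (1 + 2 * η) := by
        refine mul_le_mul ?_ (by linarith) (by positivity) (by positivity)
        gcongr
        exact hn.trans (by gcongr)
    _ = ((1 + η) ^ (2 * (m - 1)) * (1 + 2 * η)) *
        (((r - 1).choose (m - 1) : ℝ) / ((t - 1).choose (m - 1) : ℝ)) := by
        field_simp
    _ ≤ _ := by gcongr
end

section
/- For every real ε > 0 there exists r₀ such that for all integers r ≥ r₀ one has (1 − ε) · r ≤ f_3(r, {𝒞_2^{(3)}, 𝒞_3^{(3)}, 𝒞_4^{(3)}}) ≤ (1 + ε) · r. -/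
/-- A hypergraph is a Berge cycle of length `ℓ` (in the `m`-uniform setting) if it is
`m`-uniform and there are distinct vertices `v_1,…,v_ℓ` and distinct edges `e_1,…,e_ℓ`
(the edges of the hypergraph being exactly `e_1,…,e_ℓ`) with `{v_i, v_{i+1}} ⊆ e_i`
for all `i`, indices modulo `ℓ`. -/
def IsBergeCycle (m ℓ : ℕ) (H : Hyp) : Prop :=
  IsUniform m H.2 ∧
  ∃ (v : ZMod ℓ → Fin H.1) (e : ZMod ℓ → Finset (Fin H.1)),
    Function.Injective v ∧ Function.Injective e ∧
    (∀ i, e i ∈ H.2) ∧ (∀ b ∈ H.2, ∃ i, e i = b) ∧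
    ∀ i, ({v i, v (i + 1)} : Finset (Fin H.1)) ⊆ e i

/-- `𝒞_ℓ^{(m)}`: the family of all `m`-uniform hypergraphs that are Berge cycles
of length `ℓ`. -/
def bergeCycles (m ℓ : ℕ) : Set Hyp := {H | IsBergeCycle m ℓ H}

set_option autoImplicit false


namespace PNTaux
open Complex MeasureTheory Filter Topology

lemma exists_G : ∃ G : ℝ → ℝ → ℂ, Continuous (Function.uncurry G) ∧
    ∀ τ : ℝ, 0 < τ → ∀ t : ℝ,
      LSeries (fun n => (ArithmeticFunction.vonMangoldt n : ℂ)) (1 + τ + t * I)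
        = G τ t + 1 / (τ + t * I) := by
  refine ⟨fun τ t => ArithmeticFunction.vonMangoldt.LFunctionResidueClassAux (q := 1) 1
    (1 + (|τ| : ℝ) + t * I), ?_, ?_⟩
  · refine (ArithmeticFunction.vonMangoldt.continuousOn_LFunctionResidueClassAux
      (q := 1) 1).comp_continuous (f := fun p : ℝ × ℝ => (1 + (|p.1| : ℝ) + p.2 * I : ℂ))
      (by fun_prop) ?_
    intro p
    simp
  · intro τ hτ t
    have := ArithmeticFunction.vonMangoldt.eqOn_LFunctionResidueClassAux (q := 1) (a := 1)
      isUnit_one (x := (1 + (|τ| : ℝ) + t * I : ℂ)) (by simp [hτ.ne'])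
    beta_reduce
    rw [this, abs_of_pos hτ]
    have h : ArithmeticFunction.vonMangoldt.residueClass (1 : ZMod 1)
       = fun n => ArithmeticFunction.vonMangoldt n := by
      ext n
      simp [ArithmeticFunction.vonMangoldt.residueClass, Set.indicator_apply, Subsingleton.elim (n : ZMod 1) 1]
    simp only [h]
    simp
    rw [show (1 + (τ:ℂ) + t * I - 1) = τ + t * I by ring]
    ring

noncomputable def Kr (l u : ℝ) : ℝ := ∫ t in (0:ℝ)..l, 2 * (1 - t / l) * Real.cos (t * u)

noncomputable def ph (l t : ℝ) : ℝ := 1 - |t| / l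

lemma ph_cont (l : ℝ) : Continuous (ph l) := by unfold ph; fun_prop

lemma Kr_cont (l : ℝ) : Continuous (Kr l) := by
  unfold Kr
  apply intervalIntegral.continuous_parametric_intervalIntegral_of_continuous'
  fun_prop

lemma Kr_complex (l : ℝ) (hl : 0 < l) (u : ℝ) :
    ∫ t in (-l)..l, (ph l t : ℂ) * cexp (t * u * I) = (Kr l u : ℂ) := by
  have hc : Continuous fun t : ℝ => (ph l t : ℂ) * cexp (t * u * I) := by
    have := ph_cont l
    fun_prop
  rw [← intervalIntegral.integral_add_adjacent_intervals (b := 0)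
    (hc.intervalIntegrable _ _) (hc.intervalIntegrable _ _)]
  have h1 := intervalIntegral.integral_comp_neg
    (f := fun t : ℝ => (ph l t : ℂ) * cexp (t * u * I)) (a := 0) (b := l)
  rw [neg_zero] at h1
  rw [← h1, ← intervalIntegral.integral_add]
  · unfold Kr
    rw [← intervalIntegral.integral_ofReal]
    apply intervalIntegral.integral_congr
    intro t ht
    rw [Set.uIcc_of_le hl.le] at ht
    simp only [ph, abs_neg, abs_of_nonneg ht.1]
    push_cast
    rw [Complex.cos]
    rw [show -(t:ℂ) * u * I = -(t * u) * I by ring]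
    ring
  · apply Continuous.intervalIntegrable
    have := ph_cont l
    fun_prop
  · exact hc.intervalIntegrable _ _

lemma Kr_formula (l : ℝ) (hl : 0 < l) (u : ℝ) (hu : u ≠ 0) :
    Kr l u = 2 * (1 - Real.cos (l * u)) / (l * u ^ 2) := by
  have h : ∀ t ∈ Set.uIcc 0 l, HasDerivAt
      (fun t => 2 * (1 - t / l) * (Real.sin (t * u) / u) - 2 / l * (Real.cos (t * u) / u ^ 2))
      (2 * (1 - t / l) * Real.cos (t * u)) t := by
    intro t _
    have e1 : HasDerivAt (fun t : ℝ => t * u) u t := by simpa using (hasDerivAt_id t).mul_const u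
    have e2 : HasDerivAt (fun t : ℝ => 2 * (1 - t / l)) (2 * (0 - 1 / l)) t :=
      (((hasDerivAt_id t).div_const l).const_sub 1).const_mul 2 |>.congr_deriv (by ring)
    have e3 := (e2.mul ((e1.sin).div_const u)).sub (((e1.cos).div_const (u ^ 2)).const_mul (2 / l))
    refine e3.congr_deriv ?_
    field_simp
    ring
  unfold Kr
  rw [intervalIntegral.integral_eq_sub_of_hasDerivAt h]
  · simp
    field_simp
    ring
  · apply Continuous.intervalIntegrable
    fun_prop

lemma Kr_abs_le (l : ℝ) (hl : 0 < l) (u : ℝ) : |Kr l u| ≤ 2 * l := by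
  have := intervalIntegral.norm_integral_le_of_norm_le_const (a := 0) (b := l) (C := 2)
    (f := fun t => 2 * (1 - t / l) * Real.cos (t * u)) ?_
  · simpa [Kr, abs_of_pos hl] using this
  · intro t ht
    rw [Set.uIoc_of_le hl.le] at ht
    have h1 : |1 - t / l| ≤ 1 := by
      have := div_le_one_of_le₀ ht.2 hl.le
      have := div_pos ht.1 hl
      rw [abs_le]; constructor <;> linarith
    have h2 := Real.abs_cos_le_one (t * u)
    rw [Real.norm_eq_abs, abs_mul, abs_mul]
    have := mul_le_mul h1 h2 (abs_nonneg _) (by norm_num)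
    rw [mul_assoc]
    simp at this ⊢
    linarith

lemma Kr_nonneg (l : ℝ) (hl : 0 < l) (u : ℝ) : 0 ≤ Kr l u := by
  by_cases hu : u = 0
  · subst hu
    unfold Kr
    apply intervalIntegral.integral_nonneg hl.le
    intro t ht
    have := div_le_one_of_le₀ ht.2 hl.le
    simp
    linarith
  · rw [Kr_formula l hl u hu]
    have := Real.cos_le_one (l * u)
    have : 0 ≤ 1 - Real.cos (l * u) := by linarith
    positivity

lemma Kr_le (l : ℝ) (hl : 0 < l) (u : ℝ) (hu : u ≠ 0) : Kr l u ≤ 4 / (l * u ^ 2) := by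
  rw [Kr_formula l hl u hu]
  have := Real.neg_one_le_cos (l * u)
  gcongr
  linarith

lemma Kr_ge (l : ℝ) (hl : 0 < l) (u : ℝ) (hu : |u| ≤ 1 / l) : l / 2 ≤ Kr l u := by
  have h1 : ∫ t in (0:ℝ)..l, (1 - t / l) = l / 2 := by
    have h : ∀ t ∈ Set.uIcc 0 l, HasDerivAt (fun t => t - t ^ 2 / (2 * l)) (1 - t / l) t := by
      intro t _
      refine ((hasDerivAt_id t).sub (((hasDerivAt_id t).pow 2).div_const (2 * l))).congr_deriv ?_
      simp
      field_simp
    rw [intervalIntegral.integral_eq_sub_of_hasDerivAt h]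
    · field_simp
      ring
    · apply Continuous.intervalIntegrable
      fun_prop
  rw [← h1]
  unfold Kr
  apply intervalIntegral.integral_mono_on hl.le
  · apply Continuous.intervalIntegrable
    fun_prop
  · apply Continuous.intervalIntegrable
    fun_prop
  · intro t ht
    have h2 : (1:ℝ) / 2 ≤ Real.cos (t * u) := by
      have h3 : |t * u| ≤ 1 := by
        rw [abs_mul, abs_of_nonneg ht.1]
        calc t * |u| ≤ l * (1 / l) := by
              apply mul_le_mul ht.2 hu (abs_nonneg _) hl.le
          _ = 1 := by field_simp
      have h4 := Real.one_sub_sq_div_two_le_cos (x := t * u)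
      have h5 : (t * u) ^ 2 ≤ 1 := by
        rw [← sq_abs]; nlinarith [abs_nonneg (t * u)]
      linarith
    have := div_le_one_of_le₀ ht.2 hl.le
    nlinarith
end PNTaux


namespace PNTaux
open Complex MeasureTheory Filter Topology

lemma _root_.HasSum.congr_fun_aux {f g : ℕ → ℂ} {a : ℂ} (h : HasSum f a) (e : ∀ n, g n = f n) :
    HasSum g a := by
  rwa [funext e]

/-- the interchange for the Dirichlet series -/
lemma sum_part (l : ℝ) (hl : 0 < l) (τ : ℝ) (hτ : 0 < τ) (y : ℝ) :
    HasSum (fun n : ℕ => ((ArithmeticFunction.vonMangoldt n * (n : ℝ) ^ (-(1 + τ)) *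
        Kr l (y - Real.log n) : ℝ) : ℂ))
      (∫ t in (-l)..l, (ph l t : ℂ) * cexp (t * y * I) *
        LSeries (fun n => (ArithmeticFunction.vonMangoldt n : ℂ)) (1 + τ + t * I)) := by
  have hph := ph_cont l
  have hterm : ∀ (n : ℕ) (t : ℝ),
      LSeries.term (fun n => (ArithmeticFunction.vonMangoldt n : ℂ)) (1 + τ + t * I) n
      = ((ArithmeticFunction.vonMangoldt n * (n : ℝ) ^ (-(1 + τ)) : ℝ) : ℂ)
        * cexp (-(t * Real.log n * I)) := by
    intro n t
    rcases Nat.eq_zero_or_pos n with rfl | hn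
    · simp
    · have hn' : (n : ℂ) ≠ 0 := by exact_mod_cast hn.ne'
      rw [LSeries.term_of_ne_zero hn.ne', div_eq_mul_inv, ← Complex.cpow_neg]
      rw [show -(1 + (τ:ℂ) + t * I) = ((-(1 + τ) : ℝ) : ℂ) + (-(t * I)) by push_cast; ring]
      rw [Complex.cpow_add _ _ hn']
      push_cast
      rw [Complex.ofReal_cpow (Nat.cast_nonneg n)]
      push_cast
      rw [mul_assoc]
      congr 2
      rw [Complex.cpow_def_of_ne_zero hn']
      congr 1
      ring
  have hsum : Summable (fun n : ℕ => ArithmeticFunction.vonMangoldt n * (n : ℝ) ^ (-(1 + τ))) := by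
    have := (ArithmeticFunction.LSeriesSummable_vonMangoldt (s := 1 + τ + (0:ℝ) * I) (by simpa using hτ)).norm
    refine this.congr ?_
    intro n
    rw [hterm]
    simp only [Complex.norm_mul, Complex.norm_real]
    rw [Real.norm_of_nonneg]
    · simp
    · exact mul_nonneg ArithmeticFunction.vonMangoldt_nonneg (by positivity)
  have key := intervalIntegral.hasSum_integral_of_dominated_convergence (μ := volume)
    (a := -l) (b := l)
    (F := fun (n : ℕ) (t : ℝ) => (ph l t : ℂ) * cexp (t * y * I) *
      LSeries.term (fun n => (ArithmeticFunction.vonMangoldt n : ℂ)) (1 + τ + t * I) n)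
    (f := fun t => (ph l t : ℂ) * cexp (t * y * I) *
        LSeries (fun n => (ArithmeticFunction.vonMangoldt n : ℂ)) (1 + τ + t * I))
    (bound := fun n _ => ArithmeticFunction.vonMangoldt n * (n : ℝ) ^ (-(1 + τ)))
    ?_ ?_ ?_ ?_ ?_
  · refine HasSum.congr_fun_aux key (fun n => ?_)
    rw [ofReal_mul _ (Kr l _), ← Kr_complex l hl, ← intervalIntegral.integral_const_mul]
    apply intervalIntegral.integral_congr
    intro t _
    simp only [hterm]
    rw [show (t:ℂ) * ((y - Real.log n : ℝ) : ℂ) * I = t * y * I + -(t * Real.log n * I) by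
      push_cast; ring, Complex.exp_add]
    ring
  · intro n
    simp only [hterm]
    apply Continuous.aestronglyMeasurable
    fun_prop
  · intro n
    refine Eventually.of_forall fun t ht => ?_
    rw [Set.uIoc_of_le (by linarith)] at ht
    rw [hterm]
    have e1 : ‖cexp (t * y * I)‖ = 1 := by
      rw [← ofReal_mul]; exact Complex.norm_exp_ofReal_mul_I _
    have e2 : ‖cexp (-(t * Real.log n * I))‖ = 1 := by
      rw [← ofReal_mul, ← neg_mul, ← ofReal_neg]; exact Complex.norm_exp_ofReal_mul_I _
    rw [norm_mul, norm_mul, norm_mul, e1, e2, Complex.norm_real, Complex.norm_real]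
    rw [Real.norm_of_nonneg (mul_nonneg ArithmeticFunction.vonMangoldt_nonneg (by positivity))]
    have : ‖ph l t‖ ≤ 1 := by
      have h1 : |t| ≤ l := abs_le.2 ⟨ht.1.le, ht.2⟩
      have := div_le_one_of_le₀ h1 hl.le
      have : 0 ≤ |t| / l := by positivity
      rw [Real.norm_eq_abs, ph, abs_le]; constructor <;> linarith
    rw [mul_one, mul_one]
    exact mul_le_of_le_one_left (mul_nonneg ArithmeticFunction.vonMangoldt_nonneg (by positivity)) this
  · exact Eventually.of_forall fun t ht => hsum
  · simp
  · refine Eventually.of_forall fun t ht => ?_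
    apply HasSum.mul_left
    exact (ArithmeticFunction.LSeriesSummable_vonMangoldt (s := 1 + τ + t * I) (by simpa using hτ)).hasSum

lemma main_part (l : ℝ) (hl : 0 < l) (τ : ℝ) (hτ : 0 < τ) (y : ℝ) :
    ∫ t in (-l)..l, (ph l t : ℂ) * cexp (t * y * I) * (1 / (τ + t * I)) =
      ((∫ u in Set.Ioi (0:ℝ), Real.exp (-(τ * u)) * Kr l (y - u) : ℝ) : ℂ) := by
  have hph := ph_cont l
  have h1 : ∀ t : ℝ, (1 / (τ + t * I) : ℂ) = ∫ u in Set.Ioi (0:ℝ), cexp (-(τ + t * I) * u) := by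
    intro t
    rw [integral_exp_mul_complex_Ioi (by simpa using hτ)]
    simp only [ofReal_zero, mul_zero, Complex.exp_zero, neg_div_neg_eq]
  have hIntg : Integrable (Function.uncurry fun (t u : ℝ) =>
      (ph l t : ℂ) * cexp (t * y * I) * cexp (-(τ + t * I) * u))
      ((volume.restrict (Set.Ioc (-l) l)).prod (volume.restrict (Set.Ioi (0:ℝ)))) := by
    have i1 : Integrable (fun t : ℝ => (ph l t : ℂ) * cexp (t * y * I)) (volume.restrict (Set.Ioc (-l) l)) := by
      apply Continuous.integrableOn_Ioc
      fun_prop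
    have i2 : Integrable (fun u : ℝ => cexp (-τ * u)) (volume.restrict (Set.Ioi (0:ℝ))) :=
      integrableOn_exp_mul_complex_Ioi (by simpa using hτ) 0
    have i3 := i1.mul_prod i2
    have i4 := i3.bdd_mul (c := 1) (f := fun p : ℝ × ℝ => cexp (-(p.1 * p.2) * I))
      (by apply Continuous.aestronglyMeasurable; fun_prop)
      (Eventually.of_forall fun p => by
        rw [← ofReal_mul, ← ofReal_neg]; exact (Complex.norm_exp_ofReal_mul_I _).le)
    refine i4.congr (Eventually.of_forall fun p => ?_)
    simp only [Function.uncurry]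
    rw [show -((τ:ℂ) + p.1 * I) * p.2 = -τ * p.2 + -(p.1 * p.2) * I by ring, Complex.exp_add]
    ring
  rw [intervalIntegral.integral_of_le (by linarith)]
  simp_rw [h1, ← integral_const_mul]
  rw [integral_integral_swap hIntg, ← integral_complex_ofReal]
  apply integral_congr_ae
  refine Eventually.of_forall fun u => ?_
  simp only
  rw [ofReal_mul]
  rw [← Kr_complex l hl, intervalIntegral.integral_of_le (by linarith), ← integral_const_mul]
  congr 1
  ext t
  push_cast
  rw [show (t:ℂ) * (y - u) * I = t * y * I + -(t * u * I) by ring, Complex.exp_add,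
    show -((τ:ℂ) + t * I) * u = -(τ * u) + -(t * u * I) by ring, Complex.exp_add]
  ring

lemma main_ge (l : ℝ) (hl : 0 < l) (τ : ℝ) (hτ : 0 < τ) (y : ℝ) (hy : 1 / l ≤ y) :
    Real.exp (-(τ * (y + 1 / l))) ≤ ∫ u in Set.Ioi (0:ℝ), Real.exp (-(τ * u)) * Kr l (y - u) := by
  have hK := Kr_cont l
  have hi : IntegrableOn (fun u => Real.exp (-(τ * u)) * Kr l (y - u)) (Set.Ioi (0:ℝ)) := by
    have i2 : Integrable (fun u : ℝ => Real.exp (-τ * u)) (volume.restrict (Set.Ioi (0:ℝ))) :=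
      exp_neg_integrableOn_Ioi 0 hτ
    have := i2.mul_bdd (c := 2 * l) (g := fun u => Kr l (y - u))
      (by apply Continuous.aestronglyMeasurable; fun_prop)
      (Eventually.of_forall fun u => Kr_abs_le l hl _)
    simpa [IntegrableOn] using this
  have hl' : 0 < 1 / l := by positivity
  have hsub : Set.Ioc (y - 1 / l) (y + 1 / l) ⊆ Set.Ioi 0 := by
    intro u hu
    have := hu.1
    simp only [Set.mem_Ioi]; linarith
  calc Real.exp (-(τ * (y + 1 / l)))
      = ∫ u in Set.Ioc (y - 1 / l) (y + 1 / l), Real.exp (-(τ * (y + 1 / l))) * (l / 2) := by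
        simp
        rw [max_eq_left (by positivity)]
        field_simp
        norm_num
    _ ≤ ∫ u in Set.Ioc (y - 1 / l) (y + 1 / l), Real.exp (-(τ * u)) * Kr l (y - u) := by
        apply setIntegral_mono_on
        · exact integrableOn_const (by simp)
        · exact hi.mono_set hsub
        · exact measurableSet_Ioc
        · intro u hu
          have h1 := Kr_ge l hl (y - u) (abs_le.2 ⟨by linarith [hu.2], by linarith [hu.1]⟩)
          have h2 : Real.exp (-(τ * (y + 1 / l))) ≤ Real.exp (-(τ * u)) := by
            apply Real.exp_le_exp.2
            have := mul_le_mul_of_nonneg_left hu.2 hτ.le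
            linarith
          exact mul_le_mul h2 h1 (by positivity) (by positivity)
    _ ≤ _ := by
        apply setIntegral_mono_set hi
        · exact Eventually.of_forall fun u => mul_nonneg (by positivity) (Kr_nonneg l hl _)
        · exact LE.le.eventuallyLE hsub

end PNTaux


namespace PNTaux
open Complex MeasureTheory Filter Topology

lemma tail_bound : ∃ C : ℝ, 0 < C ∧ ∀ (y : ℝ) (s : Finset ℕ),
    ∑ n ∈ s, ArithmeticFunction.vonMangoldt n / n / (1 + (y - Real.log n) ^ 2) ≤ C := by
  have hs : Summable (fun k : ℤ => 1 / (1 + (k:ℝ) ^ 2)) := by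
    have h0 : Summable (fun k : ℤ => 1 / (k:ℝ) ^ 2) :=
      Real.summable_one_div_int_pow.2 (by norm_num)
    refine Summable.of_norm_bounded_eventually h0 ?_
    have : ∀ᶠ k : ℤ in cofinite, k ≠ 0 := by
      simpa using (Set.finite_singleton (0:ℤ)).compl_mem_cofinite
    filter_upwards [this] with k hk
    have : (k:ℝ) ≠ 0 := by exact_mod_cast hk
    rw [Real.norm_of_nonneg (by positivity)]
    gcongr
    linarith
  set T := ∑' k : ℤ, 1 / (1 + (k:ℝ) ^ 2) with hT
  have hTpos : 0 < T := by
    have := hs.le_tsum 0 (fun k _ => by positivity)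
    rw [← hT] at this
    norm_num at this
    linarith
  set c : ℝ := (Real.log 4 + 4) * Real.exp 1 with hc
  have hcpos : 0 < c := by
    have : 0 < Real.log 4 := Real.log_pos (by norm_num)
    positivity
  refine ⟨c * 9 * T, by positivity, fun y s => ?_⟩
  -- fibers
  have hfib : ∀ j : ℤ, ∑ n ∈ s with ⌊Real.log (n : ℕ)⌋ = j,
      ArithmeticFunction.vonMangoldt n / n ≤ c := by
    intro j
    have h1 : ∑ n ∈ s with ⌊Real.log (n : ℕ)⌋ = j, ArithmeticFunction.vonMangoldt n / n
        ≤ ∑ n ∈ Finset.Ioc 0 ⌊Real.exp (j + 1)⌋₊,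
          ArithmeticFunction.vonMangoldt n * Real.exp (-j) := by
      have h2 : ∀ n ∈ s.filter (fun n : ℕ => ⌊Real.log n⌋ = j), n ≠ 0 →
          Real.exp j ≤ n ∧ (n:ℝ) ≤ Real.exp (j + 1) := by
        intro n hn hn0
        have hn1 : (0:ℝ) < n := by exact_mod_cast Nat.pos_of_ne_zero hn0
        have := (Finset.mem_filter.1 hn).2
        rw [Int.floor_eq_iff] at this
        exact ⟨(Real.le_log_iff_exp_le hn1).1 this.1, (Real.log_le_iff_le_exp hn1).1 this.2.le⟩
      rw [← Finset.sum_filter_ne_zero]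
      refine (Finset.sum_le_sum (g := fun n => ArithmeticFunction.vonMangoldt n * Real.exp (-j)) ?_).trans
        (Finset.sum_le_sum_of_subset_of_nonneg ?_ ?_)
      · intro n hn
        rw [Finset.mem_filter] at hn
        have hn0 : n ≠ 0 := by rintro rfl; simp at hn
        obtain ⟨h3, h4⟩ := h2 n hn.1 hn0
        rw [div_eq_mul_inv, Real.exp_neg]
        gcongr
      · intro n hn
        rw [Finset.mem_filter] at hn
        have hn0 : n ≠ 0 := by rintro rfl; simp at hn
        obtain ⟨h3, h4⟩ := h2 n hn.1 hn0
        rw [Finset.mem_Ioc]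
        exact ⟨Nat.pos_of_ne_zero hn0, Nat.le_floor h4⟩
      · intro n _ _
        exact mul_nonneg ArithmeticFunction.vonMangoldt_nonneg (by positivity)
    refine h1.trans ?_
    rw [← Finset.sum_mul]
    have h5 := Chebyshev.psi_le_const_mul_self (Real.exp_pos ((j:ℝ) + 1)).le
    unfold Chebyshev.psi at h5
    calc _ ≤ ((Real.log 4 + 4) * Real.exp (j + 1)) * Real.exp (-j) := by gcongr
      _ = c := by
        rw [hc, mul_assoc, ← Real.exp_add]
        congr 2
        ring
  have hcmp : ∀ a b : ℝ, |a - b| ≤ 1 → 1 / (1 + a ^ 2) ≤ 3 / (1 + b ^ 2) := by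
    intro a b hab
    rw [abs_le] at hab
    rw [div_le_div_iff₀ (by positivity) (by positivity)]
    nlinarith [sq_nonneg (a - (b - a)), sq_nonneg (a + (b - a)), sq_nonneg a,
      mul_nonneg (sub_nonneg.2 hab.1) (sub_nonneg.2 hab.2)]
  calc ∑ n ∈ s, ArithmeticFunction.vonMangoldt n / n / (1 + (y - Real.log n) ^ 2)
      = ∑ j ∈ s.image (fun n : ℕ => ⌊Real.log n⌋), ∑ n ∈ s with ⌊Real.log (n : ℕ)⌋ = j,
        ArithmeticFunction.vonMangoldt n / n / (1 + (y - Real.log n) ^ 2) := by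
        rw [Finset.sum_fiberwise_of_maps_to]
        intro n hn
        exact Finset.mem_image_of_mem _ hn
    _ ≤ ∑ j ∈ s.image (fun n : ℕ => ⌊Real.log n⌋), ∑ n ∈ s with ⌊Real.log (n : ℕ)⌋ = j,
        ArithmeticFunction.vonMangoldt n / n * (9 / (1 + ((j - ⌊y⌋ : ℤ) : ℝ) ^ 2)) := by
        apply Finset.sum_le_sum
        intro j _
        apply Finset.sum_le_sum
        intro n hn
        have hj := (Finset.mem_filter.1 hn).2
        rw [Int.floor_eq_iff] at hj
        have e1 := hcmp (y - Real.log n) (y - j) (by rw [abs_le]; constructor <;> linarith)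
        have e2 := hcmp (y - j) (⌊y⌋ - j) (by
          have := Int.floor_le y
          have := Int.lt_floor_add_one y
          rw [abs_le]; constructor <;> linarith)
        rw [div_eq_mul_one_div _ (1 + (y - Real.log n) ^ 2)]
        apply mul_le_mul_of_nonneg_left
        · push_cast
          have e3 : ((j:ℝ) - ⌊y⌋) ^ 2 = (⌊y⌋ - j) ^ 2 := by ring
          rw [e3]
          calc _ ≤ _ := e1
            _ = 3 * (1 / (1 + (y - j) ^ 2)) := by ring
            _ ≤ 3 * (3 / (1 + ((⌊y⌋:ℝ) - j) ^ 2)) := by linarith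
            _ = _ := by ring
        · exact div_nonneg ArithmeticFunction.vonMangoldt_nonneg (by positivity)
    _ ≤ ∑ j ∈ s.image (fun n : ℕ => ⌊Real.log n⌋), c * 9 * (1 / (1 + ((j - ⌊y⌋ : ℤ) : ℝ) ^ 2)) := by
        apply Finset.sum_le_sum
        intro j _
        rw [← Finset.sum_mul]
        calc _ ≤ c * (9 / (1 + ((j - ⌊y⌋ : ℤ) : ℝ) ^ 2)) :=
              mul_le_mul_of_nonneg_right (hfib j) (by positivity)
          _ = _ := by ring
    _ = c * 9 * ∑ k ∈ (s.image (fun n : ℕ => ⌊Real.log n⌋)).image (fun j => j - ⌊y⌋),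
          1 / (1 + (k : ℝ) ^ 2) := by
        rw [← Finset.mul_sum, Finset.sum_image (s := s.image (fun n : ℕ => ⌊Real.log n⌋))
          (g := fun j => j - ⌊y⌋) (fun a _ b _ h => by simpa using h)]
    _ ≤ c * 9 * T := by
        apply mul_le_mul_of_nonneg_left _ (by positivity)
        exact hs.sum_le_tsum _ (fun k _ => by positivity)

lemma RL (g : ℝ → ℂ) (l : ℝ) (hl : 0 < l) :
    Tendsto (fun y : ℝ => ∫ t in (-l)..l, cexp (t * y * I) * g t) atTop (𝓝 0) := by
  have h := Real.tendsto_integral_exp_smul_cocompact ((Set.Ioc (-l) l).indicator g)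
  have h2 : Tendsto (fun y : ℝ => -(y / (2 * Real.pi))) atTop (cocompact ℝ) := by
    refine Tendsto.mono_right ?_ atBot_le_cocompact
    exact tendsto_neg_atTop_atBot.comp (tendsto_id.atTop_div_const (by positivity))
  refine (h.comp h2).congr fun y => ?_
  simp only [Function.comp]
  rw [intervalIntegral.integral_of_le (by linarith), ← integral_indicator measurableSet_Ioc]
  congr 1
  ext t
  by_cases ht : t ∈ Set.Ioc (-l) l
  · simp only [Set.indicator_of_mem ht]
    rw [Circle.smul_def, Real.fourierChar_apply, smul_eq_mul]
    congr 2
    push_cast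
    have : (Real.pi : ℂ) ≠ 0 := by exact_mod_cast Real.pi_ne_zero
    field_simp
  · simp [Set.indicator_of_notMem ht]

end PNTaux


namespace PNTaux
open Complex MeasureTheory Filter Topology

lemma sum_le (C1 : ℝ) (hC1 : ∀ (y : ℝ) (s : Finset ℕ),
    ∑ n ∈ s, ArithmeticFunction.vonMangoldt n / n / (1 + (y - Real.log n) ^ 2) ≤ C1)
    (δ : ℝ) (hδ : 0 < δ) (l : ℝ) (hl : 0 < l) (y : ℝ)
    (hno : ∀ p : ℕ, p.Prime → δ < |y - Real.log p|) (τ : ℝ) (hτ : 0 < τ) (s : Finset ℕ) :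
    ∑ n ∈ s, ArithmeticFunction.vonMangoldt n * (n : ℝ) ^ (-(1 + τ)) * Kr l (y - Real.log n)
      ≤ (4 / l * (1 + 1 / δ ^ 2)) * C1 +
        2 * l * Real.exp (-(y - δ)) * (Chebyshev.psi (Real.exp (y + δ)) -
          Chebyshev.theta (Real.exp (y + δ))) := by
  classical
  set W := (Finset.Ioc 0 ⌊Real.exp (y + δ)⌋₊).filter (fun n => ¬ n.Prime) with hW
  rw [Chebyshev.psi_sub_theta_eq_sum_not_prime, ← hW]
  have hpt : ∀ n : ℕ, ArithmeticFunction.vonMangoldt n * (n : ℝ) ^ (-(1 + τ)) * Kr l (y - Real.log n)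
      ≤ (4 / l * (1 + 1 / δ ^ 2)) *
          (ArithmeticFunction.vonMangoldt n / n / (1 + (y - Real.log n) ^ 2))
        + 2 * l * Real.exp (-(y - δ)) * (if n ∈ W then ArithmeticFunction.vonMangoldt n else 0) := by
    intro n
    have hΛ : 0 ≤ ArithmeticFunction.vonMangoldt n := ArithmeticFunction.vonMangoldt_nonneg
    have hA : 0 ≤ (4 / l * (1 + 1 / δ ^ 2)) *
          (ArithmeticFunction.vonMangoldt n / n / (1 + (y - Real.log n) ^ 2)) := by positivity
    rcases Nat.eq_zero_or_pos n with rfl | hn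
    · simp [hW]
    have hn1 : (1:ℝ) ≤ n := by exact_mod_cast hn
    have hn0 : (0:ℝ) < n := by linarith
    have hpow : (n:ℝ) ^ (-(1 + τ)) ≤ (n:ℝ)⁻¹ := by
      rw [← Real.rpow_neg_one]
      exact Real.rpow_le_rpow_of_exponent_le hn1 (by linarith)
    have hK0 := Kr_nonneg l hl (y - Real.log n)
    by_cases hd : δ < |y - Real.log n|
    · have hB : 0 ≤ 2 * l * Real.exp (-(y - δ)) *
          (if n ∈ W then ArithmeticFunction.vonMangoldt n else 0) := by
        split_ifs <;> positivity
      set u := y - Real.log n with hu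
      have hu0 : u ≠ 0 := by
        intro h; rw [h] at hd; simp at hd; linarith
      have hu2 : δ ^ 2 ≤ u ^ 2 := by
        rw [← sq_abs u]; gcongr
      have hK := Kr_le l hl u hu0
      have hK2 : 4 / (l * u ^ 2) ≤ (4 / l * (1 + 1 / δ ^ 2)) / (1 + u ^ 2) := by
        have hup : 0 < u ^ 2 := by positivity
        have e : 1 / u ^ 2 ≤ (1 + 1 / δ ^ 2) / (1 + u ^ 2) := by
          rw [div_le_div_iff₀ hup (by positivity)]
          have : 1 ≤ 1 / δ ^ 2 * u ^ 2 := by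
            rw [one_div, inv_mul_eq_div, one_le_div (by positivity)]; exact hu2
          linarith
        calc 4 / (l * u ^ 2) = 4 / l * (1 / u ^ 2) := by field_simp
          _ ≤ 4 / l * ((1 + 1 / δ ^ 2) / (1 + u ^ 2)) := by gcongr
          _ = _ := by ring
      calc _ ≤ ArithmeticFunction.vonMangoldt n * (n:ℝ)⁻¹ * ((4 / l * (1 + 1 / δ ^ 2)) / (1 + u ^ 2)) := by
            apply mul_le_mul _ (hK.trans hK2) hK0 (by positivity)
            gcongr
        _ = (4 / l * (1 + 1 / δ ^ 2)) * (ArithmeticFunction.vonMangoldt n / n / (1 + u ^ 2)) := by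
            field_simp
        _ ≤ _ := by linarith
    · have hnp : ¬ n.Prime := fun h => hd (hno n h)
      rw [not_lt, abs_le] at hd
      have hnW : n ∈ W := by
        rw [hW, Finset.mem_filter, Finset.mem_Ioc]
        refine ⟨⟨hn, Nat.le_floor ?_⟩, hnp⟩
        rw [← Real.log_le_iff_le_exp hn0]; linarith
      rw [if_pos hnW]
      have hinv : (n:ℝ)⁻¹ ≤ Real.exp (-(y - δ)) := by
        rw [Real.exp_neg]
        gcongr
        rw [← Real.le_log_iff_exp_le hn0]; linarith
      have hK := (le_abs_self _).trans (Kr_abs_le l hl (y - Real.log n))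
      calc _ ≤ ArithmeticFunction.vonMangoldt n * Real.exp (-(y - δ)) * (2 * l) := by
            apply mul_le_mul _ hK hK0 (by positivity)
            exact mul_le_mul_of_nonneg_left (hpow.trans hinv) hΛ
        _ = 2 * l * Real.exp (-(y - δ)) * ArithmeticFunction.vonMangoldt n := by ring
        _ ≤ _ := by linarith
  refine (Finset.sum_le_sum fun n _ => hpt n).trans ?_
  rw [Finset.sum_add_distrib, ← Finset.mul_sum, ← Finset.mul_sum]
  have h2 : ∑ n ∈ s, (if n ∈ W then ArithmeticFunction.vonMangoldt n else 0) ≤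
      ∑ n ∈ W, ArithmeticFunction.vonMangoldt n := by
    rw [← Finset.sum_filter]
    apply Finset.sum_le_sum_of_subset_of_nonneg
    · intro n hn; exact (Finset.mem_filter.1 hn).2
    · intro n _ _; exact ArithmeticFunction.vonMangoldt_nonneg
  have h1 := hC1 y s
  gcongr

theorem exists_prime_log (δ : ℝ) (hδ : 0 < δ) :
    ∀ᶠ y : ℝ in atTop, ∃ p : ℕ, p.Prime ∧ |y - Real.log p| ≤ δ := by
  obtain ⟨G, hG, hGL⟩ := exists_G
  obtain ⟨C1, hC1pos, hC1⟩ := tail_bound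
  obtain ⟨C2, hC2⟩ := Chebyshev.psi_sub_theta_le_mul_sqrt
  set l : ℝ := 16 * (1 + 1 / δ ^ 2) * C1 with hl_def
  have hl : 0 < l := by positivity
  have hphc := ph_cont l
  -- continuity in τ
  have hcont : ∀ y : ℝ, Continuous fun τ : ℝ =>
      ∫ t in (-l)..l, cexp (t * y * I) * ((ph l t : ℂ) * G τ t) := by
    intro y
    apply intervalIntegral.continuous_parametric_intervalIntegral_of_continuous'
    have hG' : Continuous fun p : ℝ × ℝ => G p.1 p.2 := hG
    unfold Function.uncurry
    fun_prop
  have hRL := RL (fun t => (ph l t : ℂ) * G 0 t) l hl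
  have hsmall : Tendsto (fun y : ℝ => 2 * l * C2 * Real.exp (3 / 2 * δ) * Real.exp (-(y / 2)))
      atTop (𝓝 0) := by
    have : Tendsto (fun y : ℝ => Real.exp (-(y / 2))) atTop (𝓝 0) :=
      Real.tendsto_exp_neg_atTop_nhds_zero.comp (tendsto_id.atTop_div_const (by norm_num))
    simpa using this.const_mul (2 * l * C2 * Real.exp (3 / 2 * δ))
  filter_upwards [eventually_ge_atTop (1 / l),
    (hRL.norm).eventually_lt_const (u := (1 / 4 : ℝ)) (by norm_num),
    hsmall.eventually_lt_const (u := (1 / 4 : ℝ)) (by norm_num)] with y hy hy2 hy3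
  by_contra! hno
  have key : ∀ τ : ℝ, 0 < τ →
      (∫ t in (-l)..l, cexp (t * y * I) * ((ph l t : ℂ) * G τ t)).re
        ≤ 1 / 2 - Real.exp (-(τ * (y + 1 / l))) := by
    intro τ hτ
    have hsum := sum_part l hl τ hτ y
    have hG'' : Continuous fun t => G τ t := hG.comp (by fun_prop : Continuous fun t : ℝ => (τ, t))
    have hne : ∀ t : ℝ, (τ + t * I : ℂ) ≠ 0 := by
      intro t h
      have := congrArg Complex.re h
      simp at this
      linarith
    have hsplit : ∫ t in (-l)..l, cexp (t * y * I) * ((ph l t : ℂ) * G τ t) =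
       (∫ t in (-l)..l, (ph l t : ℂ) * cexp (t * y * I) *
        LSeries (fun n => (ArithmeticFunction.vonMangoldt n : ℂ)) (1 + τ + t * I))
        - ∫ t in (-l)..l, (ph l t : ℂ) * cexp (t * y * I) * (1 / (τ + t * I)) := by
      rw [← intervalIntegral.integral_sub]
      · apply intervalIntegral.integral_congr
        intro t _
        simp only
        rw [hGL τ hτ t]
        ring
      · simp only [hGL τ hτ]
        apply Continuous.intervalIntegrable
        have : Continuous fun t : ℝ => (1 / (τ + t * I) : ℂ) :=
          continuous_const.div (by fun_prop) hne
        fun_prop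
      · apply Continuous.intervalIntegrable
        have : Continuous fun t : ℝ => (1 / (τ + t * I) : ℂ) :=
          continuous_const.div (by fun_prop) hne
        fun_prop
    rw [hsplit, main_part l hl τ hτ y, Complex.sub_re, Complex.ofReal_re]
    have hm := main_ge l hl τ hτ y hy
    have hre := Complex.hasSum_re hsum
    have hle : (∫ t in (-l)..l, (ph l t : ℂ) * cexp (t * y * I) *
        LSeries (fun n => (ArithmeticFunction.vonMangoldt n : ℂ)) (1 + τ + t * I)).re ≤ 1 / 2 := by
      refine hasSum_le_of_sum_le hre fun s => ?_
      simp only [Complex.ofReal_re]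
      refine (sum_le C1 hC1 δ hδ l hl y hno τ hτ s).trans ?_
      have e1 : 4 / l * (1 + 1 / δ ^ 2) * C1 = 1 / 4 := by
        rw [hl_def]
        have : 0 < 1 + 1 / δ ^ 2 := by positivity
        generalize 1 + 1 / δ ^ 2 = a at *
        field_simp
        norm_num
      have e2 : 2 * l * Real.exp (-(y - δ)) * (Chebyshev.psi (Real.exp (y + δ)) -
          Chebyshev.theta (Real.exp (y + δ))) ≤ 1 / 4 := by
        refine le_trans ?_ hy3.le
        calc _ ≤ 2 * l * Real.exp (-(y - δ)) * (C2 * √(Real.exp (y + δ))) := by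
              gcongr; exact hC2 _
          _ = 2 * l * C2 * (Real.exp (-(y - δ)) * Real.exp ((y + δ) / 2)) := by
              rw [Real.exp_half]; ring
          _ = 2 * l * C2 * (Real.exp (3 / 2 * δ) * Real.exp (-(y / 2))) := by
              rw [← Real.exp_add, ← Real.exp_add]
              congr 2
              ring
          _ = _ := by ring
      linarith
    linarith
  have hlim1 : Tendsto (fun τ : ℝ =>
      (∫ t in (-l)..l, cexp (t * y * I) * ((ph l t : ℂ) * G τ t)).re) (𝓝[>] 0)
      (𝓝 (∫ t in (-l)..l, cexp (t * y * I) * ((ph l t : ℂ) * G 0 t)).re) :=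
    ((Complex.continuous_re.comp (hcont y)).tendsto 0).mono_left nhdsWithin_le_nhds
  have hlim2 : Tendsto (fun τ : ℝ => 1 / 2 - Real.exp (-(τ * (y + 1 / l)))) (𝓝[>] 0)
      (𝓝 (1 / 2 - Real.exp (-(0 * (y + 1 / l))))) :=
    (Continuous.tendsto (by fun_prop) 0).mono_left nhdsWithin_le_nhds
  have hfin := le_of_tendsto_of_tendsto hlim1 hlim2
    (eventually_nhdsWithin_of_forall fun τ hτ => key τ hτ)
  have := Complex.abs_re_le_norm (∫ t in (-l)..l, cexp (t * y * I) * ((ph l t : ℂ) * G 0 t))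
  rw [abs_le] at this
  simp only [zero_mul, neg_zero, Real.exp_zero] at hfin
  linarith

theorem exists_prime_short (ε : ℝ) (hε : 0 < ε) :
    ∃ X : ℝ, ∀ x : ℝ, X ≤ x → ∃ p : ℕ, p.Prime ∧ x ≤ p ∧ (p : ℝ) ≤ (1 + ε) * x := by
  have hpos : 0 < Real.log (1 + ε) := Real.log_pos (by linarith)
  have h := exists_prime_log (Real.log (1 + ε) / 2) (by positivity)
  have h2 : Tendsto (fun x : ℝ => Real.log x + Real.log (1 + ε) / 2) atTop atTop :=
    tendsto_atTop_add_const_right _ _ Real.tendsto_log_atTop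
  obtain ⟨X, hX⟩ := eventually_atTop.1 ((h2.eventually h).and (eventually_gt_atTop 0))
  refine ⟨X, fun x hx => ?_⟩
  obtain ⟨⟨p, hp, hab⟩, hx0⟩ := hX x hx
  have hp0 : (0:ℝ) < p := by exact_mod_cast hp.pos
  rw [abs_le] at hab
  refine ⟨p, hp, ?_, ?_⟩
  · rw [← Real.log_le_log_iff hx0 hp0]; linarith
  · rw [← Real.log_le_log_iff hp0 (by positivity), Real.log_mul (by positivity) (by positivity)]
    linarith

end PNTaux


/-- a Berge cycle inside an edge set -/
def HasCyc (ℓ : ℕ) {N : ℕ} (GE : Finset (Finset (Fin N))) : Prop :=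
  ∃ (v : ZMod ℓ → Fin N) (e : ZMod ℓ → Finset (Fin N)), Function.Injective v ∧
    Function.Injective e ∧ (∀ i, e i ∈ GE) ∧ ∀ i, v i ∈ e i ∧ v (i + 1) ∈ e i

lemma hasCyc_of_contains {ℓ m N : ℕ} {GE : Finset (Finset (Fin N))} {H : Hyp}
    (hH : H ∈ bergeCycles m ℓ) (h : HypContains H.2 GE) : HasCyc ℓ GE := by
  obtain ⟨-, v, e, hv, he, heH, -, hve⟩ := hH
  obtain ⟨f, hf, hfe⟩ := h
  refine ⟨fun i => f (v i), fun i => (e i).image f, hf.comp hv,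
    (Finset.image_injective hf).comp he, fun i => hfe _ (heH i), fun i => ?_⟩
  have := hve i
  exact ⟨Finset.mem_image_of_mem f (this (by simp)), Finset.mem_image_of_mem f (this (by simp))⟩

lemma contains_of_hasCyc {ℓ m N : ℕ} [NeZero ℓ] {GE : Finset (Finset (Fin N))}
    (hu : IsUniform m GE) (h : HasCyc ℓ GE) :
    ∃ H ∈ bergeCycles m ℓ, HypContains H.2 GE := by
  classical
  obtain ⟨v, e, hv, he, heG, hve⟩ := h
  refine ⟨⟨N, Finset.univ.image e⟩, ⟨?_, v, e, hv, he, ?_, ?_, ?_⟩, id, Function.injective_id, ?_⟩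
  · intro b hb
    obtain ⟨i, -, rfl⟩ := Finset.mem_image.1 hb
    exact hu _ (heG i)
  · intro i; exact Finset.mem_image_of_mem _ (Finset.mem_univ _)
  · intro b hb
    obtain ⟨i, -, rfl⟩ := Finset.mem_image.1 hb
    exact ⟨i, rfl⟩
  · intro i x hx
    simp only [Finset.mem_insert, Finset.mem_singleton] at hx
    rcases hx with rfl | rfl
    · exact (hve i).1
    · exact (hve i).2
  · intro b hb
    obtain ⟨i, -, rfl⟩ := Finset.mem_image.1 hb
    simpa using heG i

section upper

/-- Adjacency in the (affine) polarity graph. -/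
def PAdj {q r : ℕ} (x y : Fin r × ZMod q) : Prop :=
  x.1 ≠ y.1 ∧ x.2 + y.2 = ((x.1 : ℕ) : ZMod q) * ((y.1 : ℕ) : ZMod q)

lemma zcast_inj {q r : ℕ} (hqr : r ≤ q) {i j : Fin r}
    (h : ((i : ℕ) : ZMod q) = ((j : ℕ) : ZMod q)) : i = j := by
  rw [ZMod.natCast_eq_natCast_iff] at h
  apply Fin.ext
  exact Nat.ModEq.eq_of_lt_of_lt h (by omega) (by omega)

lemma PAdj.symm {q r : ℕ} {x y : Fin r × ZMod q} (h : PAdj x y) : PAdj y x :=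
  ⟨h.1.symm, by rw [add_comm, h.2, mul_comm]⟩

lemma PAdj_C4 {q r : ℕ} [Fact q.Prime] (hqr : r ≤ q) {x y z w : Fin r × ZMod q} (hxy : x ≠ y)
    (h1 : PAdj x z) (h2 : PAdj y z) (h3 : PAdj x w) (h4 : PAdj y w) : z = w := by
  obtain ⟨x1, x2⟩ := x
  obtain ⟨y1, y2⟩ := y
  obtain ⟨z1, z2⟩ := z
  obtain ⟨w1, w2⟩ := w
  obtain ⟨-, h1⟩ := h1
  obtain ⟨-, h2⟩ := h2
  obtain ⟨-, h3⟩ := h3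
  obtain ⟨-, h4⟩ := h4
  simp only at h1 h2 h3 h4
  have hx : x1 ≠ y1 := by
    rintro rfl
    apply hxy
    rw [Prod.mk.injEq]
    exact ⟨rfl, by linear_combination h1 - h2⟩
  have hx' : ((x1 : ℕ) : ZMod q) - ((y1 : ℕ) : ZMod q) ≠ 0 :=
    sub_ne_zero.2 fun h => hx (zcast_inj hqr h)
  have hz : ((z1 : ℕ) : ZMod q) = ((w1 : ℕ) : ZMod q) := by
    apply mul_left_cancel₀ hx'
    linear_combination h3 - h4 - h1 + h2
  have hz1 := zcast_inj hqr hz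
  subst hz1
  rw [Prod.mk.injEq]
  exact ⟨rfl, by linear_combination h1 - h3⟩

theorem construction (r q : ℕ) (hq : q.Prime) (hq3 : 3 ≤ q) (hqr : r ≤ q) :
    ∃ (N : ℕ) (GE : Finset (Finset (Fin N))),
    IsUniform 3 GE ∧ (∀ H ∈ bergeCycles 3 2 ∪ bergeCycles 3 3 ∪ bergeCycles 3 4,
      ¬ HypContains H.2 GE) ∧ IsRKHyper GE 3 r q := by
  classical
  haveI : Fact q.Prime := ⟨hq⟩
  let E : Fin r × ZMod q ≃ Fin (r * q) := Fintype.equivFinOfCardEq (by simp [ZMod.card])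
  let GE : Finset (Finset (Fin (r * q))) := Finset.univ.filter fun e =>
    e.card = 3 ∧ ∀ x ∈ e, ∀ y ∈ e, x ≠ y → PAdj (E.symm x) (E.symm y)
  have hGE : ∀ e, e ∈ GE ↔ (e.card = 3 ∧ ∀ x ∈ e, ∀ y ∈ e, x ≠ y → PAdj (E.symm x) (E.symm y)) := by
    intro e; simp [GE]
  have hC4 : ∀ x y z w : Fin (r * q), x ≠ y → PAdj (E.symm x) (E.symm z) →
      PAdj (E.symm y) (E.symm z) → PAdj (E.symm x) (E.symm w) → PAdj (E.symm y) (E.symm w) →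
      z = w := by
    intro x y z w hxy h1 h2 h3 h4
    exact E.symm.injective (PAdj_C4 hqr (fun h => hxy (E.symm.injective h)) h1 h2 h3 h4)
  have hmem : ∀ e ∈ GE, ∀ x ∈ e, ∀ y ∈ e, x ≠ y → ∀ z, PAdj (E.symm x) (E.symm z) →
      PAdj (E.symm y) (E.symm z) → z ∈ e := by
    intro e he x hx y hy hxy z hxz hyz
    rw [hGE] at he
    obtain ⟨w, hw, hwx, hwy⟩ : ∃ w ∈ e, w ≠ x ∧ w ≠ y := by
      by_contra! hcon
      have : e ⊆ {x, y} := by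
        intro w hw
        by_cases h : w = x
        · simp [h]
        · simp [hcon w hw h]
      have := Finset.card_le_card this
      rw [Finset.card_pair hxy] at this
      omega
    rw [hC4 x y z w hxy hxz hyz (he.2 x hx w hw hwx.symm) (he.2 y hy w hw hwy.symm)]
    exact hw
  have hlin : ∀ e ∈ GE, ∀ f ∈ GE, ∀ x y, x ≠ y → x ∈ e → y ∈ e → x ∈ f → y ∈ f → e = f := by
    intro e he f hf x y hxy hxe hye hxf hyf
    have hsub : e ⊆ f := by
      intro z hz
      by_cases h1 : z = x
      · rwa [h1]
      by_cases h2 : z = y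
      · rwa [h2]
      have he' := ((hGE e).1 he).2
      exact hmem f hf x hxf y hyf hxy z (he' x hxe z hz (Ne.symm h1)) (he' y hye z hz (Ne.symm h2))
    apply Finset.eq_of_subset_of_card_le hsub
    rw [((hGE e).1 he).1, ((hGE f).1 hf).1]
  have hadj : ∀ e ∈ GE, ∀ x ∈ e, ∀ y ∈ e, x ≠ y → PAdj (E.symm x) (E.symm y) :=
    fun e he => ((hGE e).1 he).2
  refine ⟨r * q, GE, fun e he => ((hGE e).1 he).1, ?_, ?_⟩
  · intro H hH hcon
    rcases hH with (hH | hH) | hH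
    · obtain ⟨v, e, hv, he, heG, hve⟩ := hasCyc_of_contains hH hcon
      have h0 := hve 0
      have h1 := hve 1
      have hne : v 0 ≠ v 1 := hv.ne (by decide)
      rw [show (0 + 1 : ZMod 2) = 1 by decide] at h0
      rw [show (1 + 1 : ZMod 2) = 0 by decide] at h1
      exact he.ne (show (0 : ZMod 2) ≠ 1 by decide)
        (hlin _ (heG 0) _ (heG 1) _ _ hne h0.1 h0.2 h1.2 h1.1)
    · obtain ⟨v, e, hv, he, heG, hve⟩ := hasCyc_of_contains hH hcon
      have h0 := hve 0
      have h1 := hve 1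
      have h2 := hve 2
      have hne : v 0 ≠ v 1 := hv.ne (by decide)
      have hne1 : v 1 ≠ v 2 := hv.ne (by decide)
      have hne2 : v 2 ≠ v 0 := hv.ne (by decide)
      rw [show (0 + 1 : ZMod 3) = 1 by decide] at h0
      rw [show (1 + 1 : ZMod 3) = 2 by decide] at h1
      rw [show (2 + 1 : ZMod 3) = 0 by decide] at h2
      have hv2 : v 2 ∈ e 0 := hmem _ (heG 0) _ h0.1 _ h0.2 hne _
        (hadj _ (heG 2) _ h2.2 _ h2.1 hne2.symm) (hadj _ (heG 1) _ h1.1 _ h1.2 hne1)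
      exact he.ne (show (0 : ZMod 3) ≠ 1 by decide)
        (hlin _ (heG 0) _ (heG 1) _ _ hne1 h0.2 hv2 h1.1 h1.2)
    · obtain ⟨v, e, hv, he, heG, hve⟩ := hasCyc_of_contains hH hcon
      have h0 := hve 0
      have h1 := hve 1
      have h2 := hve 2
      have h3 := hve 3
      rw [show (0 + 1 : ZMod 4) = 1 by decide] at h0
      rw [show (1 + 1 : ZMod 4) = 2 by decide] at h1
      rw [show (2 + 1 : ZMod 4) = 3 by decide] at h2
      rw [show (3 + 1 : ZMod 4) = 0 by decide] at h3
      refine hv.ne (show (1 : ZMod 4) ≠ 3 by decide) (hC4 (v 0) (v 2) _ _ (hv.ne (by decide))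
        (hadj _ (heG 0) _ h0.1 _ h0.2 (hv.ne (by decide)))
        (hadj _ (heG 1) _ h1.2 _ h1.1 (hv.ne (by decide)))
        (hadj _ (heG 3) _ h3.2 _ h3.1 (hv.ne (by decide)))
        (hadj _ (heG 2) _ h2.1 _ h2.2 (hv.ne (by decide))))
  · refine ⟨fun i => Finset.univ.image fun a : ZMod q => E (i, a), ?_, ?_, ?_⟩
    · intro v
      refine ⟨(E.symm v).1, ?_, ?_⟩
      · simp only [Finset.mem_image, Finset.mem_univ, true_and]
        exact ⟨(E.symm v).2, by simp⟩
      · intro j hj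
        simp only [Finset.mem_image, Finset.mem_univ, true_and] at hj
        obtain ⟨a, rfl⟩ := hj
        simp
    · intro i
      refine Finset.card_image_le.trans ?_
      simp [ZMod.card]
    · intro S hS
      obtain ⟨i, j, k, hij, hik, hjk, rfl⟩ := Finset.card_eq_three.1 hS
      have h2 : (2 : ZMod q) ≠ 0 := by
        intro h
        have h' : ((2 : ℕ) : ZMod q) = 0 := by exact_mod_cast h
        rw [ZMod.natCast_eq_zero_iff] at h'
        have := Nat.le_of_dvd (by norm_num) h'
        omega
      set a : ZMod q := ((i : ℕ) : ZMod q) with ha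
      set b : ZMod q := ((j : ℕ) : ZMod q) with hb
      set c : ZMod q := ((k : ℕ) : ZMod q) with hc
      set x := E (i, (a * b + a * c - b * c) / 2) with hx
      set y := E (j, (a * b + b * c - a * c) / 2) with hy
      set z := E (k, (a * c + b * c - a * b) / 2) with hz
      have hxy : x ≠ y := by rw [hx, hy]; simp [hij]
      have hxz : x ≠ z := by rw [hx, hz]; simp [hik]
      have hyz : y ≠ z := by rw [hy, hz]; simp [hjk]
      have axy : PAdj (E.symm x) (E.symm y) := by
        refine ⟨by simpa [hx, hy] using hij, ?_⟩
        simp only [hx, hy, Equiv.symm_apply_apply]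
        field_simp
        ring
      have axz : PAdj (E.symm x) (E.symm z) := by
        refine ⟨by simpa [hx, hz] using hik, ?_⟩
        simp only [hx, hz, Equiv.symm_apply_apply]
        field_simp
        ring
      have ayz : PAdj (E.symm y) (E.symm z) := by
        refine ⟨by simpa [hy, hz] using hjk, ?_⟩
        simp only [hy, hz, Equiv.symm_apply_apply]
        field_simp
        ring
      refine ⟨{x, y, z}, ?_, ?_⟩
      · rw [hGE]
        refine ⟨Finset.card_eq_three.2 ⟨x, y, z, hxy, hxz, hyz, rfl⟩, ?_⟩
        intro u hu w hw huw
        simp only [Finset.mem_insert, Finset.mem_singleton] at hu hw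
        rcases hu with rfl | rfl | rfl <;> rcases hw with rfl | rfl | rfl <;>
          first
          | exact absurd rfl huw
          | assumption
          | exact PAdj.symm (by assumption)
      · intro s hs
        have hP : ∀ (t : Fin r) (α : ZMod q), E (t, α) ∈ (Finset.univ.image fun a : ZMod q => E (s, a))
            ↔ s = t := by
          intro t α
          simp only [Finset.mem_image, Finset.mem_univ, true_and, EmbeddingLike.apply_eq_iff_eq,
            Prod.mk.injEq]
          constructor
          · rintro ⟨_, h, _⟩; exact h
          · intro h; exact ⟨α, h, rfl⟩
        have hPx := hP i ((a * b + a * c - b * c) / 2)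
        have hPy := hP j ((a * b + b * c - a * c) / 2)
        have hPz := hP k ((a * c + b * c - a * b) / 2)
        rw [← hx] at hPx
        rw [← hy] at hPy
        rw [← hz] at hPz
        rw [Finset.card_eq_one]
        simp only [Finset.mem_insert, Finset.mem_singleton] at hs
        rcases hs with h | h | h
        · refine ⟨x, ?_⟩
          ext w
          simp only [Finset.mem_inter, Finset.mem_insert, Finset.mem_singleton]
          constructor
          · rintro ⟨rfl | rfl | rfl, hw⟩
            · rfl
            · exact absurd (h.symm.trans (hPy.1 hw)) hij
            · exact absurd (h.symm.trans (hPz.1 hw)) hik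
          · rintro rfl
            exact ⟨Or.inl rfl, hPx.2 h⟩
        · refine ⟨y, ?_⟩
          ext w
          simp only [Finset.mem_inter, Finset.mem_insert, Finset.mem_singleton]
          constructor
          · rintro ⟨rfl | rfl | rfl, hw⟩
            · exact absurd (h.symm.trans (hPx.1 hw)) hij.symm
            · rfl
            · exact absurd (h.symm.trans (hPz.1 hw)) hjk
          · rintro rfl
            exact ⟨Or.inr (Or.inl rfl), hPy.2 h⟩
        · refine ⟨z, ?_⟩
          ext w
          simp only [Finset.mem_inter, Finset.mem_insert, Finset.mem_singleton]
          constructor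
          · rintro ⟨rfl | rfl | rfl, hw⟩
            · exact absurd (h.symm.trans (hPx.1 hw)) hik.symm
            · exact absurd (h.symm.trans (hPy.1 hw)) hjk.symm
            · rfl
          · rintro rfl
            exact ⟨Or.inr (Or.inr rfl), hPz.2 h⟩

end upper


section lower

lemma no_cyc2 {N : ℕ} {GE : Finset (Finset (Fin N))} (h : ¬ HasCyc 2 GE)
    {e f : Finset (Fin N)} (he : e ∈ GE) (hf : f ∈ GE) {x y : Fin N} (hxy : x ≠ y)
    (hxe : x ∈ e) (hye : y ∈ e) (hxf : x ∈ f) (hyf : y ∈ f) : e = f := by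
  by_contra hne
  apply h
  refine ⟨![x, y], ![e, f], ?_, ?_, ?_, ?_⟩
  · intro i j; fin_cases i <;> fin_cases j <;> simp [hxy, hxy.symm] <;> rfl
  · intro i j; fin_cases i <;> fin_cases j <;> simp [hne, Ne.symm hne] <;> rfl
  · intro i; fin_cases i <;> simp [he, hf]
  · intro i
    fin_cases i
    · exact ⟨hxe, hye⟩
    · exact ⟨hyf, hxf⟩

lemma no_cyc3 {N : ℕ} {GE : Finset (Finset (Fin N))} (h : ¬ HasCyc 3 GE)
    {e f g : Finset (Fin N)} (he : e ∈ GE) (hf : f ∈ GE) (hg : g ∈ GE)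
    {x y z : Fin N} (hxy : x ≠ y) (hyz : y ≠ z) (hxz : x ≠ z)
    (hef : e ≠ f) (hfg : f ≠ g) (heg : e ≠ g)
    (h1 : x ∈ e) (h2 : y ∈ e) (h3 : y ∈ f) (h4 : z ∈ f) (h5 : z ∈ g) (h6 : x ∈ g) : False := by
  apply h
  refine ⟨![x, y, z], ![e, f, g], ?_, ?_, ?_, ?_⟩
  · intro i j; fin_cases i <;> fin_cases j <;> simp [hxy, hxy.symm, hyz, hyz.symm, hxz, hxz.symm] <;> rfl
  · intro i j; fin_cases i <;> fin_cases j <;> simp [hef, hef.symm, hfg, hfg.symm, heg, heg.symm] <;> rfl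
  · intro i; fin_cases i <;> simp [he, hf, hg]
  · intro i
    fin_cases i
    · exact ⟨h1, h2⟩
    · exact ⟨h3, h4⟩
    · exact ⟨h5, h6⟩

lemma no_cyc4 {N : ℕ} {GE : Finset (Finset (Fin N))} (h : ¬ HasCyc 4 GE)
    {e f g k : Finset (Fin N)} (he : e ∈ GE) (hf : f ∈ GE) (hg : g ∈ GE) (hk : k ∈ GE)
    {x y z w : Fin N} (hxy : x ≠ y) (hxz : x ≠ z) (hxw : x ≠ w) (hyz : y ≠ z) (hyw : y ≠ w)
    (hzw : z ≠ w)
    (hef : e ≠ f) (heg : e ≠ g) (hek : e ≠ k) (hfg : f ≠ g) (hfk : f ≠ k) (hgk : g ≠ k)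
    (h1 : x ∈ e) (h2 : y ∈ e) (h3 : y ∈ f) (h4 : z ∈ f) (h5 : z ∈ g) (h6 : w ∈ g)
    (h7 : w ∈ k) (h8 : x ∈ k) : False := by
  apply h
  refine ⟨![x, y, z, w], ![e, f, g, k], ?_, ?_, ?_, ?_⟩
  · intro i j; fin_cases i <;> fin_cases j <;>
      simp [hxy, hxy.symm, hyz, hyz.symm, hxz, hxz.symm, hxw, hxw.symm, hyw, hyw.symm, hzw, hzw.symm] <;> rfl
  · intro i j; fin_cases i <;> fin_cases j <;>
      simp [hef, hef.symm, hfg, hfg.symm, heg, heg.symm, hek, hek.symm, hfk, hfk.symm, hgk, hgk.symm] <;> rfl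
  · intro i; fin_cases i <;> simp [he, hf, hg, hk]
  · intro i
    fin_cases i
    · exact ⟨h1, h2⟩
    · exact ⟨h3, h4⟩
    · exact ⟨h5, h6⟩
    · exact ⟨h7, h8⟩

lemma card_four {N : ℕ} {e : Finset (Fin N)} (hc : e.card = 3) {x y z w : Fin N}
    (hxy : x ≠ y) (hxz : x ≠ z) (hxw : x ≠ w) (hyz : y ≠ z) (hyw : y ≠ w)
    (hzw : z ≠ w) (h1 : x ∈ e) (h2 : y ∈ e) (h3 : z ∈ e) (h4 : w ∈ e) : False := by
  classical
  have hs : ({x, y, z, w} : Finset (Fin N)) ⊆ e := by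
    intro u hu
    simp only [Finset.mem_insert, Finset.mem_singleton] at hu
    rcases hu with rfl | rfl | rfl | rfl <;> assumption
  have := Finset.card_le_card hs
  rw [Finset.card_insert_of_notMem (by simp [hxy, hxz, hxw]),
    Finset.card_insert_of_notMem (by simp [hyz, hyw]), Finset.card_pair hzw] at this
  omega

/-- If two consecutive edges of a closed 4-walk coincide we get a contradiction. -/
lemma shadow_aux {N : ℕ} {GE : Finset (Finset (Fin N))} (hu : IsUniform 3 GE)
    (c2 : ¬ HasCyc 2 GE) (c3 : ¬ HasCyc 3 GE)
    {e g k : Finset (Fin N)} (he : e ∈ GE) (hg : g ∈ GE) (hk : k ∈ GE)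
    {x y z w : Fin N} (hxy : x ≠ y) (hxz : x ≠ z) (hxw : x ≠ w) (hyz : y ≠ z) (hyw : y ≠ w)
    (hzw : z ≠ w)
    (h1 : x ∈ e) (h2 : y ∈ e) (h4 : z ∈ e) (h5 : z ∈ g) (h6 : w ∈ g)
    (h7 : w ∈ k) (h8 : x ∈ k) : False := by
  have hwe : w ∉ e := fun h => card_four (hu e he) hxy hxz hxw hyz hyw hzw h1 h2 h4 h
  have heg : e ≠ g := by rintro rfl; exact hwe h6
  have hek : e ≠ k := by rintro rfl; exact hwe h7
  have hgk : g ≠ k := by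
    rintro rfl
    exact heg (no_cyc2 c2 he hg hxz h1 h4 h8 h5)
  exact no_cyc3 c3 he hg hk hxz hzw hxw heg hgk hek h1 h4 h5 h6 h7 h8

lemma shadow_C4 {N : ℕ} {GE : Finset (Finset (Fin N))} (hu : IsUniform 3 GE)
    (c2 : ¬ HasCyc 2 GE) (c3 : ¬ HasCyc 3 GE) (c4 : ¬ HasCyc 4 GE)
    {e f g k : Finset (Fin N)} (he : e ∈ GE) (hf : f ∈ GE) (hg : g ∈ GE) (hk : k ∈ GE)
    {x y z w : Fin N} (hxy : x ≠ y) (hxz : x ≠ z) (hxw : x ≠ w) (hyz : y ≠ z) (hyw : y ≠ w)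
    (hzw : z ≠ w)
    (h1 : x ∈ e) (h2 : y ∈ e) (h3 : y ∈ f) (h4 : z ∈ f) (h5 : z ∈ g) (h6 : w ∈ g)
    (h7 : w ∈ k) (h8 : x ∈ k) : False := by
  by_cases hef : e = f
  · subst hef
    exact shadow_aux hu c2 c3 he hg hk hxy hxz hxw hyz hyw hzw h1 h2 h4 h5 h6 h7 h8
  by_cases hfg : f = g
  · subst hfg
    exact shadow_aux hu c2 c3 hf hk he hyz hyw hxy.symm hzw hxz.symm hxw.symm h3 h4 h6 h7 h8 h1 h2
  by_cases hgk : g = k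
  · subst hgk
    exact shadow_aux hu c2 c3 hg he hf hzw hxz.symm hyz.symm hxw.symm hyw.symm hxy h5 h6 h8 h1 h2 h3 h4
  by_cases hek : e = k
  · subst hek
    exact shadow_aux hu c2 c3 he hf hg hxw.symm hyw.symm hzw.symm hxy hxz hyz h7 h1 h2 h3 h4 h5 h6
  by_cases heg : e = g
  · subst heg
    exact card_four (hu e he) hxy hxz hxw hyz hyw hzw h1 h2 h5 h6
  by_cases hfk : f = k
  · subst hfk
    exact card_four (hu f hf) hxy hxz hxw hyz hyw hzw h8 h3 h4 h7
  exact no_cyc4 c4 he hf hg hk hxy hxz hxw hyz hyw hzw hef heg hek hfg hfk hgk h1 h2 h3 h4 h5 h6 h7 h8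

lemma edge_bound {N : ℕ} {GE : Finset (Finset (Fin N))} (hu : IsUniform 3 GE)
    (c2 : ¬ HasCyc 2 GE) (c3 : ¬ HasCyc 3 GE) (c4 : ¬ HasCyc 4 GE) :
    (6 * GE.card) ^ 2 ≤ N * (N ^ 2 + 6 * GE.card) := by
  classical
  set Q : Finset (Fin N × Fin N) := GE.biUnion fun e => e.offDiag with hQ
  have hQc : Q.card = 6 * GE.card := by
    rw [hQ, Finset.card_biUnion]
    · rw [Finset.sum_congr rfl (g := fun _ => 6), Finset.sum_const, smul_eq_mul, mul_comm]
      intro e he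
      rw [Finset.offDiag_card, hu e he]
    · intro e he f hf hef
      rw [Function.onFun, Finset.disjoint_left]
      rintro ⟨x, y⟩ h1 h2
      rw [Finset.mem_offDiag] at h1 h2
      exact hef (no_cyc2 c2 he hf h1.2.2 h1.1 h1.2.1 h2.1 h2.2.1)
  let B : Fin N → Finset (Fin N) := fun v => Finset.univ.filter fun u => (v, u) ∈ Q
  have hB : ∀ v u, u ∈ B v ↔ ∃ e ∈ GE, v ∈ e ∧ u ∈ e ∧ v ≠ u := by
    intro v u
    simp [B, hQ, Finset.mem_offDiag]
  have hsum : ∑ v, (B v).card = 6 * GE.card := by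
    rw [← hQc, Finset.card_eq_sum_card_fiberwise (f := Prod.fst) (t := Finset.univ) (by simp)]
    apply Finset.sum_congr rfl
    intro v _
    apply Finset.card_bij (fun u _ => (v, u))
    · intro u hu'
      simpa [B] using hu'
    · intro a _ b _ h
      simpa using h
    · rintro ⟨a, b⟩ h
      rw [Finset.mem_filter] at h
      obtain ⟨h, rfl⟩ := h
      exact ⟨b, by simpa [B] using h, rfl⟩
  have hoff : ∑ v, (B v).offDiag.card ≤ N ^ 2 := by
    rw [← Finset.card_biUnion]
    · refine (Finset.card_le_univ _).trans ?_
      simp [sq]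
    · intro v _ v' _ hvv
      rw [Function.onFun, Finset.disjoint_left]
      rintro ⟨x, y⟩ h1 h2
      rw [Finset.mem_offDiag] at h1 h2
      simp only at h1 h2
      obtain ⟨a1, a2, hxy⟩ := h1
      obtain ⟨b1, b2, -⟩ := h2
      rw [hB] at a1 a2 b1 b2
      obtain ⟨e, he, e1, e2, e3⟩ := a1
      obtain ⟨f, hf, f1, f2, f3⟩ := a2
      obtain ⟨g, hg, g1, g2, g3⟩ := b1
      obtain ⟨k, hk, k1, k2, k3⟩ := b2
      exact shadow_C4 hu c2 c3 c4 he hf hk hg e3.symm hxy g3.symm f3 hvv k3.symm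
        e2 e1 f1 f2 k2 k1 g1 g2
  have hsq : ∑ v, (B v).card ^ 2 ≤ N ^ 2 + 6 * GE.card := by
    rw [← hsum]
    refine le_trans ?_ (Nat.add_le_add_right hoff _)
    rw [← Finset.sum_add_distrib]
    apply Finset.sum_le_sum
    intro v _
    rw [Finset.offDiag_card, sq]
    omega
  have hcs := sq_sum_le_card_mul_sum_sq (s := (Finset.univ : Finset (Fin N))) (f := fun v => (B v).card)
  rw [hsum, Finset.card_univ, Fintype.card_fin] at hcs
  exact hcs.trans (Nat.mul_le_mul_left _ hsq)

lemma parts_bound {N r k : ℕ} {GE : Finset (Finset (Fin N))} (hu : IsUniform 3 GE)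
    (h : IsRKHyper GE 3 r k) : N ≤ r * k ∧ r.choose 3 ≤ GE.card := by
  classical
  obtain ⟨P, hP, hk, hS⟩ := h
  constructor
  · have : (Finset.univ : Finset (Fin N)) = Finset.univ.biUnion P := by
      ext v
      obtain ⟨i, hi, -⟩ := hP v
      simpa using ⟨i, hi⟩
    calc N = (Finset.univ : Finset (Fin N)).card := by simp
      _ ≤ ∑ i, (P i).card := by rw [this]; exact Finset.card_biUnion_le
      _ ≤ ∑ i : Fin r, k := Finset.sum_le_sum fun i _ => hk i
      _ = r * k := by simp
  · choose part hpart huniq using hP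
    have hsub : Finset.powersetCard 3 (Finset.univ : Finset (Fin r)) ⊆
        GE.image fun e => e.image part := by
      intro S hS'
      rw [Finset.mem_powersetCard] at hS'
      obtain ⟨e, he, h1⟩ := hS S hS'.2
      refine Finset.mem_image.2 ⟨e, he, ?_⟩
      symm
      apply Finset.eq_of_subset_of_card_le
      · intro i hi
        obtain ⟨v, hv⟩ := Finset.card_pos.1 (by rw [h1 i hi]; norm_num : 0 < (e ∩ P i).card)
        rw [Finset.mem_inter] at hv
        exact Finset.mem_image.2 ⟨v, hv.1, (huniq v i hv.2).symm⟩
      · rw [hS'.2, ← hu e he]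
        exact Finset.card_image_le
    have := (Finset.card_le_card hsub).trans Finset.card_image_le
    simpa using this

lemma lower_real (ε : ℝ) (hε : 0 < ε) (r k N m : ℕ) (hr : 7 / ε < r) (hr5 : 5 ≤ r)
    (hN : N ≤ r * k) (hm : r.choose 3 ≤ m) (hb : (6 * m) ^ 2 ≤ N * (N ^ 2 + 6 * m)) :
    (1 - ε) * (r : ℝ) ≤ k := by
  by_contra! hcon
  have hch : r * (r - 1) * (r - 2) ≤ 6 * m := by
    have h := Nat.descFactorial_eq_factorial_mul_choose r 3
    have h6 : Nat.factorial 3 = 6 := rfl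
    rw [h6] at h
    simp [Nat.descFactorial] at h
    nlinarith
  have hchR : (r:ℝ) * (r - 1) * (r - 2) ≤ 6 * m := by
    have : ((r * (r - 1) * (r - 2) : ℕ) : ℝ) ≤ ((6 * m : ℕ) : ℝ) := by exact_mod_cast hch
    push_cast [Nat.cast_sub (show 1 ≤ r by omega), Nat.cast_sub (show 2 ≤ r by omega)] at this
    exact this
  have hbR : (6 * (m:ℝ)) ^ 2 ≤ N * ((N:ℝ) ^ 2 + 6 * m) := by exact_mod_cast hb
  have hNR : (N:ℝ) ≤ r * k := by exact_mod_cast hN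
  have hr5R : (5:ℝ) ≤ r := by exact_mod_cast hr5
  have hrε : 7 < ε * r := by rw [div_lt_iff₀ hε] at hr; linarith
  set M : ℝ := 6 * (m:ℝ) with hM
  set R : ℝ := (r:ℝ) with hR
  set n : ℝ := (N:ℝ) with hn
  have hn0 : 0 ≤ n := Nat.cast_nonneg _
  have hk0 : (0:ℝ) ≤ k := Nat.cast_nonneg _
  have hε1 : 0 < 1 - ε := by
    by_contra! h
    nlinarith
  have hnle : n ≤ (1 - ε) * R ^ 2 := by nlinarith
  have hnR : n ≤ R ^ 2 := by nlinarith [sq_nonneg R]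
  have hMge : R ^ 3 - 3 * R ^ 2 ≤ M := by nlinarith
  have hMn : R ^ 3 - 4 * R ^ 2 ≤ M - n := by linarith
  have hpos1 : 0 ≤ R ^ 3 - 4 * R ^ 2 := by nlinarith [sq_nonneg R]
  have hprod : (R ^ 3 - 3 * R ^ 2) * (R ^ 3 - 4 * R ^ 2) ≤ M * (M - n) := by
    apply mul_le_mul hMge hMn hpos1
    nlinarith [sq_nonneg R]
  have hMM : M * (M - n) ≤ n * n ^ 2 := by nlinarith
  have hn3 : n * n ^ 2 ≤ (1 - ε) * R ^ 2 * (R ^ 2) ^ 2 := by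
    apply mul_le_mul hnle (by gcongr) (by positivity) (by positivity)
  have hfin : R ^ 5 * (ε * R - 7) + 12 * R ^ 4 ≤ 0 := by nlinarith
  have : 0 < R ^ 5 * (ε * R - 7) := by
    apply mul_pos (by positivity); linarith
  have : 0 < R ^ 4 := by positivity
  linarith

end lower

theorem stmt8 (ε : ℝ) (hε : 0 < ε) :
    ∃ r₀ : ℕ, ∀ r : ℕ, r₀ ≤ r →
      (1 - ε) * (r : ℝ)
          ≤ (fHyper 3 r (bergeCycles 3 2 ∪ bergeCycles 3 3 ∪ bergeCycles 3 4) : ℝ) ∧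
      (fHyper 3 r (bergeCycles 3 2 ∪ bergeCycles 3 3 ∪ bergeCycles 3 4) : ℝ)
          ≤ (1 + ε) * (r : ℝ) := by
  obtain ⟨X, hX⟩ := PNTaux.exists_prime_short ε hε
  refine ⟨max 5 (max (⌈X⌉₊) (⌊7 / ε⌋₊ + 1)), fun r hr => ?_⟩
  have hr5 : 5 ≤ r := le_trans (le_max_left _ _) hr
  have hrX : ⌈X⌉₊ ≤ r := le_trans ((le_max_left _ _).trans (le_max_right _ _)) hr
  have hrε : ⌊7 / ε⌋₊ + 1 ≤ r := le_trans ((le_max_right _ _).trans (le_max_right _ _)) hr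
  have hr7 : 7 / ε < r := (Nat.floor_lt (by positivity)).1 hrε
  obtain ⟨p, hp, hrp, hpr⟩ := hX r (Nat.ceil_le.1 hrX)
  have hrp' : r ≤ p := by exact_mod_cast hrp
  have hmem := construction r p hp (by omega) hrp'
  constructor
  · have hin := Nat.sInf_mem (s := {k | ∃ (N : ℕ) (GE : Finset (Finset (Fin N))),
      IsUniform 3 GE ∧ (∀ H ∈ bergeCycles 3 2 ∪ bergeCycles 3 3 ∪ bergeCycles 3 4,
        ¬ HypContains H.2 GE) ∧ IsRKHyper GE 3 r k}) ⟨p, hmem⟩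
    obtain ⟨N, GE, hu, hfree, hRK⟩ := hin
    have c2 : ¬ HasCyc 2 GE := fun h => by
      obtain ⟨H, hH, hc⟩ := contains_of_hasCyc hu h
      exact hfree H (Or.inl (Or.inl hH)) hc
    have c3 : ¬ HasCyc 3 GE := fun h => by
      obtain ⟨H, hH, hc⟩ := contains_of_hasCyc hu h
      exact hfree H (Or.inl (Or.inr hH)) hc
    have c4 : ¬ HasCyc 4 GE := fun h => by
      obtain ⟨H, hH, hc⟩ := contains_of_hasCyc hu h
      exact hfree H (Or.inr hH) hc
    obtain ⟨hN, hm⟩ := parts_bound hu hRK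
    exact lower_real ε hε r _ N GE.card hr7 hr5 hN hm (edge_bound hu c2 c3 c4)
  · refine le_trans ?_ hpr
    exact_mod_cast Nat.sInf_le hmem
end
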